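/- arXiv:1612.08100 — 2 statements merged into one kernel-verified Lean document; each statement's English description precedes it below -/
import Mathlib

section
/- There exists a universal constant c₃ > 0 such that if, for each N, U_N is an N × N random unitary matrix distributed according to Haar measure on U(N) (all defined on a common probability space), then with probability 1, d_K(μ_N, ν) ≤ c₃ · log(N)/N for all sufficiently large N. -/
/-!
Let `detPhase A` be the sum of `arg (1 - λ)` over the eigenvalues `λ` of `A`, a branch of
`Im log det (1 - A)`. For unitary `U`, passing from `U` to `e^{-iθ} U` changes the phase by
`π 𝒩_θ - N θ / 2`, because an eigenvalue angle crossing `0` makes `arg (1 - λ)` jump by `π`.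
So it suffices to bound the phase at the `N` grid angles `2πk/N` and to interpolate by monotonicity
of `𝒩`.

Multiplying `U` by an independent Haar matrix `diag (h, 1)` and taking a Schur complement, the phase
splits exactly into `arg (1 - U_NN)` and the phase of a Haar matrix of size `N - 1`. Hence
`E exp (t detPhase U) ≤ ∏ n ≤ N, E exp (t arg (1 - U_nn))`, where `U_nn` is a corner entry of an
`n × n` Haar matrix. Since `E Im U_nn = 0` and `E |U_nn|² = 1 / n`, each factor is at most
`exp (C / n)` and the product is at most `exp (C H_N)`, a power of `N`. Markov's inequality, a union
bound over the grid and Borel–Cantelli conclude.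
-/

open MeasureTheory Real Filter

noncomputable section

/-- The Borel σ-algebra on the unitary group `U(N)`. -/
instance (N : ℕ) : MeasurableSpace (Matrix.unitaryGroup (Fin N) ℂ) := borel _

instance (N : ℕ) : BorelSpace (Matrix.unitaryGroup (Fin N) ℂ) := ⟨rfl⟩

/-- The eigenvalue angles (in `[0, 2π)`, with multiplicity) of a unitary matrix `U`:
the arguments of the roots of the characteristic polynomial, shifted to lie in `[0, 2π)`. -/
def eigenAngles (N : ℕ) (U : Matrix.unitaryGroup (Fin N) ℂ) : Multiset ℝ :=
  ((U : Matrix (Fin N) (Fin N) ℂ).charpoly.roots).map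
    (fun z => if 0 ≤ Complex.arg z then Complex.arg z else Complex.arg z + 2 * π)

open Classical in
/-- `𝒩_A`: the number of eigenvalue angles of `U` lying in the set `A`. -/
def countAngles (N : ℕ) (U : Matrix.unitaryGroup (Fin N) ℂ) (A : Set ℝ) : ℕ :=
  Multiset.card ((eigenAngles N U).filter (· ∈ A))

/-- `𝒩_θ`: the number of eigenvalue angles of `U` in `[0, θ]`. -/
def countFun (N : ℕ) (U : Matrix.unitaryGroup (Fin N) ℂ) (θ : ℝ) : ℕ :=
  countAngles N U (Set.Icc 0 θ)

/-- The Kolmogorov distance between the empirical spectral measure of `U` and the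
uniform measure on the circle: `sup_{0 ≤ θ < 2π} |𝒩_θ/N - θ/(2π)|`. -/
def dK (N : ℕ) (U : Matrix.unitaryGroup (Fin N) ℂ) : ℝ :=
  ⨆ θ : Set.Ico (0:ℝ) (2 * π), |(countFun N U θ : ℝ) / N - (θ : ℝ) / (2 * π)|

/-- `max_{1 ≤ k ≤ N} |𝒩_{2πk/N} - k|`. -/
def maxDev (N : ℕ) (U : Matrix.unitaryGroup (Fin N) ℂ) : ℝ :=
  ⨆ k : (Finset.Icc 1 N : Finset ℕ), |(countFun N U (2 * π * (k : ℕ) / N) : ℝ) - ((k : ℕ) : ℝ)|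

end

theorem eqOn_of_coe_angle_eq {X : Type*} [TopologicalSpace X] {s : Set X} {f g : X → ℝ}
    (hs : IsPreconnected s) (hf : ContinuousOn f s) (hg : ContinuousOn g s)
    (h : ∀ x ∈ s, (f x : Real.Angle) = g x) {x₀ : X} (hx₀ : x₀ ∈ s) (h₀ : f x₀ = g x₀) :
    Set.EqOn f g s :=
  (AddCircle.isCoveringMap_coe (2 * π)).eqOn_of_comp_eqOn hs hf hg h hx₀ h₀

section DetPhase

variable {ι : Type*} [Fintype ι] [DecidableEq ι]

theorem charpoly_smul_eq_scaleRoots {K : Type*} [Field K] [Infinite K] (z : K)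
    (A : Matrix ι ι K) : (z • A).charpoly = A.charpoly.scaleRoots z := by
  rcases eq_or_ne z 0 with rfl | hz
  · rw [zero_smul, Matrix.charpoly_zero, Polynomial.scaleRoots_zero,
      (Matrix.charpoly_monic A).leadingCoeff, one_smul, Matrix.charpoly_natDegree_eq_dim]
  · refine Polynomial.funext fun x => ?_
    obtain ⟨y, rfl⟩ : ∃ y, x = z * y := ⟨x / z, by field_simp⟩
    have hscale : Matrix.scalar ι (z * y) - z • A = z • (Matrix.scalar ι y - A) := by
      rw [smul_sub, Matrix.scalar_apply, Matrix.scalar_apply, ← Matrix.diagonal_smul]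
      rfl
    rw [Polynomial.scaleRoots_eval_mul, Matrix.eval_charpoly, Matrix.eval_charpoly, hscale,
      Matrix.det_smul, Matrix.charpoly_natDegree_eq_dim]

theorem roots_charpoly_smul {K : Type*} [Field K] [IsAlgClosed K] (z : K) (A : Matrix ι ι K) :
    (z • A).charpoly.roots = A.charpoly.roots.map (z * ·) := by
  have : Infinite K := IsAlgClosed.instInfinite
  rcases eq_or_ne z 0 with rfl | hz
  · have hcard : Multiset.card A.charpoly.roots = Fintype.card ι := by
      rw [← (IsAlgClosed.splits A.charpoly).natDegree_eq_card_roots,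
        Matrix.charpoly_natDegree_eq_dim]
    simp [Matrix.charpoly_zero, Multiset.map_const', hcard, Multiset.nsmul_singleton]
  · rw [charpoly_smul_eq_scaleRoots, Polynomial.roots_scaleRoots _ hz.isUnit]

theorem det_one_sub_eq_prod_roots {K : Type*} [Field K] [IsAlgClosed K] (A : Matrix ι ι K) :
    (1 - A).det = (A.charpoly.roots.map (1 - ·)).prod := by
  rw [← (IsAlgClosed.splits A.charpoly).eval_eq_prod_roots_of_monic (Matrix.charpoly_monic A),
    Matrix.eval_charpoly, map_one]

/-- The branch of `Im log det (1 - A)` obtained by summing `arg (1 - λ)` over the eigenvalues `λ`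
of `A` with multiplicity. -/
noncomputable def detPhase (A : Matrix ι ι ℂ) : ℝ :=
  (A.charpoly.roots.map fun l => (1 - l).arg).sum

theorem detPhase_smul (z : ℂ) (A : Matrix ι ι ℂ) :
    detPhase (z • A) = (A.charpoly.roots.map fun l => (1 - z * l).arg).sum := by
  rw [detPhase, roots_charpoly_smul, Multiset.map_map]
  rfl

theorem detPhase_zero : detPhase (0 : Matrix ι ι ℂ) = 0 := by
  simpa using detPhase_smul 0 (0 : Matrix ι ι ℂ)

theorem detPhase_reindex {κ : Type*} [Fintype κ] [DecidableEq κ] (e : ι ≃ κ)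
    (A : Matrix ι ι ℂ) : detPhase (Matrix.reindex e e A) = detPhase A := by
  rw [detPhase, Matrix.charpoly_reindex, detPhase]

theorem detPhase_mul_comm (A B : Matrix ι ι ℂ) : detPhase (A * B) = detPhase (B * A) := by
  rw [detPhase, Matrix.charpoly_mul_comm, detPhase]

theorem detPhase_of_unique [Unique ι] (A : Matrix ι ι ℂ) :
    detPhase A = (1 - A default default).arg := by
  have hA : A.charpoly = Polynomial.X - Polynomial.C (A default default) := by
    simp [Matrix.charpoly, Matrix.det_unique, Matrix.charmatrix_apply_eq]
  rw [detPhase, hA, Polynomial.roots_X_sub_C, Multiset.map_singleton, Multiset.sum_singleton]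

theorem coe_sum_arg {m : Multiset ℂ} (hm : m.prod ≠ 0) :
    ((m.map Complex.arg).sum : Real.Angle) = m.prod.arg := by
  induction m using Multiset.induction with
  | empty => simp
  | cons a s ih =>
    rw [Multiset.prod_cons] at hm ⊢
    rw [Multiset.map_cons, Multiset.sum_cons, Real.Angle.coe_add,
      ih (right_ne_zero_of_mul hm),
      Complex.arg_mul_coe_angle (left_ne_zero_of_mul hm) (right_ne_zero_of_mul hm)]

theorem coe_detPhase {A : Matrix ι ι ℂ} (hA : (1 - A).det ≠ 0) :
    (detPhase A : Real.Angle) = (1 - A).det.arg := by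
  rw [det_one_sub_eq_prod_roots] at hA ⊢
  rw [← coe_sum_arg hA, Multiset.map_map]
  rfl

/-- The domain on which `detPhase` is a continuous branch of `Im log det (1 - A)`: matrices with
spectrum in the closed unit disc minus the point `1`. -/
def phaseDomain (ι : Type*) [Fintype ι] [DecidableEq ι] : Set (Matrix ι ι ℂ) :=
  {A | ∀ l ∈ A.charpoly.roots, ‖l‖ ≤ 1 ∧ l ≠ 1}

theorem one_sub_mul_mem_slitPlane {a : ℂ} (ha : ‖a‖ ≤ 1) (ha₁ : a ≠ 1) {t : ℝ}
    (ht : t ∈ Set.Icc (0 : ℝ) 1) : 1 - (t : ℂ) * a ∈ Complex.slitPlane := by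
  have hta : ‖(t : ℂ) * a‖ ≤ 1 := by
    rw [norm_mul, Complex.norm_real, Real.norm_of_nonneg ht.1]
    exact mul_le_one₀ ht.2 (norm_nonneg a) ha
  have hne : (t : ℂ) * a ≠ 1 := by
    intro h
    have hnorm : t * ‖a‖ = 1 := by
      simpa [abs_of_nonneg ht.1] using congrArg norm h
    have ht₁ : t = 1 := le_antisymm ht.2 (by nlinarith [ht.1, norm_nonneg a])
    exact ha₁ (by simpa [ht₁] using h)
  generalize (t : ℂ) * a = w at hta hne
  rw [Complex.mem_slitPlane_iff, or_iff_not_imp_right]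
  intro him
  have him' : w.im = 0 := by simpa using him
  have hre : w.re ≠ 1 := fun h => hne (Complex.ext h him')
  have := lt_of_le_of_ne ((Complex.re_le_norm w).trans hta) hre
  simpa using this

theorem det_one_sub_ne_zero {A : Matrix ι ι ℂ} (hA : A ∈ phaseDomain ι) : (1 - A).det ≠ 0 := by
  rw [det_one_sub_eq_prod_roots]
  refine Multiset.prod_ne_zero fun h => ?_
  obtain ⟨l, hl, hl₁⟩ := Multiset.mem_map.1 h
  exact (hA l hl).2 (sub_eq_zero.1 hl₁).symm

theorem mem_phaseDomain {A : Matrix ι ι ℂ} (hroots : ∀ l ∈ A.charpoly.roots, ‖l‖ ≤ 1)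
    (hdet : (1 - A).det ≠ 0) : A ∈ phaseDomain ι := by
  refine fun l hl => ⟨hroots l hl, ?_⟩
  rintro rfl
  rw [det_one_sub_eq_prod_roots] at hdet
  exact hdet (Multiset.prod_eq_zero (Multiset.mem_map.2 ⟨1, hl, sub_self 1⟩))

theorem smul_mem_phaseDomain {A : Matrix ι ι ℂ} (hA : A ∈ phaseDomain ι) {t : ℝ}
    (ht : t ∈ Set.Icc (0 : ℝ) 1) : (t : ℂ) • A ∈ phaseDomain ι := by
  intro l hl
  rw [roots_charpoly_smul] at hl
  obtain ⟨a, ha, rfl⟩ := Multiset.mem_map.1 hl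
  refine ⟨?_, fun h => ?_⟩
  · rw [norm_mul, Complex.norm_real, Real.norm_of_nonneg ht.1]
    exact mul_le_one₀ ht.2 (norm_nonneg a) (hA a ha).1
  · have := one_sub_mul_mem_slitPlane (hA a ha).1 (hA a ha).2 ht
    simp [h] at this

theorem continuousOn_detPhase_smul {A : Matrix ι ι ℂ} (hA : A ∈ phaseDomain ι) :
    ContinuousOn (fun t : ℝ => detPhase ((t : ℂ) • A)) (Set.Icc 0 1) := by
  simp_rw [detPhase_smul]
  refine continuousOn_multiset_sum A.charpoly.roots fun l hl => ?_
  exact Complex.continuousOn_arg.comp (by fun_prop) fun t ht =>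
    one_sub_mul_mem_slitPlane (hA l hl).1 (hA l hl).2 ht

/-- Both sides are continuous in `t` along `t • A`, `t • B` and agree modulo `2π`, hence they agree
because they do at `t = 0`. -/
theorem detPhase_eq_add_arg_det_div {A B : Matrix ι ι ℂ} (hA : A ∈ phaseDomain ι)
    (hB : B ∈ phaseDomain ι)
    (hAB : ∀ t ∈ Set.Icc (0 : ℝ) 1,
      (1 - (t : ℂ) • B).det / (1 - (t : ℂ) • A).det ∈ Complex.slitPlane) :
    detPhase B = detPhase A + ((1 - B).det / (1 - A).det).arg := by
  have hdet : ∀ {C : Matrix ι ι ℂ}, C ∈ phaseDomain ι → ∀ t ∈ Set.Icc (0 : ℝ) 1,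
      (1 - (t : ℂ) • C).det ≠ 0 := fun hC t ht => det_one_sub_ne_zero (smul_mem_phaseDomain hC ht)
  have hcont : ∀ C : Matrix ι ι ℂ, Continuous fun t : ℝ => (1 - (t : ℂ) • C).det :=
    fun C => Continuous.matrix_det (by fun_prop)
  have heq := eqOn_of_coe_angle_eq isPreconnected_Icc (continuousOn_detPhase_smul hB)
    ((continuousOn_detPhase_smul hA).add (Complex.continuousOn_arg.comp
      ((hcont B).continuousOn.div (hcont A).continuousOn (hdet hA)) hAB))
    (fun t ht => by
      simp only [Pi.add_apply, Function.comp_apply, Pi.div_apply]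
      rw [Real.Angle.coe_add, Complex.arg_div_coe_angle (hdet hB t ht) (hdet hA t ht),
        coe_detPhase (hdet hB t ht), coe_detPhase (hdet hA t ht), add_sub_cancel])
    (Set.left_mem_Icc.2 zero_le_one) (by simp [detPhase_zero])
  simpa using heq (Set.right_mem_Icc.2 zero_le_one)

theorem continuousOn_detPhase : ContinuousOn (detPhase (ι := ι)) (phaseDomain ι) := by
  intro A hA
  have hslit : ∀ᶠ B in nhds A, ∀ t ∈ Set.Icc (0 : ℝ) 1,
      (1 - (t : ℂ) • B).det / (1 - (t : ℂ) • A).det ∈ Complex.slitPlane := by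
    refine isCompact_Icc.eventually_forall_of_forall_eventually fun t ht => ?_
    have hne := det_one_sub_ne_zero (smul_mem_phaseDomain hA ht)
    have hcont : ContinuousAt (fun p : Matrix ι ι ℂ × ℝ =>
        (1 - (p.2 : ℂ) • p.1).det / (1 - (p.2 : ℂ) • A).det) (A, t) :=
      (Continuous.matrix_det (by fun_prop)).continuousAt.div
        (Continuous.matrix_det (by fun_prop)).continuousAt hne
    exact hcont.eventually_mem (Complex.isOpen_slitPlane.mem_nhds
      (by rw [div_self hne]; exact Complex.one_mem_slitPlane))
  have hlocal : ∀ᶠ B in nhdsWithin A (phaseDomain ι),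
      detPhase B = detPhase A + ((1 - B).det / (1 - A).det).arg := by
    filter_upwards [nhdsWithin_le_nhds hslit, self_mem_nhdsWithin] with B hB hBdom
    exact detPhase_eq_add_arg_det_div hA hBdom hB
  have hdet : ContinuousAt (fun B : Matrix ι ι ℂ => (1 - B).det / (1 - A).det) A :=
    (Continuous.matrix_det (by fun_prop)).continuousAt.div_const _
  have hone : (1 - A).det / (1 - A).det = 1 := div_self (det_one_sub_ne_zero hA)
  refine ContinuousWithinAt.congr_of_eventuallyEq (continuousAt_const.add
    (ContinuousAt.comp (g := Complex.arg) (Complex.continuousAt_arg ?_) hdet)).continuousWithinAt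
    hlocal ?_
  · rw [hone]; exact Complex.one_mem_slitPlane
  · simp [hone]

end DetPhase

section Contraction

open scoped Matrix.Norms.L2Operator

variable {ι κ : Type*} [Fintype ι] [Fintype κ]

theorem norm_sq_toLp_sumElim (a : κ → ℂ) (b : ι → ℂ) :
    ‖WithLp.toLp 2 (Sum.elim a b)‖ ^ 2 = ‖WithLp.toLp 2 a‖ ^ 2 + ‖WithLp.toLp 2 b‖ ^ 2 := by
  simp [EuclideanSpace.norm_sq_eq]

theorem norm_sq_mulVec_sumElim_zero (M : Matrix (κ ⊕ ι) (κ ⊕ ι) ℂ) (w : ι → ℂ) :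
    ‖WithLp.toLp 2 (M.mulVec (Sum.elim 0 w))‖ ^ 2 =
      ‖WithLp.toLp 2 (M.toBlocks₁₂.mulVec w)‖ ^ 2 +
        ‖WithLp.toLp 2 (M.toBlocks₂₂.mulVec w)‖ ^ 2 := by
  conv_lhs => rw [← Matrix.fromBlocks_toBlocks M]
  simp [Matrix.fromBlocks_mulVec, norm_sq_toLp_sumElim]

variable [DecidableEq ι]

theorem l2_opNorm_le_one_iff {A : Matrix κ ι ℂ} :
    ‖A‖ ≤ 1 ↔ ∀ x : ι → ℂ, ‖WithLp.toLp 2 (A.mulVec x)‖ ≤ ‖WithLp.toLp 2 x‖ := by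
  refine ⟨fun hA x => ?_, fun h => ?_⟩
  · exact (Matrix.l2_opNorm_mulVec A (WithLp.toLp 2 x)).trans
      (mul_le_of_le_one_left (norm_nonneg _) hA)
  · rw [Matrix.l2_opNorm_def]
    refine ContinuousLinearMap.opNorm_le_bound _ zero_le_one fun x => ?_
    rw [one_mul]
    exact h x.ofLp

theorem l2_opNorm_one_le : ‖(1 : Matrix ι ι ℂ)‖ ≤ 1 :=
  l2_opNorm_le_one_iff.2 fun x => by rw [Matrix.one_mulVec]

theorem l2_opNorm_le_one_of_mem_unitaryGroup {U : Matrix ι ι ℂ}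
    (hU : U ∈ Matrix.unitaryGroup ι ℂ) : ‖U‖ ≤ 1 := by
  have h := Matrix.l2_opNorm_conjTranspose_mul_self U
  rw [← Matrix.star_eq_conjTranspose, Unitary.star_mul_self_of_mem hU] at h
  nlinarith [l2_opNorm_one_le (ι := ι), norm_nonneg U]

theorem norm_le_one_of_mem_roots_charpoly {A : Matrix ι ι ℂ} (hA : ‖A‖ ≤ 1) {l : ℂ}
    (hl : l ∈ A.charpoly.roots) : ‖l‖ ≤ 1 :=
  (spectrum.norm_le_norm_mul_of_mem
    (Matrix.mem_spectrum_of_isRoot_charpoly (Polynomial.isRoot_of_mem_roots hl))).trans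
    (mul_le_one₀ hA (norm_nonneg _) l2_opNorm_one_le)

theorem mem_phaseDomain_of_l2_opNorm_le_one {A : Matrix ι ι ℂ} (hA : ‖A‖ ≤ 1)
    (hdet : (1 - A).det ≠ 0) : A ∈ phaseDomain ι :=
  mem_phaseDomain (fun _ => norm_le_one_of_mem_roots_charpoly hA) hdet

end Contraction

section Feedback

open scoped Matrix.Norms.L2Operator

variable {ι κ : Type*} [Fintype ι] [DecidableEq ι]

/-- The solution operator `x ↦ w` of `w = M₂₁ x + M₂₂ w`, i.e. the signal in the second block once
its output is fed back into its input. -/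
noncomputable def loopSignal (M : Matrix (κ ⊕ ι) (κ ⊕ ι) ℂ) : Matrix ι κ ℂ :=
  (1 - M.toBlocks₂₂)⁻¹ * M.toBlocks₂₁

/-- The matrix `M₁₁ + M₁₂ (1 - M₂₂)⁻¹ M₂₁` of the closed-loop system; `1 - feedback M` is the
Schur complement of `1 - M₂₂` in `1 - M`. It is only meaningful when `1 - M₂₂` is invertible. -/
noncomputable def feedback (M : Matrix (κ ⊕ ι) (κ ⊕ ι) ℂ) : Matrix κ κ ℂ :=
  M.toBlocks₁₁ + M.toBlocks₁₂ * loopSignal M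

theorem feedback_zero : feedback (0 : Matrix (κ ⊕ ι) (κ ⊕ ι) ℂ) = 0 := by
  have h₁₁ : (0 : Matrix (κ ⊕ ι) (κ ⊕ ι) ℂ).toBlocks₁₁ = 0 := rfl
  have h₁₂ : (0 : Matrix (κ ⊕ ι) (κ ⊕ ι) ℂ).toBlocks₁₂ = 0 := rfl
  rw [feedback, h₁₁, h₁₂, Matrix.zero_mul, add_zero]

theorem continuousAt_feedback {M : Matrix (κ ⊕ ι) (κ ⊕ ι) ℂ}
    (hM : (1 - M.toBlocks₂₂).det ≠ 0) : ContinuousAt feedback M := by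
  have h₁₁ : Continuous (Matrix.toBlocks₁₁ : Matrix (κ ⊕ ι) (κ ⊕ ι) ℂ → _) :=
    continuous_id.matrix_submatrix Sum.inl Sum.inl
  have h₁₂ : Continuous (Matrix.toBlocks₁₂ : Matrix (κ ⊕ ι) (κ ⊕ ι) ℂ → _) :=
    continuous_id.matrix_submatrix Sum.inl Sum.inr
  have h₂₁ : Continuous (Matrix.toBlocks₂₁ : Matrix (κ ⊕ ι) (κ ⊕ ι) ℂ → _) :=
    continuous_id.matrix_submatrix Sum.inr Sum.inl
  have h₂₂ : Continuous (Matrix.toBlocks₂₂ : Matrix (κ ⊕ ι) (κ ⊕ ι) ℂ → _) :=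
    continuous_id.matrix_submatrix Sum.inr Sum.inr
  have hinverse : ContinuousAt Ring.inverse (1 - M.toBlocks₂₂).det := by
    simpa [Ring.inverse_eq_inv'] using continuousAt_inv₀ hM
  have hinv : ContinuousAt (fun A : Matrix (κ ⊕ ι) (κ ⊕ ι) ℂ => (1 - A.toBlocks₂₂)⁻¹) M :=
    ContinuousAt.comp (g := Inv.inv) (continuousAt_matrix_inv _ hinverse)
      (continuous_const.sub h₂₂).continuousAt
  have hpair : Continuous fun p : Matrix (κ ⊕ ι) (κ ⊕ ι) ℂ × Matrix ι ι ℂ =>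
      p.1.toBlocks₁₁ + p.1.toBlocks₁₂ * (p.2 * p.1.toBlocks₂₁) :=
    (h₁₁.comp continuous_fst).add ((h₁₂.comp continuous_fst).matrix_mul
      (continuous_snd.matrix_mul (h₂₁.comp continuous_fst)))
  exact hpair.continuousAt.comp (continuousAt_id.prodMk hinv)

variable [Fintype κ]

theorem feedback_fromBlocks_mul (A : Matrix κ κ ℂ) (M : Matrix (κ ⊕ ι) (κ ⊕ ι) ℂ) :
    feedback (Matrix.fromBlocks A 0 0 1 * M) = A * feedback M := by
  have h : Matrix.fromBlocks A 0 0 1 * M = Matrix.fromBlocks (A * M.toBlocks₁₁)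
      (A * M.toBlocks₁₂) M.toBlocks₂₁ M.toBlocks₂₂ := by
    conv_lhs => rw [← Matrix.fromBlocks_toBlocks M]
    simp [Matrix.fromBlocks_multiply]
  rw [h, feedback, feedback, loopSignal, loopSignal, Matrix.toBlocks_fromBlocks₁₁,
    Matrix.toBlocks_fromBlocks₁₂, Matrix.toBlocks_fromBlocks₂₁, Matrix.toBlocks_fromBlocks₂₂,
    Matrix.mul_assoc, ← Matrix.mul_add]

variable [DecidableEq κ]

theorem mul_fromRows_loopSignal {M : Matrix (κ ⊕ ι) (κ ⊕ ι) ℂ}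
    (hM : (1 - M.toBlocks₂₂).det ≠ 0) :
    M * (Matrix.fromRows 1 (loopSignal M) : Matrix (κ ⊕ ι) κ ℂ) =
      Matrix.fromRows (feedback M) (loopSignal M) := by
  have hloop : M.toBlocks₂₁ + M.toBlocks₂₂ * loopSignal M = loopSignal M := by
    have h : (1 - M.toBlocks₂₂) * loopSignal M = M.toBlocks₂₁ :=
      Matrix.mul_nonsing_inv_cancel_left _ _ hM.isUnit
    rw [← h, Matrix.sub_mul, Matrix.one_mul, sub_add_cancel]
  conv_lhs => enter [1]; rw [← Matrix.fromBlocks_toBlocks M]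
  rw [Matrix.fromBlocks_mul_fromRows, Matrix.mul_one, Matrix.mul_one, hloop, feedback]

theorem det_one_sub_eq_mul_feedback {M : Matrix (κ ⊕ ι) (κ ⊕ ι) ℂ}
    (hM : (1 - M.toBlocks₂₂).det ≠ 0) :
    (1 - M).det = (1 - M.toBlocks₂₂).det * (1 - feedback M).det := by
  have hblocks : 1 - M = Matrix.fromBlocks (1 - M.toBlocks₁₁) (-M.toBlocks₁₂) (-M.toBlocks₂₁)
      (1 - M.toBlocks₂₂) := by
    conv_lhs => rw [← Matrix.fromBlocks_toBlocks M, ← Matrix.fromBlocks_one]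
    rw [sub_eq_add_neg, Matrix.fromBlocks_neg, Matrix.fromBlocks_add]
    simp only [← sub_eq_add_neg, zero_sub]
  let _ := Matrix.invertibleOfIsUnitDet _ hM.isUnit
  rw [hblocks, Matrix.det_fromBlocks₂₂, Matrix.invOf_eq_nonsing_inv, feedback, loopSignal]
  simp only [Matrix.neg_mul, Matrix.mul_neg, neg_neg, Matrix.mul_assoc, sub_sub]

theorem l2_opNorm_feedback_le_one {M : Matrix (κ ⊕ ι) (κ ⊕ ι) ℂ} (hM : ‖M‖ ≤ 1)
    (hdet : (1 - M.toBlocks₂₂).det ≠ 0) : ‖feedback M‖ ≤ 1 := by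
  refine l2_opNorm_le_one_iff.2 fun x => ?_
  have h := l2_opNorm_le_one_iff.1 hM
    ((Matrix.fromRows 1 (loopSignal M) : Matrix (κ ⊕ ι) κ ℂ).mulVec x)
  rw [Matrix.mulVec_mulVec, mul_fromRows_loopSignal hdet, Matrix.fromRows_mulVec,
    Matrix.fromRows_mulVec, Matrix.one_mulVec, ← sq_le_sq₀ (norm_nonneg _) (norm_nonneg _),
    norm_sq_toLp_sumElim, norm_sq_toLp_sumElim] at h
  exact (sq_le_sq₀ (norm_nonneg _) (norm_nonneg _)).1 (by linarith)

theorem feedback_mem_unitaryGroup {M : Matrix (κ ⊕ ι) (κ ⊕ ι) ℂ}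
    (hM : M ∈ Matrix.unitaryGroup (κ ⊕ ι) ℂ) (hdet : (1 - M.toBlocks₂₂).det ≠ 0) :
    feedback M ∈ Matrix.unitaryGroup κ ℂ := by
  set V : Matrix (κ ⊕ ι) κ ℂ := Matrix.fromRows 1 (loopSignal M) with V_def
  have hM' : M.conjTranspose * M = 1 := Unitary.star_mul_self_of_mem hM
  have hV : (M * V).conjTranspose * (M * V) = V.conjTranspose * V := by
    rw [Matrix.conjTranspose_mul, Matrix.mul_assoc, ← Matrix.mul_assoc M.conjTranspose, hM',
      Matrix.one_mul]
  rw [V_def, mul_fromRows_loopSignal hdet] at hV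
  simp only [Matrix.conjTranspose_fromRows_eq_fromCols_conjTranspose,
    Matrix.fromCols_mul_fromRows, Matrix.conjTranspose_one, Matrix.one_mul] at hV
  exact Matrix.mem_unitaryGroup_iff'.2 (add_right_cancel hV)

theorem l2_opNorm_toBlocks₂₂_le_one {M : Matrix (κ ⊕ ι) (κ ⊕ ι) ℂ} (hM : ‖M‖ ≤ 1) :
    ‖M.toBlocks₂₂‖ ≤ 1 := by
  refine l2_opNorm_le_one_iff.2 fun w => ?_
  have h := l2_opNorm_le_one_iff.1 hM (Sum.elim 0 w)
  rw [← sq_le_sq₀ (norm_nonneg _) (norm_nonneg _), norm_sq_mulVec_sumElim_zero,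
    norm_sq_toLp_sumElim] at h
  have hzero : ‖WithLp.toLp 2 (0 : κ → ℂ)‖ = 0 := by simp
  refine (sq_le_sq₀ (norm_nonneg _) (norm_nonneg _)).1 ?_
  nlinarith [sq_nonneg ‖WithLp.toLp 2 (M.toBlocks₁₂.mulVec w)‖]

/-- If `M₂₂ w = w`, then contractivity forces `M₁₂ w = 0`, so `(0, w)` is fixed by `M`. -/
theorem det_one_sub_toBlocks₂₂_ne_zero {M : Matrix (κ ⊕ ι) (κ ⊕ ι) ℂ} (hM : ‖M‖ ≤ 1)
    (hdet : (1 - M).det ≠ 0) : (1 - M.toBlocks₂₂).det ≠ 0 := by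
  contrapose! hdet
  obtain ⟨w, hw, hfix⟩ := Matrix.exists_mulVec_eq_zero_iff.2 hdet
  rw [Matrix.sub_mulVec, Matrix.one_mulVec, sub_eq_zero] at hfix
  have h₁₂ : M.toBlocks₁₂.mulVec w = 0 := by
    have h := l2_opNorm_le_one_iff.1 hM (Sum.elim 0 w)
    rw [← sq_le_sq₀ (norm_nonneg _) (norm_nonneg _), norm_sq_mulVec_sumElim_zero,
      norm_sq_toLp_sumElim, ← hfix] at h
    simpa using h
  refine Matrix.exists_mulVec_eq_zero_iff.1 ⟨Sum.elim 0 w, fun h0 => hw ?_, ?_⟩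
  · exact funext fun i => congrFun h0 (Sum.inr i)
  · rw [Matrix.sub_mulVec, Matrix.one_mulVec, sub_eq_zero]
    conv_rhs => rw [← Matrix.fromBlocks_toBlocks M]
    simp [Matrix.fromBlocks_mulVec, h₁₂, ← hfix]

theorem det_one_sub_feedback_ne_zero {M : Matrix (κ ⊕ ι) (κ ⊕ ι) ℂ} (hM : ‖M‖ ≤ 1)
    (hdet : (1 - M).det ≠ 0) : (1 - feedback M).det ≠ 0 := by
  rw [det_one_sub_eq_mul_feedback (det_one_sub_toBlocks₂₂_ne_zero hM hdet)] at hdet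
  exact right_ne_zero_of_mul hdet

/-- Both sides are continuous along `t • M` for `t ∈ [0, 1]`, agree modulo `2π` because
`det (1 - M) = det (1 - M₂₂) * det (1 - feedback M)`, and vanish at `t = 0`. -/
theorem detPhase_eq_add_detPhase_feedback {M : Matrix (κ ⊕ ι) (κ ⊕ ι) ℂ} (hM : ‖M‖ ≤ 1)
    (hdet : (1 - M).det ≠ 0) :
    detPhase M = detPhase M.toBlocks₂₂ + detPhase (feedback M) := by
  have hMdom := mem_phaseDomain_of_l2_opNorm_le_one hM hdet
  have h₂₂dom := mem_phaseDomain_of_l2_opNorm_le_one (l2_opNorm_toBlocks₂₂_le_one hM)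
    (det_one_sub_toBlocks₂₂_ne_zero hM hdet)
  have hnorm : ∀ t ∈ Set.Icc (0 : ℝ) 1, ‖(t : ℂ) • M‖ ≤ 1 := fun t ht => by
    rw [norm_smul, Complex.norm_real, Real.norm_of_nonneg ht.1]
    exact mul_le_one₀ ht.2 (norm_nonneg M) hM
  have hne : ∀ t ∈ Set.Icc (0 : ℝ) 1, (1 - (t : ℂ) • M).det ≠ 0 := fun t ht =>
    det_one_sub_ne_zero (smul_mem_phaseDomain hMdom ht)
  have hne₂₂ : ∀ t ∈ Set.Icc (0 : ℝ) 1, (1 - ((t : ℂ) • M).toBlocks₂₂).det ≠ 0 := fun t ht =>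
    det_one_sub_toBlocks₂₂_ne_zero (hnorm t ht) (hne t ht)
  have hneF : ∀ t ∈ Set.Icc (0 : ℝ) 1, (1 - feedback ((t : ℂ) • M)).det ≠ 0 := fun t ht =>
    det_one_sub_feedback_ne_zero (hnorm t ht) (hne t ht)
  have hcontF : ContinuousOn (fun t : ℝ => detPhase (feedback ((t : ℂ) • M))) (Set.Icc 0 1) := by
    refine continuousOn_detPhase.comp (fun t ht => ?_) fun t ht =>
      mem_phaseDomain_of_l2_opNorm_le_one (l2_opNorm_feedback_le_one (hnorm t ht) (hne₂₂ t ht))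
        (hneF t ht)
    exact (ContinuousAt.comp (f := fun t : ℝ => (t : ℂ) • M) (continuousAt_feedback (hne₂₂ t ht))
      (by fun_prop)).continuousWithinAt
  have heq := eqOn_of_coe_angle_eq isPreconnected_Icc (continuousOn_detPhase_smul hMdom)
    ((continuousOn_detPhase_smul h₂₂dom).add hcontF)
    (fun t ht => by
      have hblock : (t : ℂ) • M.toBlocks₂₂ = ((t : ℂ) • M).toBlocks₂₂ := rfl
      rw [Pi.add_apply, Real.Angle.coe_add, hblock, coe_detPhase (hne t ht),
        coe_detPhase (hne₂₂ t ht), coe_detPhase (hneF t ht),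
        ← Complex.arg_mul_coe_angle (hne₂₂ t ht) (hneF t ht),
        det_one_sub_eq_mul_feedback (hne₂₂ t ht)])
    (Set.left_mem_Icc.2 zero_le_one) (by simp [detPhase_zero, feedback_zero])
  simpa using heq (Set.right_mem_Icc.2 zero_le_one)

end Feedback

section ExponentialMoments

open scoped Matrix.Norms.L2Operator

open Classical in
/-- The weight `exp (t * detPhase A)`, set to `0` where `1` is an eigenvalue of `A` and the phase
jumps; this convention makes the weight submultiplicative under `feedback`. -/
noncomputable def expPhase {ι : Type*} [Fintype ι] [DecidableEq ι] (t : ℝ) (A : Matrix ι ι ℂ) :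
    ENNReal :=
  if (1 - A).det = 0 then 0 else ENNReal.ofReal (exp (t * detPhase A))

section

variable {ι κ : Type*} [Fintype ι] [DecidableEq ι] [Fintype κ] [DecidableEq κ]

theorem expPhase_of_det_eq_zero (t : ℝ) {A : Matrix ι ι ℂ} (hA : (1 - A).det = 0) :
    expPhase t A = 0 :=
  if_pos hA

theorem expPhase_of_det_ne_zero (t : ℝ) {A : Matrix ι ι ℂ} (hA : (1 - A).det ≠ 0) :
    expPhase t A = ENNReal.ofReal (exp (t * detPhase A)) :=
  if_neg hA

theorem expPhase_reindex (t : ℝ) (e : ι ≃ κ) (A : Matrix ι ι ℂ) :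
    expPhase t (Matrix.reindex e e A) = expPhase t A := by
  have hdet : (1 - Matrix.reindex e e A).det = (1 - A).det := by
    rw [det_one_sub_eq_prod_roots, Matrix.charpoly_reindex, ← det_one_sub_eq_prod_roots]
  rw [expPhase, expPhase, hdet, detPhase_reindex]

theorem expPhase_mul_comm (t : ℝ) (A B : Matrix ι ι ℂ) :
    expPhase t (A * B) = expPhase t (B * A) := by
  rw [expPhase, expPhase, Matrix.det_one_sub_mul_comm, detPhase_mul_comm]

theorem expPhase_le_of_unique [Unique ι] (t : ℝ) (A : Matrix ι ι ℂ) :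
    expPhase t A ≤ ENNReal.ofReal (exp (t * (1 - A default default).arg)) := by
  rw [← detPhase_of_unique, expPhase]
  split_ifs
  exacts [zero_le, le_rfl]

theorem expPhase_le_mul_feedback (t : ℝ) {M : Matrix (κ ⊕ ι) (κ ⊕ ι) ℂ} (hM : ‖M‖ ≤ 1) :
    expPhase t M ≤ expPhase t M.toBlocks₂₂ * expPhase t (feedback M) := by
  by_cases hdet : (1 - M).det = 0
  · rw [expPhase_of_det_eq_zero t hdet]
    exact zero_le
  · rw [expPhase_of_det_ne_zero t hdet,
      expPhase_of_det_ne_zero t (det_one_sub_toBlocks₂₂_ne_zero hM hdet),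
      expPhase_of_det_ne_zero t (det_one_sub_feedback_ne_zero hM hdet),
      ← ENNReal.ofReal_mul (exp_nonneg _), ← exp_add, ← mul_add,
      ← detPhase_eq_add_detPhase_feedback hM hdet]

theorem fromBlocks_mem_unitaryGroup {A : Matrix κ κ ℂ} {D : Matrix ι ι ℂ}
    (hA : A ∈ Matrix.unitaryGroup κ ℂ) (hD : D ∈ Matrix.unitaryGroup ι ℂ) :
    Matrix.fromBlocks A 0 0 D ∈ Matrix.unitaryGroup (κ ⊕ ι) ℂ := by
  rw [Matrix.mem_unitaryGroup_iff, Matrix.star_eq_conjTranspose] at hA hD ⊢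
  simp [Matrix.fromBlocks_conjTranspose, Matrix.fromBlocks_multiply, hA, hD]

theorem reindex_mem_unitaryGroup (e : ι ≃ κ) {A : Matrix ι ι ℂ}
    (hA : A ∈ Matrix.unitaryGroup ι ℂ) :
    Matrix.reindex e e A ∈ Matrix.unitaryGroup κ ℂ := by
  rw [Matrix.mem_unitaryGroup_iff, Matrix.star_eq_conjTranspose] at hA ⊢
  simp [Matrix.conjTranspose_submatrix, Matrix.submatrix_mul_equiv, hA]

end

instance (N : ℕ) :
    SecondCountableTopology (Matrix.unitaryGroup (Fin N) ℂ) :=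
  have : SecondCountableTopology (Matrix (Fin N) (Fin N) ℂ) :=
    inferInstanceAs (SecondCountableTopology (Fin N → Fin N → ℂ))
  TopologicalSpace.Subtype.secondCountableTopology _

theorem measurable_expPhase (t : ℝ) (N : ℕ) :
    Measurable fun U : Matrix.unitaryGroup (Fin N) ℂ => expPhase t U.1 := by
  classical
  have hclosed : IsClosed {U : Matrix.unitaryGroup (Fin N) ℂ | (1 - U.1).det = 0} :=
    isClosed_eq (Continuous.matrix_det (by fun_prop)) continuous_const
  have hphase : ContinuousOn (fun U : Matrix.unitaryGroup (Fin N) ℂ => detPhase U.1)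
      {U | (1 - U.1).det = 0}ᶜ :=
    continuousOn_detPhase.comp continuous_subtype_val.continuousOn fun U hU =>
      mem_phaseDomain_of_l2_opNorm_le_one (l2_opNorm_le_one_of_mem_unitaryGroup U.2) hU
  exact ContinuousOn.measurable_piecewise continuousOn_const
    (ENNReal.continuous_ofReal.comp_continuousOn
      (continuous_exp.comp_continuousOn (continuousOn_const.mul hphase))) hclosed.measurableSet

/-- The embedding `h ↦ diag(h, 1)` of `U(n)` into `U(n + 1)`. -/
def unitaryEmbedding {n : ℕ} (h : Matrix.unitaryGroup (Fin n) ℂ) :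
    Matrix.unitaryGroup (Fin (n + 1)) ℂ :=
  ⟨Matrix.reindex finSumFinEquiv finSumFinEquiv
      (Matrix.fromBlocks h.1 0 0 1 : Matrix (Fin n ⊕ Fin 1) (Fin n ⊕ Fin 1) ℂ),
    reindex_mem_unitaryGroup _ (fromBlocks_mem_unitaryGroup h.2 (one_mem _))⟩

theorem continuous_unitaryEmbedding (n : ℕ) :
    Continuous (unitaryEmbedding : Matrix.unitaryGroup (Fin n) ℂ → _) :=
  ((continuous_subtype_val.matrix_fromBlocks continuous_const continuous_const
    continuous_const).matrix_submatrix _ _).subtype_mk _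

theorem reindex_unitaryEmbedding_mul {n : ℕ} (h : Matrix.unitaryGroup (Fin n) ℂ)
    (U : Matrix.unitaryGroup (Fin (n + 1)) ℂ) :
    Matrix.reindex finSumFinEquiv.symm finSumFinEquiv.symm (unitaryEmbedding h * U).1 =
      (Matrix.fromBlocks h.1 0 0 1 : Matrix (Fin n ⊕ Fin 1) (Fin n ⊕ Fin 1) ℂ) *
        Matrix.reindex finSumFinEquiv.symm finSumFinEquiv.symm U.1 := by
  simp [unitaryEmbedding, ← Matrix.submatrix_mul_equiv _ _ _ finSumFinEquiv]

section Invariant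

variable {n : ℕ}

theorem lintegral_expPhase_fromBlocks_mul_le {ι : Type*} [Fintype ι] [DecidableEq ι] (t : ℝ)
    (μ : Measure (Matrix.unitaryGroup (Fin n) ℂ)) [μ.IsMulLeftInvariant]
    {M : Matrix (Fin n ⊕ ι) (Fin n ⊕ ι) ℂ} (hM : M ∈ Matrix.unitaryGroup (Fin n ⊕ ι) ℂ) :
    ∫⁻ h, expPhase t (Matrix.fromBlocks h.1 0 0 1 * M) ∂μ ≤
      expPhase t M.toBlocks₂₂ * ∫⁻ h, expPhase t h.1 ∂μ := by
  have hpt (h : Matrix.unitaryGroup (Fin n) ℂ) :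
      expPhase t (Matrix.fromBlocks h.1 0 0 1 * M) ≤
        expPhase t M.toBlocks₂₂ * expPhase t (feedback M * h.1) := by
    have hmem : Matrix.fromBlocks h.1 0 0 1 * M ∈ Matrix.unitaryGroup (Fin n ⊕ ι) ℂ :=
      mul_mem (fromBlocks_mem_unitaryGroup h.2 (one_mem _)) hM
    have hblock : (Matrix.fromBlocks h.1 0 0 1 * M).toBlocks₂₂ = M.toBlocks₂₂ := by
      conv_lhs => rw [← Matrix.fromBlocks_toBlocks M, Matrix.fromBlocks_multiply]
      simp
    have := expPhase_le_mul_feedback t (l2_opNorm_le_one_of_mem_unitaryGroup hmem)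
    rwa [hblock, feedback_fromBlocks_mul, expPhase_mul_comm t h.1] at this
  refine (lintegral_mono hpt).trans ?_
  by_cases hdet : (1 - M.toBlocks₂₂).det = 0
  · simp [expPhase_of_det_eq_zero t hdet]
  · let W : Matrix.unitaryGroup (Fin n) ℂ := ⟨feedback M, feedback_mem_unitaryGroup hM hdet⟩
    rw [expPhase_of_det_ne_zero t hdet, lintegral_const_mul' _ _ ENNReal.ofReal_ne_top]
    exact (congrArg _ (lintegral_mul_left_eq_self (μ := μ) (fun h => expPhase t h.1) W)).le

theorem lintegral_expPhase_succ_le (t : ℝ)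
    (μ : Measure (Matrix.unitaryGroup (Fin (n + 1)) ℂ)) [SFinite μ] [μ.IsMulLeftInvariant]
    (ν : Measure (Matrix.unitaryGroup (Fin n) ℂ)) [IsProbabilityMeasure ν]
    [ν.IsMulLeftInvariant] :
    ∫⁻ U, expPhase t U.1 ∂μ ≤
      (∫⁻ U, ENNReal.ofReal (exp (t * (1 - U.1 (Fin.last n) (Fin.last n)).arg)) ∂μ) *
        ∫⁻ h, expPhase t h.1 ∂ν := by
  have hmeas : Measurable fun U : Matrix.unitaryGroup (Fin (n + 1)) ℂ =>
      ENNReal.ofReal (exp (t * (1 - U.1 (Fin.last n) (Fin.last n)).arg)) := by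
    have : Measurable fun U : Matrix.unitaryGroup (Fin (n + 1)) ℂ =>
        U.1 (Fin.last n) (Fin.last n) := (continuous_subtype_val.matrix_elem _ _).measurable
    exact ((Complex.measurable_arg.comp (this.const_sub 1)).const_mul t).exp.ennreal_ofReal
  have hinner (U : Matrix.unitaryGroup (Fin (n + 1)) ℂ) :
      ∫⁻ h, expPhase t (unitaryEmbedding h * U).1 ∂ν ≤
        ENNReal.ofReal (exp (t * (1 - U.1 (Fin.last n) (Fin.last n)).arg)) *
          ∫⁻ h, expPhase t h.1 ∂ν := by
    simp_rw [← expPhase_reindex t finSumFinEquiv.symm, reindex_unitaryEmbedding_mul]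
    refine (lintegral_expPhase_fromBlocks_mul_le t ν (reindex_mem_unitaryGroup _ U.2)).trans ?_
    exact mul_le_mul_left (expPhase_le_of_unique t _) _
  calc ∫⁻ U, expPhase t U.1 ∂μ
      = ∫⁻ h, ∫⁻ U, expPhase t (unitaryEmbedding h * U).1 ∂μ ∂ν := by
        simp_rw [lintegral_mul_left_eq_self (μ := μ) fun U => expPhase t U.1]
        simp
    _ = ∫⁻ U, ∫⁻ h, expPhase t (unitaryEmbedding h * U).1 ∂ν ∂μ :=
        lintegral_lintegral_swap ((measurable_expPhase t (n + 1)).comp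
          (((continuous_unitaryEmbedding n).measurable.comp measurable_fst).mul
            measurable_snd)).aemeasurable
    _ ≤ ∫⁻ U, ENNReal.ofReal (exp (t * (1 - U.1 (Fin.last n) (Fin.last n)).arg)) *
          ∫⁻ h, expPhase t h.1 ∂ν ∂μ := lintegral_mono hinner
    _ = _ := lintegral_mul_const _ hmeas

end Invariant

end ExponentialMoments

section EntryMoments

theorem abs_arg_one_sub_add_im_le {a : ℂ} (ha : ‖a‖ ≤ 1 / 2) :
    |(1 - a).arg + a.im| ≤ ‖a‖ ^ 2 := by
  have hinv : (1 - ‖a‖)⁻¹ / 2 ≤ 1 := by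
    rw [div_le_one two_pos, inv_le_comm₀ (by linarith) two_pos]
    linarith
  calc |(1 - a).arg + a.im| = |(Complex.log (1 + -a) - -a).im| := by
        rw [Complex.sub_im, Complex.log_im, Complex.neg_im, sub_neg_eq_add, ← sub_eq_add_neg]
    _ ≤ ‖Complex.log (1 + -a) - -a‖ := Complex.abs_im_le_norm _
    _ ≤ ‖a‖ ^ 2 * (1 - ‖a‖)⁻¹ / 2 := by
        simpa only [norm_neg] using
          Complex.norm_log_one_add_sub_self_le (z := -a) (by rw [norm_neg]; linarith)
    _ ≤ ‖a‖ ^ 2 := by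
        rw [mul_div_assoc]
        exact mul_le_of_le_one_right (sq_nonneg _) hinv

theorem exp_mul_arg_one_sub_le {a : ℂ} (ha : ‖a‖ ≤ 1) {t : ℝ} (ht : |t| ≤ 1 / 2) :
    exp (t * (1 - a).arg) ≤ 1 - t * a.im + 10 * ‖a‖ ^ 2 := by
  have hpi := pi_lt_d2
  have harg : |(1 - a).arg| ≤ π / 2 := by
    rw [Complex.abs_arg_le_pi_div_two_iff, Complex.sub_re, Complex.one_re, sub_nonneg]
    exact (Complex.re_le_norm a).trans ha
  have htarg : |t * (1 - a).arg| ≤ 1 := by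
    rw [abs_mul]
    nlinarith [abs_nonneg t, abs_nonneg (1 - a).arg]
  have him := Complex.abs_im_le_norm a
  rcases le_or_gt ‖a‖ (1 / 2) with hsmall | hlarge
  · have hlog := abs_arg_one_sub_add_im_le hsmall
    have hlin : |(1 - a).arg| ≤ 3 / 2 * ‖a‖ := by
      have := abs_sub_abs_le_abs_sub (1 - a).arg (-a.im)
      rw [abs_neg, sub_neg_eq_add] at this
      nlinarith [norm_nonneg a]
    have herr : t * ((1 - a).arg + a.im) ≤ 1 / 2 * ‖a‖ ^ 2 :=
      (le_abs_self _).trans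
        ((abs_mul _ _).trans_le (mul_le_mul ht hlog (abs_nonneg _) one_half_pos.le))
    have hsq : (t * (1 - a).arg) ^ 2 ≤ (1 / 2 * (3 / 2 * ‖a‖)) ^ 2 := by
      rw [← sq_abs, abs_mul]
      gcongr
    have hexp := (abs_le.1 (abs_exp_sub_one_sub_id_le htarg)).2
    nlinarith [sq_nonneg ‖a‖]
  · have hexp : exp (t * (1 - a).arg) ≤ 3 :=
      (exp_le_exp.2 (abs_le.1 htarg).2).trans exp_one_lt_three.le
    have htim : t * a.im ≤ 1 / 2 :=
      (le_abs_self _).trans (by rw [abs_mul]; nlinarith [abs_nonneg t, abs_nonneg a.im])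
    nlinarith

/-- The permutation matrix of `σ` as a unitary matrix. -/
def unitaryPermMatrix {N : ℕ} (σ : Equiv.Perm (Fin N)) : Matrix.unitaryGroup (Fin N) ℂ :=
  ⟨σ.permMatrix ℂ, by
    rw [Matrix.mem_unitaryGroup_iff, Matrix.star_eq_conjTranspose,
      Matrix.conjTranspose_permMatrix, ← Matrix.permMatrix_mul, inv_mul_cancel,
      Matrix.permMatrix_one]⟩

theorem unitaryPermMatrix_mul_apply {N : ℕ} (σ : Equiv.Perm (Fin N))
    (U : Matrix.unitaryGroup (Fin N) ℂ) (i j : Fin N) :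
    (unitaryPermMatrix σ * U).1 i j = U.1 (σ i) j :=
  congrFun₂ (PEquiv.toMatrix_toPEquiv_mul σ U.1) i j

theorem sum_norm_sq_col_of_mem_unitaryGroup {ι : Type*} [Fintype ι] [DecidableEq ι]
    {U : Matrix ι ι ℂ} (hU : U ∈ Matrix.unitaryGroup ι ℂ) (j : ι) : ∑ i, ‖U i j‖ ^ 2 = 1 := by
  have h := congrFun₂ (Matrix.mem_unitaryGroup_iff'.1 hU) j j
  rw [Matrix.mul_apply, Matrix.one_apply_eq] at h
  simp_rw [Matrix.star_apply, Complex.star_def, Complex.conj_mul'] at h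
  exact_mod_cast h

variable {N : ℕ} (μ : Measure (Matrix.unitaryGroup (Fin N) ℂ))

theorem memLp_entry [IsFiniteMeasure μ] (p : ENNReal) (i j : Fin N) :
    MemLp (fun U : Matrix.unitaryGroup (Fin N) ℂ => U.1 i j) p μ :=
  MemLp.of_bound (continuous_subtype_val.matrix_elem i j).aestronglyMeasurable 1
    (Eventually.of_forall fun U => entry_norm_bound_of_unitary U.2 i j)

theorem integral_norm_sq_entry [IsProbabilityMeasure μ] [μ.IsMulLeftInvariant] (i j : Fin N) :
    ∫ U, ‖U.1 i j‖ ^ 2 ∂μ = 1 / N := by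
  have hrow (k : Fin N) : ∫ U, ‖U.1 k j‖ ^ 2 ∂μ = ∫ U, ‖U.1 i j‖ ^ 2 ∂μ := by
    rw [← integral_mul_left_eq_self (fun U : Matrix.unitaryGroup (Fin N) ℂ => ‖U.1 i j‖ ^ 2)
      (unitaryPermMatrix (Equiv.swap i k))]
    simp_rw [unitaryPermMatrix_mul_apply, Equiv.swap_apply_left]
  have hsum : ∑ k, ∫ U, ‖U.1 k j‖ ^ 2 ∂μ = 1 := by
    rw [← integral_finsetSum _ fun k _ => (memLp_entry μ 2 k j).integrable_norm_pow two_ne_zero]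
    simp_rw [fun U : Matrix.unitaryGroup (Fin N) ℂ => sum_norm_sq_col_of_mem_unitaryGroup U.2 j]
    simp
  simp_rw [hrow] at hsum
  rw [Finset.sum_const, Finset.card_univ, Fintype.card_fin, nsmul_eq_mul] at hsum
  exact eq_one_div_of_mul_eq_one_right hsum

theorem integral_im_entry [μ.IsMulLeftInvariant] (i j : Fin N) : ∫ U, (U.1 i j).im ∂μ = 0 := by
  have h := integral_mul_left_eq_self (μ := μ)
    (fun U : Matrix.unitaryGroup (Fin N) ℂ => (U.1 i j).im) (-1)
  simp only [neg_one_mul, Unitary.coe_neg, Matrix.neg_apply, Complex.neg_im, integral_neg] at h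
  linarith

theorem lintegral_exp_mul_arg_one_sub_entry_le [IsProbabilityMeasure μ] [μ.IsMulLeftInvariant]
    {t : ℝ} (ht : |t| ≤ 1 / 2) (i j : Fin N) :
    ∫⁻ U, ENNReal.ofReal (exp (t * (1 - U.1 i j).arg)) ∂μ ≤ ENNReal.ofReal (exp (10 / N)) := by
  have hpt (U : Matrix.unitaryGroup (Fin N) ℂ) :=
    exp_mul_arg_one_sub_le (entry_norm_bound_of_unitary U.2 i j) ht
  have him : Integrable (fun U : Matrix.unitaryGroup (Fin N) ℂ => t * (U.1 i j).im) μ :=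
    ((memLp_entry μ 1 i j).integrable le_rfl).im.const_mul t
  have hlin : Integrable (fun U : Matrix.unitaryGroup (Fin N) ℂ => 1 - t * (U.1 i j).im) μ :=
    (integrable_const 1).sub him
  have hsq : Integrable (fun U : Matrix.unitaryGroup (Fin N) ℂ => 10 * ‖U.1 i j‖ ^ 2) μ :=
    ((memLp_entry μ 2 i j).integrable_norm_pow two_ne_zero).const_mul 10
  calc ∫⁻ U, ENNReal.ofReal (exp (t * (1 - U.1 i j).arg)) ∂μ
      ≤ ∫⁻ U, ENNReal.ofReal (1 - t * (U.1 i j).im + 10 * ‖U.1 i j‖ ^ 2) ∂μ :=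
        lintegral_mono fun U => ENNReal.ofReal_le_ofReal (hpt U)
    _ = ENNReal.ofReal (∫ U, 1 - t * (U.1 i j).im + 10 * ‖U.1 i j‖ ^ 2 ∂μ) :=
        (ofReal_integral_eq_lintegral_ofReal (hlin.add hsq)
          (Eventually.of_forall fun U => (exp_nonneg _).trans (hpt U))).symm
    _ = ENNReal.ofReal (10 / N + 1) := by
        have hone : ∫ _ : Matrix.unitaryGroup (Fin N) ℂ, (1 : ℝ) ∂μ = 1 := by simp
        rw [integral_add hlin hsq, integral_sub (integrable_const _) him, integral_const_mul,
          integral_const_mul, integral_im_entry, integral_norm_sq_entry, hone]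
        congr 1
        ring
    _ ≤ ENNReal.ofReal (exp (10 / N)) := ENNReal.ofReal_le_ofReal (add_one_le_exp _)

end EntryMoments

theorem lintegral_expPhase_le (μ : (n : ℕ) → Measure (Matrix.unitaryGroup (Fin n) ℂ))
    [∀ n, IsProbabilityMeasure (μ n)] [∀ n, (μ n).IsMulLeftInvariant] {t : ℝ} (ht : |t| ≤ 1 / 2)
    (n : ℕ) : ∫⁻ U, expPhase t U.1 ∂(μ n) ≤ ENNReal.ofReal (exp (10 * (harmonic n : ℝ))) := by
  induction n with
  | zero =>
    have hone (U : Matrix.unitaryGroup (Fin 0) ℂ) : expPhase t U.1 = 1 := by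
      rw [Subsingleton.elim U.1 0, expPhase_of_det_ne_zero t (by simp), detPhase_zero]
      simp
    simp [hone]
  | succ n ih =>
    calc ∫⁻ U, expPhase t U.1 ∂(μ (n + 1))
        ≤ ENNReal.ofReal (exp (10 / (n + 1 : ℕ))) *
            ENNReal.ofReal (exp (10 * (harmonic n : ℝ))) :=
          (lintegral_expPhase_succ_le t (μ (n + 1)) (μ n)).trans
            (mul_le_mul' (lintegral_exp_mul_arg_one_sub_entry_le _ ht _ _) ih)
      _ = ENNReal.ofReal (exp (10 * (harmonic (n + 1) : ℝ))) := by
          rw [← ENNReal.ofReal_mul (exp_nonneg _), ← exp_add, harmonic_succ]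
          push_cast
          ring_nf

section Counting

theorem arg_one_sub_exp_mul_I {ψ : ℝ} (hψ : ψ ∈ Set.Ioo 0 (2 * π)) :
    (1 - Complex.exp (ψ * Complex.I)).arg = (ψ - π) / 2 := by
  have hsin : 0 < 2 * sin (ψ / 2) :=
    mul_pos two_pos (sin_pos_of_pos_of_lt_pi (by linarith [hψ.1]) (by linarith [hψ.2]))
  have hcos : cos ψ = 1 - 2 * sin (ψ / 2) ^ 2 := by
    have h := cos_two_mul (ψ / 2)
    rw [mul_div_cancel₀ ψ two_ne_zero, cos_sq'] at h
    linarith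
  have hsin' : sin ψ = 2 * sin (ψ / 2) * cos (ψ / 2) := by
    rw [← sin_two_mul, mul_div_cancel₀ ψ two_ne_zero]
  have hpolar : 1 - Complex.exp (ψ * Complex.I) = ((2 * sin (ψ / 2) : ℝ) : ℂ) *
      (Complex.cos (((ψ - π) / 2 : ℝ) : ℂ) + Complex.sin (((ψ - π) / 2 : ℝ) : ℂ) * Complex.I) := by
    rw [Complex.exp_mul_I, ← Complex.ofReal_cos, ← Complex.ofReal_sin, ← Complex.ofReal_cos,
      ← Complex.ofReal_sin, sub_div, cos_sub_pi_div_two, sin_sub_pi_div_two, hcos, hsin']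
    push_cast
    ring
  rw [hpolar, Complex.arg_mul_cos_add_sin_mul_I hsin]
  constructor <;> linarith [hψ.1, hψ.2]

theorem arg_one_sub_exp_mul_exp {φ θ : ℝ} (hφ : φ ∈ Set.Ico 0 (2 * π))
    (hθ : θ ∈ Set.Ico 0 (2 * π)) (hne : φ ≠ θ) :
    (1 - Complex.exp (-θ * Complex.I) * Complex.exp (φ * Complex.I)).arg =
      (φ - π) / 2 - θ / 2 + (Set.Icc 0 θ).indicator (fun _ => π) φ := by
  have hexp : Complex.exp (-θ * Complex.I) * Complex.exp (φ * Complex.I) =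
      Complex.exp ((φ - θ : ℝ) * Complex.I) := by
    rw [← Complex.exp_add]
    push_cast
    ring_nf
  rcases hne.lt_or_gt with hlt | hgt
  · have hper : Complex.exp ((φ - θ : ℝ) * Complex.I) =
        Complex.exp ((φ - θ + 2 * π : ℝ) * Complex.I) := by
      push_cast
      rw [add_mul _ (2 * (π : ℂ)), Complex.exp_periodic]
    rw [hexp, hper, Set.indicator_of_mem (Set.mem_Icc.2 ⟨hφ.1, hlt.le⟩),
      arg_one_sub_exp_mul_I ⟨by linarith [hφ.1, hθ.2], by linarith⟩]
    ring
  · rw [hexp, Set.indicator_of_notMem fun h => hgt.not_ge h.2,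
      arg_one_sub_exp_mul_I ⟨by linarith, by linarith [hφ.2, hθ.1]⟩]
    ring

open Classical in
theorem card_filter_mem_mul_eq_sum_indicator {α R : Type*} [NonAssocSemiring R] (s : Multiset α)
    (A : Set α) (c : R) :
    (Multiset.card (s.filter (· ∈ A)) : R) * c = (s.map (A.indicator fun _ => c)).sum := by
  induction s using Multiset.induction with
  | empty => simp
  | cons a s ih => by_cases ha : a ∈ A <;> simp [ha, ← ih, add_mul, add_comm]

variable {N : ℕ} (U : Matrix.unitaryGroup (Fin N) ℂ)

open scoped Matrix.Norms.L2Operator in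
theorem norm_eq_one_of_mem_roots_charpoly {l : ℂ} (hl : l ∈ U.1.charpoly.roots) : ‖l‖ = 1 :=
  spectrum.norm_eq_one_of_unitary U.2
    (Matrix.mem_spectrum_of_isRoot_charpoly (Polynomial.isRoot_of_mem_roots hl))

theorem card_eigenAngles : Multiset.card (eigenAngles N U) = N := by
  rw [eigenAngles, Multiset.card_map, ← (IsAlgClosed.splits _).natDegree_eq_card_roots,
    Matrix.charpoly_natDegree_eq_dim, Fintype.card_fin]

theorem mem_Ico_of_mem_eigenAngles {φ : ℝ} (hφ : φ ∈ eigenAngles N U) :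
    φ ∈ Set.Ico 0 (2 * π) := by
  obtain ⟨l, -, rfl⟩ := Multiset.mem_map.1 hφ
  split_ifs with harg
  · exact ⟨harg, by linarith [Complex.arg_le_pi l, pi_pos]⟩
  · exact ⟨by linarith [Complex.neg_pi_lt_arg l, pi_pos], by linarith⟩

theorem map_exp_eigenAngles :
    (eigenAngles N U).map (fun φ : ℝ => Complex.exp (φ * Complex.I)) = U.1.charpoly.roots := by
  rw [eigenAngles, Multiset.map_map]
  refine (Multiset.map_congr rfl fun l hl => ?_).trans (Multiset.map_id _)
  have hpolar : Complex.exp (l.arg * Complex.I) = l := by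
    simpa [norm_eq_one_of_mem_roots_charpoly U hl] using Complex.norm_mul_exp_arg_mul_I l
  simp only [Function.comp_apply, id_eq]
  split_ifs
  · exact hpolar
  · rw [Complex.ofReal_add, add_mul, Complex.ofReal_mul, Complex.ofReal_ofNat,
      Complex.exp_periodic, hpolar]

open Classical in
theorem countAngles_mono : Monotone (countAngles N U) := fun _ _ h =>
  Multiset.card_le_card (Multiset.monotone_filter_right _ fun _ hφ => h hφ)

open Classical in
theorem countAngles_le (A : Set ℝ) : countAngles N U A ≤ N :=
  (Multiset.card_le_card (Multiset.filter_le (· ∈ A) _)).trans_eq (card_eigenAngles U)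

/-- The scalar unitary matrix `e^{-iθ}`. -/
noncomputable def unitaryRotation (N : ℕ) (θ : ℝ) : Matrix.unitaryGroup (Fin N) ℂ :=
  ⟨Complex.exp (-θ * Complex.I) • 1, Unitary.smul_mem_of_mem
    (by
      rw [Unitary.mem_iff_star_mul_self, Complex.star_def, Complex.conj_mul', ← Complex.ofReal_neg,
        Complex.norm_exp_ofReal_mul_I, Complex.ofReal_one, one_pow])
    (one_mem _)⟩

theorem coe_unitaryRotation_mul (θ : ℝ) :
    (unitaryRotation N θ * U).1 = Complex.exp (-θ * Complex.I) • U.1 := by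
  simp [unitaryRotation]

theorem unitaryRotation_zero (N : ℕ) : unitaryRotation N 0 = 1 :=
  Subtype.ext (by simp [unitaryRotation])

theorem det_one_sub_unitaryRotation_mul_eq_zero_iff (θ : ℝ) :
    (1 - (unitaryRotation N θ * U).1).det = 0 ↔
      Complex.exp (θ * Complex.I) ∈ U.1.charpoly.roots := by
  have hunit (l : ℂ) : 1 - Complex.exp (-θ * Complex.I) * l = 0 ↔
      l = Complex.exp (θ * Complex.I) := by
    rw [sub_eq_zero, neg_mul, Complex.exp_neg, eq_comm, inv_mul_eq_one₀ (Complex.exp_ne_zero _),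
      eq_comm]
  rw [coe_unitaryRotation_mul, det_one_sub_eq_prod_roots, roots_charpoly_smul, Multiset.map_map,
    Multiset.prod_eq_zero_iff, Multiset.mem_map]
  simp only [Function.comp_apply, hunit, exists_eq_right]

theorem notMem_eigenAngles {θ : ℝ} (hθ : (1 - (unitaryRotation N θ * U).1).det ≠ 0) :
    θ ∉ eigenAngles N U := fun hmem => hθ <| by
  rw [det_one_sub_unitaryRotation_mul_eq_zero_iff, ← map_exp_eigenAngles]
  exact Multiset.mem_map_of_mem _ hmem

theorem detPhase_unitaryRotation_mul {θ : ℝ} (hθ : θ ∈ Set.Ico 0 (2 * π))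
    (hdet : (1 - (unitaryRotation N θ * U).1).det ≠ 0) :
    detPhase (unitaryRotation N θ * U).1 =
      ((eigenAngles N U).map fun φ => (φ - π) / 2).sum - N * (θ / 2) + countFun N U θ * π := by
  have harg : ∀ φ ∈ eigenAngles N U,
      (1 - Complex.exp (-θ * Complex.I) * Complex.exp (φ * Complex.I)).arg =
        (φ - π) / 2 - θ / 2 + (Set.Icc 0 θ).indicator (fun _ => π) φ := fun φ hφ =>
    arg_one_sub_exp_mul_exp (mem_Ico_of_mem_eigenAngles U hφ) hθ
      (ne_of_mem_of_not_mem hφ (notMem_eigenAngles U hdet))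
  rw [coe_unitaryRotation_mul, detPhase_smul, ← map_exp_eigenAngles, Multiset.map_map,
    Function.comp_def, Multiset.map_congr rfl harg, Multiset.sum_map_add, Multiset.sum_map_sub,
    Multiset.map_const', Multiset.sum_replicate, card_eigenAngles, nsmul_eq_mul, countFun,
    countAngles, card_filter_mem_mul_eq_sum_indicator]

theorem countFun_zero (hdet : (1 - U.1).det ≠ 0) : countFun N U 0 = 0 := by
  have hzero : (0 : ℝ) ∉ eigenAngles N U :=
    notMem_eigenAngles U (by rwa [unitaryRotation_zero, one_mul])
  rw [countFun, Set.Icc_self, countAngles, Multiset.card_eq_zero, Multiset.filter_eq_nil]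
  intro φ hφ hφ₀
  exact hzero (Set.mem_singleton_iff.1 hφ₀ ▸ hφ)

theorem abs_countFun_sub_mul_pi_le {θ : ℝ} (hθ : θ ∈ Set.Ico 0 (2 * π))
    (hdet₀ : (1 - U.1).det ≠ 0) (hdet : (1 - (unitaryRotation N θ * U).1).det ≠ 0) :
    |countFun N U θ - N * θ / (2 * π)| * π ≤
      |detPhase (unitaryRotation N θ * U).1| + |detPhase U.1| := by
  have hphase := detPhase_unitaryRotation_mul U hθ hdet
  have hphase₀ := detPhase_unitaryRotation_mul U (Set.left_mem_Ico.2 two_pi_pos)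
    (by rwa [unitaryRotation_zero, one_mul])
  rw [unitaryRotation_zero, one_mul, countFun_zero U hdet₀] at hphase₀
  have hdiff : (countFun N U θ - N * θ / (2 * π)) * π =
      detPhase (unitaryRotation N θ * U).1 - detPhase U.1 := by
    rw [hphase, hphase₀]
    field_simp
    ring
  rw [← abs_of_pos pi_pos, ← abs_mul, abs_of_pos pi_pos, hdiff]
  exact abs_sub _ _

end Counting

section Grid

variable {N : ℕ} (U : Matrix.unitaryGroup (Fin N) ℂ)

theorem abs_countFun_sub_le_of_grid {D : ℝ}
    (hgrid : ∀ k < N, |(countFun N U (2 * π * k / N) : ℝ) - k| ≤ D) {x : ℝ}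
    (hx : x ∈ Set.Ico (0 : ℝ) N) : |countFun N U (2 * π * x / N) - x| ≤ D + 1 := by
  have hfloor := Nat.floor_le hx.1
  have hceil := Nat.lt_floor_add_one x
  set k := ⌊x⌋₊
  have hkN : k < N := by exact_mod_cast hfloor.trans_lt hx.2
  have hmono {a b : ℝ} (hab : a ≤ b) :
      (countFun N U (2 * π * a / N) : ℝ) ≤ countFun N U (2 * π * b / N) :=
    Nat.cast_le.2 (countAngles_mono U (Set.Icc_subset_Icc_right (by gcongr)))
  have hlower := (abs_le.1 (hgrid k hkN)).1
  have hupper : (countFun N U (2 * π * x / N) : ℝ) ≤ k + 1 + D := by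
    rcases Nat.lt_or_ge (k + 1) N with hlt | hge
    · have h := (abs_le.1 (hgrid (k + 1) hlt)).2
      push_cast at h
      linarith [hmono hceil.le]
    · have h : (countFun N U (2 * π * x / N) : ℝ) ≤ (k + 1 : ℕ) :=
        Nat.cast_le.2 ((countAngles_le U _).trans hge)
      push_cast at h
      linarith [(abs_nonneg _).trans (hgrid k hkN)]
  rw [abs_le]
  constructor <;> linarith [hmono hfloor]

theorem dK_le_of_grid (hN : 0 < N) {D : ℝ}
    (hgrid : ∀ k < N, |(countFun N U (2 * π * k / N) : ℝ) - k| ≤ D) :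
    dK N U ≤ (D + 1) / N := by
  have hN' : (0 : ℝ) < N := Nat.cast_pos.2 hN
  have : Nonempty (Set.Ico (0 : ℝ) (2 * π)) := ⟨⟨0, Set.left_mem_Ico.2 two_pi_pos⟩⟩
  refine ciSup_le fun ⟨θ, hθ₀, hθ⟩ => ?_
  have hx : N * θ / (2 * π) ∈ Set.Ico (0 : ℝ) N := by
    refine ⟨by positivity, ?_⟩
    rw [div_lt_iff₀ two_pi_pos]
    gcongr
  have hθx : 2 * π * (N * θ / (2 * π)) / N = θ := by field_simp
  have h := abs_countFun_sub_le_of_grid U hgrid hx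
  rw [hθx] at h
  calc |(countFun N U θ : ℝ) / N - θ / (2 * π)|
      = |countFun N U θ - N * θ / (2 * π)| / N := by
        rw [← abs_of_pos hN', ← abs_div, abs_of_pos hN']
        congr 1
        field_simp
    _ ≤ (D + 1) / N := by gcongr

end Grid

section Concentration

variable {N : ℕ}

theorem ae_det_one_sub_ne_zero (μ : Measure (Matrix.unitaryGroup (Fin N) ℂ)) [SFinite μ]
    [μ.IsMulLeftInvariant] : ∀ᵐ U ∂μ, (1 - U.1).det ≠ 0 := by
  have hfiber (U : Matrix.unitaryGroup (Fin N) ℂ) :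
      ∀ᵐ θ : ℝ, (1 - (unitaryRotation N θ * U).1).det ≠ 0 := by
    have hcountable :=
      U.1.charpoly.roots.toFinset.countable_toSet.preimage_circleMap 0 one_ne_zero
    filter_upwards [hcountable.ae_notMem volume] with θ hθ
    rw [Ne, det_one_sub_unitaryRotation_mul_eq_zero_iff]
    simpa [circleMap] using hθ
  have hmeas : MeasurableSet {p : Matrix.unitaryGroup (Fin N) ℂ × ℝ |
      (1 - (unitaryRotation N p.2 * p.1).1).det ≠ 0} := by
    simp_rw [coe_unitaryRotation_mul]
    exact (isOpen_ne.preimage (Continuous.matrix_det (by fun_prop))).measurableSet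
  obtain ⟨θ, hθ⟩ := ((Measure.ae_ae_comm (μ := μ) (ν := volume) hmeas).1
    (Eventually.of_forall hfiber)).exists
  exact (eventually_mul_left_iff μ (unitaryRotation N θ)).1 hθ

variable (μ : (n : ℕ) → Measure (Matrix.unitaryGroup (Fin n) ℂ))
  [∀ n, IsProbabilityMeasure (μ n)] [∀ n, (μ n).IsMulLeftInvariant]

theorem measure_mul_detPhase_ge_le_exp {t : ℝ} (ht : |t| ≤ 1 / 2) (N : ℕ) (y : ℝ) :
    μ N {U | (1 - U.1).det ≠ 0 ∧ y ≤ t * detPhase U.1} ≤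
      ENNReal.ofReal (exp (10 * (harmonic N : ℝ) - y)) := by
  have hsub : {U : Matrix.unitaryGroup (Fin N) ℂ | (1 - U.1).det ≠ 0 ∧ y ≤ t * detPhase U.1} ⊆
      {U | ENNReal.ofReal (exp y) ≤ expPhase t U.1} := fun U ⟨hdet, hy⟩ => by
    rw [Set.mem_ofPred_eq, expPhase_of_det_ne_zero t hdet]
    exact ENNReal.ofReal_le_ofReal (exp_le_exp.2 hy)
  calc μ N {U | (1 - U.1).det ≠ 0 ∧ y ≤ t * detPhase U.1}
      ≤ (∫⁻ U, expPhase t U.1 ∂(μ N)) / ENNReal.ofReal (exp y) :=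
        (measure_mono hsub).trans (meas_ge_le_lintegral_div (measurable_expPhase t N).aemeasurable
          (by simp [exp_pos]) ENNReal.ofReal_ne_top)
    _ ≤ ENNReal.ofReal (exp (10 * (harmonic N : ℝ))) / ENNReal.ofReal (exp y) := by
        gcongr
        exact lintegral_expPhase_le μ ht N
    _ = ENNReal.ofReal (exp (10 * (harmonic N : ℝ) - y)) := by
        rw [exp_sub, ENNReal.ofReal_div_of_pos (exp_pos y)]

/-- The matrices of `U(N)` with eigenvalue `1`, where the phase jumps, or whose phase is at least
`x` in absolute value. -/
def largePhaseSet (N : ℕ) (x : ℝ) : Set (Matrix.unitaryGroup (Fin N) ℂ) :=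
  {U | (1 - U.1).det = 0 ∨ x ≤ |detPhase U.1|}

theorem measure_largePhaseSet_le (N : ℕ) (x : ℝ) :
    μ N (largePhaseSet N x) ≤ ENNReal.ofReal (2 * exp (10 * (harmonic N : ℝ) - x / 2)) := by
  have hsub : largePhaseSet N x ⊆ {U | (1 - U.1).det = 0} ∪
      ({U | (1 - U.1).det ≠ 0 ∧ x / 2 ≤ 1 / 2 * detPhase U.1} ∪
        {U | (1 - U.1).det ≠ 0 ∧ x / 2 ≤ -(1 / 2) * detPhase U.1}) := fun U hU => by
    by_cases hdet : (1 - U.1).det = 0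
    · exact .inl hdet
    · rcases le_abs.1 (hU.resolve_left hdet) with h | h
      · exact .inr (.inl ⟨hdet, by linarith⟩)
      · exact .inr (.inr ⟨hdet, by linarith⟩)
  have hnull : μ N {U | (1 - U.1).det = 0} = 0 := by
    simpa [ae_iff] using ae_det_one_sub_ne_zero (μ N)
  calc μ N (largePhaseSet N x)
      ≤ 0 + (ENNReal.ofReal (exp (10 * (harmonic N : ℝ) - x / 2)) +
          ENNReal.ofReal (exp (10 * (harmonic N : ℝ) - x / 2))) := by
        refine (measure_mono hsub).trans ((measure_union_le _ _).trans
          (add_le_add hnull.le ((measure_union_le _ _).trans (add_le_add ?_ ?_))))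
        · exact measure_mul_detPhase_ge_le_exp μ (abs_of_pos one_half_pos).le N _
        · exact measure_mul_detPhase_ge_le_exp μ (by rw [abs_neg, abs_of_pos one_half_pos]) N _
    _ = ENNReal.ofReal (2 * exp (10 * (harmonic N : ℝ) - x / 2)) := by
        rw [zero_add, ← ENNReal.ofReal_add (exp_nonneg _) (exp_nonneg _), two_mul]

/-- The matrices of `U(N)` one of whose rotations by a grid angle `2πk/N`, `0 ≤ k < N`, lies in
`largePhaseSet N x`. -/
def gridLargePhaseSet (N : ℕ) (x : ℝ) : Set (Matrix.unitaryGroup (Fin N) ℂ) :=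
  ⋃ k ∈ Finset.range N, (unitaryRotation N (2 * π * k / N) * ·) ⁻¹' largePhaseSet N x

theorem measure_gridLargePhaseSet_le (N : ℕ) (x : ℝ) :
    μ N (gridLargePhaseSet N x) ≤
      ENNReal.ofReal (N * (2 * exp (10 * (harmonic N : ℝ) - x / 2))) :=
  calc μ N (gridLargePhaseSet N x)
      ≤ ∑ k ∈ Finset.range N,
          μ N ((unitaryRotation N (2 * π * k / N) * ·) ⁻¹' largePhaseSet N x) :=
        measure_biUnion_finset_le _ _
    _ = N * μ N (largePhaseSet N x) := by
        simp_rw [measure_preimage_mul, Finset.sum_const, Finset.card_range, nsmul_eq_mul]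
    _ ≤ ENNReal.ofReal (N * (2 * exp (10 * (harmonic N : ℝ) - x / 2))) := by
        rw [ENNReal.ofReal_mul N.cast_nonneg, ENNReal.ofReal_natCast]
        gcongr
        exact measure_largePhaseSet_le μ N x

theorem dK_le_of_notMem_gridLargePhaseSet (hN : 0 < N) {x : ℝ}
    {U : Matrix.unitaryGroup (Fin N) ℂ} (hU : U ∉ gridLargePhaseSet N x) :
    dK N U ≤ (x + 1) / N := by
  have hphase : ∀ k < N, (1 - (unitaryRotation N (2 * π * k / N) * U).1).det ≠ 0 ∧
      |detPhase (unitaryRotation N (2 * π * k / N) * U).1| < x := by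
    simpa [gridLargePhaseSet, largePhaseSet] using hU
  obtain ⟨hdet₀, hphase₀⟩ : (1 - U.1).det ≠ 0 ∧ |detPhase U.1| < x := by
    simpa [unitaryRotation_zero] using hphase 0 hN
  refine dK_le_of_grid U hN fun k hk => ?_
  obtain ⟨hdetk, hphasek⟩ := hphase k hk
  have hN' : (0 : ℝ) < N := Nat.cast_pos.2 hN
  have hθ : 2 * π * k / N ∈ Set.Ico 0 (2 * π) := by
    refine ⟨by positivity, ?_⟩
    rw [div_lt_iff₀ hN']
    gcongr
  have hcount := abs_countFun_sub_mul_pi_le U hθ hdet₀ hdetk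
  have hcancel : N * (2 * π * k / N) / (2 * π) = k := by field_simp
  rw [hcancel] at hcount
  nlinarith [pi_gt_three, abs_nonneg ((countFun N U (2 * π * k / N) : ℝ) - k)]

theorem measure_gridLargePhaseSet_log_le (N : ℕ) :
    μ N (gridLargePhaseSet N (26 * log N)) ≤
      ENNReal.ofReal (2 * exp 10 * (1 / (N : ℝ) ^ 2)) := by
  refine (measure_gridLargePhaseSet_le μ N _).trans (ENNReal.ofReal_le_ofReal ?_)
  rcases N.eq_zero_or_pos with rfl | hN
  · simp
  have hN' : (0 : ℝ) < N := Nat.cast_pos.2 hN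
  calc N * (2 * exp (10 * (harmonic N : ℝ) - 26 * log N / 2))
      ≤ N * (2 * exp (10 - 3 * log N)) := by
        gcongr N * (2 * exp ?_)
        linarith [harmonic_le_one_add_log N]
    _ = 2 * exp 10 * (1 / (N : ℝ) ^ 2) := by
        rw [exp_sub, ← Nat.cast_ofNat (R := ℝ) (n := 3), exp_nat_mul, exp_log hN']
        field_simp

theorem tsum_measure_gridLargePhaseSet_ne_top :
    ∑' N, μ N (gridLargePhaseSet N (26 * log N)) ≠ ⊤ :=
  ne_top_of_le_ne_top
    (((Real.summable_one_div_nat_pow.2 one_lt_two).mul_left (2 * exp 10)).tsum_ofReal_ne_top)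
    (ENNReal.tsum_le_tsum (measure_gridLargePhaseSet_log_le μ))

end Concentration

/-- There is a universal constant `c₃ > 0` such that if, for each `N`, `U N` is a Haar-distributed
random `N × N` unitary matrix (all on a common probability space), then almost surely
`d_K(μ_N, ν) ≤ c₃ log N / N` for all sufficiently large `N`. -/
theorem almost_sure_kolmogorov_upper_bound :
    ∃ c₃ : ℝ, 0 < c₃ ∧
      ∀ (Ω : Type) [MeasureSpace Ω],
        IsProbabilityMeasure (volume : Measure Ω) →
        ∀ U : (N : ℕ) → Ω → Matrix.unitaryGroup (Fin N) ℂ,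
          (∀ N, Measurable (U N)) →
          (∀ N, IsProbabilityMeasure (Measure.map (U N) volume) ∧
            (Measure.map (U N) volume).IsHaarMeasure) →
          ∀ᵐ ω, ∀ᶠ N : ℕ in atTop, dK N (U N ω) ≤ c₃ * Real.log N / N := by
  refine ⟨27, by norm_num, fun Ω _ _ U hUmeas hU => ?_⟩
  have hprob (N : ℕ) : IsProbabilityMeasure (Measure.map (U N) volume) := (hU N).1
  have hinv (N : ℕ) : (Measure.map (U N) volume).IsMulLeftInvariant :=
    (hU N).2.toIsMulLeftInvariant
  have hsummable : ∑' N : ℕ, volume (U N ⁻¹' gridLargePhaseSet N (26 * Real.log N)) ≠ ⊤ :=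
    ne_top_of_le_ne_top
      (tsum_measure_gridLargePhaseSet_ne_top fun N => Measure.map (U N) volume)
      (ENNReal.tsum_le_tsum fun N => Measure.le_map_apply (hUmeas N).aemeasurable _)
  filter_upwards [ae_eventually_notMem hsummable] with ω hω
  filter_upwards [hω, eventually_gt_atTop 0,
    (tendsto_log_atTop.comp tendsto_natCast_atTop_atTop).eventually_ge_atTop 1] with N hgood hN hlog
  calc dK N (U N ω) ≤ (26 * Real.log N + 1) / N := dK_le_of_notMem_gridLargePhaseSet hN hgood
    _ ≤ 27 * Real.log N / N := by
      gcongr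
      linarith [show 1 ≤ Real.log N from hlog]
end

section
/- Let U be an N × N random unitary matrix distributed according to Haar measure on U(N). The eigenvalue angle process of U is negatively associated in the following sense: if A, B ⊆ [0, 2π] are disjoint Borel sets, then for all real s, t, P[𝒩_A ≥ s and 𝒩_B ≥ t] ≤ P[𝒩_A ≥ s] · P[𝒩_B ≥ t]. -/
open MeasureTheory Real Filter

/-!
The eigenvalues of a Haar unitary matrix have joint density proportional to
`|det (z_i ^ j)|² = ∏_{i ≠ j} (1 - z_i / z_j)`. To see this, write `U = V* D V`: an infinitesimal
left translation of `U` decomposes into motions of the frame `V` and rotations of `D`, and the Weyl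
density is exactly the weight for which integration by parts along these makes the law of `U`
translation invariant.

By Andréief's identity, the generating polynomial of the numbers of eigenvalues in `A`, in `B` and
elsewhere is a multiple of `det (z₀ G₀ + z₁ G₁ + z₂ G₂)` with positive semidefinite Gram matrices
`G_k`, so it has no zeros with all variables in the open upper half-plane. This stability forces
`c(a, b) c(a', b') ≤ c(a', b) c(a, b')` for `a ≤ a'` and `b ≤ b'`, where `c(a, b)` is the weight of
the event `𝒩_A = a`, `𝒩_B = b`: the lowest coefficients are compared through the logarithmic
derivative at the origin, the Gauss–Lucas theorem reduces all consecutive indices to this case by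
differentiation, and the general case follows by telescoping once the polynomial has been perturbed
to have positive coefficients. Summing over `a < s ≤ a'` and `b < t ≤ b'` gives the theorem.
-/

namespace UnitaryEigenangles

noncomputable section

/-! ### Calculus on the unitary group -/

section Unitary

open Matrix Set Topology
open scoped Matrix.Norms.L2Operator

section IntegrationByParts

variable {X : Type*} [TopologicalSpace X] [CompactSpace X] [MeasurableSpace X]
  [OpensMeasurableSpace X] (μ : Measure X) [IsFiniteMeasure μ]

theorem hasDerivAt_integral_of_continuous {F F' : ℝ → X → ℂ} (hF : ∀ t, Continuous (F t))
    (hF' : Continuous (Function.uncurry F'))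
    (hderiv : ∀ t x, HasDerivAt (fun s => F s x) (F' t x) t) (t₀ : ℝ) :
    HasDerivAt (fun t => ∫ x, F t x ∂μ) (∫ x, F' t₀ x ∂μ) t₀ := by
  obtain ⟨C, hC⟩ := ((isCompact_closedBall t₀ 1).prod
    (isCompact_univ (X := X))).exists_bound_of_continuousOn hF'.continuousOn
  have integrable {f : X → ℂ} (hf : Continuous f) : Integrable f μ :=
    hf.integrable_of_hasCompactSupport (.of_compactSpace f)
  refine (hasDerivAt_integral_of_dominated_loc_of_deriv_le (bound := fun _ => C)
    (Metric.closedBall_mem_nhds t₀ one_pos) (.of_forall fun t => (integrable (hF t)).1)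
    (integrable (hF t₀)) (integrable (hF'.comp (Continuous.prodMk_right t₀))).1
    (.of_forall fun x t ht => hC (t, x) ⟨ht, mem_univ x⟩) (integrable_const C)
    (.of_forall fun x t _ => hderiv t x)).2

theorem integral_eq_zero_of_hasDerivAt_mul_left [Group X] [IsTopologicalGroup X] [MeasurableMul X]
    [μ.IsMulLeftInvariant] {g : ℝ → X} (hg : Continuous g) {F F' : X → ℂ} (hF : Continuous F)
    (hF' : Continuous F') (hderiv : ∀ t x, HasDerivAt (fun s => F (g s * x)) (F' (g t * x)) t) :
    ∫ x, F' x ∂μ = 0 := by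
  have h := hasDerivAt_integral_of_continuous μ (F := fun t x => F (g t * x))
    (F' := fun t x => F' (g t * x)) (fun t => by fun_prop)
    (by simp only [Function.uncurry_def]; fun_prop) hderiv 0
  simp only [integral_mul_left_eq_self] at h
  exact h.unique (hasDerivAt_const _ _)

end IntegrationByParts

theorem eq_zero_of_forall_selfAdjoint {E : Type*} [AddCommGroup E] [Module ℂ E] [StarAddMonoid E]
    [StarModule ℂ E] {J : E →ₗ[ℂ] ℂ} (hJ : ∀ H : selfAdjoint E, J (Complex.I • (H : E)) = 0) :
    J = 0 := by
  have hH (H : selfAdjoint E) : J (H : E) = 0 := by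
    simpa using hJ H
  refine LinearMap.ext fun Y => ?_
  rw [← realPart_add_I_smul_imaginaryPart Y]
  simp [hH]

variable {n : Type*}

theorem hasDerivAt_entry [Finite n] {A : ℝ → Matrix n n ℂ} {A' : Matrix n n ℂ} {t : ℝ} (i j : n)
    (hA : HasDerivAt A A' t) : HasDerivAt (fun s => A s i j) (A' i j) t := by
  have := Fintype.ofFinite n
  exact hasDerivAt_pi.1 (hasDerivAt_pi.1 hA i) j

theorem hasDerivAt_diagonal [Finite n] [DecidableEq n] {d : ℝ → n → ℂ} {d' : n → ℂ} {t : ℝ}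
    (hd : ∀ i, HasDerivAt (fun s => d s i) (d' i) t) :
    HasDerivAt (fun s => diagonal (d s)) (diagonal d') t := by
  have := Fintype.ofFinite n
  refine hasDerivAt_pi.2 fun i => hasDerivAt_pi.2 fun j => ?_
  obtain rfl | hij := eq_or_ne i j
  · simpa using hd i
  · simpa [hij] using hasDerivAt_const t (0 : ℂ)

section UnitaryGroup

variable [Fintype n] [DecidableEq n]

instance : CompactSpace (unitaryGroup n ℂ) := by
  have hclosed : IsClosed (unitaryGroup n ℂ : Set (Matrix n n ℂ)) := isClosed_unitary
  refine isCompact_iff_compactSpace.mp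
    ((isCompact_univ_pi fun _ => isCompact_univ_pi fun _ =>
      isCompact_closedBall (0 : ℂ) 1).of_isClosed_subset hclosed fun U hU i _ j _ => ?_)
  simpa using entry_norm_bound_of_unitary hU i j

instance : SecondCountableTopology (unitaryGroup n ℂ) := by
  have : SecondCountableTopology (Matrix n n ℂ) :=
    inferInstanceAs (SecondCountableTopology (n → n → ℂ))
  exact TopologicalSpace.Subtype.secondCountableTopology _

theorem exists_expUnitary_eq (U : unitaryGroup n ℂ) :
    ∃ H : selfAdjoint (Matrix n n ℂ), selfAdjoint.expUnitary H = U := by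
  refine ⟨⟨cfc (fun z : ℂ => (z.arg : ℂ)) (U : Matrix n n ℂ), IsSelfAdjoint.cfc_arg _⟩,
    Subtype.ext ?_⟩
  have hcont := (Matrix.finite_spectrum (U : Matrix n n ℂ)).continuousOn fun z => (z.arg : ℂ)
  rw [selfAdjoint.expUnitary_coe, ← CFC.exp_eq_normedSpace_exp (𝕜 := ℂ),
    ← cfc_comp_smul .., ← cfc_comp' ..]
  conv_rhs => rw [← cfc_id' ℂ (U : Matrix n n ℂ)]
  refine cfc_congr fun z hz => ?_
  have hz₁ : ‖z‖ = 1 := spectrum.norm_eq_one_of_unitary U.2 hz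
  simpa [← Complex.exp_eq_exp_ℂ, hz₁, mul_comm] using Complex.norm_mul_exp_arg_mul_I z

theorem hasDerivAt_expUnitary_smul (H : selfAdjoint (Matrix n n ℂ)) (t : ℝ) :
    HasDerivAt (fun s : ℝ => (selfAdjoint.expUnitary (s • H) : Matrix n n ℂ))
      (Complex.I • H * selfAdjoint.expUnitary (t • H)) t := by
  simpa [smul_comm Complex.I] using
    hasDerivAt_exp_smul_const' (𝕂 := ℝ) (Complex.I • (H : Matrix n n ℂ)) t

end UnitaryGroup

end Unitary

/-! ### The Weyl density -/

section WeylDensity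

variable {n : Type*}

theorem continuous_coe_div_apply (i j : n) :
    Continuous fun d : n → Circle => ((d i / d j : Circle) : ℂ) :=
  continuous_induced_dom.comp ((continuous_apply i).div' (continuous_apply j))

variable [Fintype n]

/-- The Weyl density `∏_{i ≠ j} (1 - dᵢ / dⱼ)` on the torus of diagonal unitary matrices, which is
the squared modulus of the Vandermonde determinant. -/
def weylWeight (d : n → Circle) : ℂ :=
  ∏ r ∈ (Finset.univ : Finset n).offDiag, (1 - (d r.1 / d r.2 : Circle))

@[fun_prop]
theorem continuous_weylWeight : Continuous (weylWeight (n := n)) := by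
  unfold weylWeight
  exact continuous_finsetProd _ fun r _ =>
    continuous_const.sub (continuous_coe_div_apply r.1 r.2)

variable [DecidableEq n]

/-- The Weyl density with the factor of index `r` removed. -/
def weylCofactor (r : n × n) (d : n → Circle) : ℂ :=
  ∏ s ∈ (Finset.univ : Finset n).offDiag.erase r, (1 - (d s.1 / d s.2 : Circle))

/-- The derivative of the Weyl density along the field `dⱼ ↦ i vⱼ dⱼ`, extended linearly to complex
`v`. -/
def weylWeightDeriv (v : n → ℂ) (d : n → Circle) : ℂ :=
  -Complex.I * ∑ r ∈ (Finset.univ : Finset n).offDiag,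
    weylCofactor r d * ((v r.1 - v r.2) * (d r.1 / d r.2 : Circle))

theorem one_sub_mul_weylCofactor (d : n → Circle) {r : n × n} (hr : r.1 ≠ r.2) :
    (1 - (d r.1 / d r.2 : Circle)) * weylCofactor r d = weylWeight d :=
  Finset.mul_prod_erase _ (fun s : n × n => 1 - ((d s.1 / d s.2 : Circle) : ℂ)) (by simpa using hr)

@[fun_prop]
theorem continuous_weylCofactor (r : n × n) : Continuous (weylCofactor r) := by
  unfold weylCofactor
  exact continuous_finsetProd _ fun r _ =>
    continuous_const.sub (continuous_coe_div_apply r.1 r.2)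

@[fun_prop]
theorem continuous_weylWeightDeriv (v : n → ℂ) : Continuous (weylWeightDeriv v) := by
  unfold weylWeightDeriv
  exact continuous_const.mul (continuous_finsetSum _ fun r _ =>
    (continuous_weylCofactor r).mul (continuous_const.mul (continuous_coe_div_apply r.1 r.2)))

theorem weylWeightDeriv_eq_sum_single (v : n → ℂ) (d : n → Circle) :
    weylWeightDeriv v d = ∑ p, v p * weylWeightDeriv (Pi.single p 1) d := by
  simp only [weylWeightDeriv, Finset.mul_sum]
  rw [Finset.sum_comm]
  refine Finset.sum_congr rfl fun r _ => ?_
  have hv (i : n) : v i = ∑ p, v p * (Pi.single p 1 : n → ℂ) i := by simp [Pi.single_apply]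
  rw [hv r.1, hv r.2, ← Finset.sum_sub_distrib, Finset.sum_mul, Finset.mul_sum, Finset.mul_sum]
  exact Finset.sum_congr rfl fun p _ => by ring

theorem sum_weylCofactor_mul_sub_eq (v : n → ℂ) (d : n → Circle) :
    ∑ r ∈ (Finset.univ : Finset n).offDiag, weylCofactor r d * (v r.1 - v r.2) =
      Complex.I * weylWeightDeriv v d := by
  have hanti : ∑ r ∈ (Finset.univ : Finset n).offDiag, weylWeight d * (v r.1 - v r.2) = 0 := by
    simp only [mul_sub, Finset.sum_sub_distrib, sub_eq_zero]
    exact Finset.sum_nbij' Prod.swap Prod.swap (by simp [eq_comm]) (by simp [eq_comm])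
      (by simp) (by simp) (by simp)
  rw [weylWeightDeriv, ← mul_assoc, mul_neg, Complex.I_mul_I, neg_neg, one_mul, ← sub_eq_zero,
    ← Finset.sum_sub_distrib, ← hanti]
  refine Finset.sum_congr rfl fun r hr => ?_
  rw [← one_sub_mul_weylCofactor d (by simpa using hr)]
  ring

theorem hasDerivAt_exp_mul_circle (v : ℝ) (z : Circle) (t : ℝ) :
    HasDerivAt (fun s => ((Circle.exp (s * v) * z : Circle) : ℂ))
      (Complex.I * v * (Circle.exp (t * v) * z : Circle)) t := by
  have h := ((hasDerivAt_id t).mul_const v).ofReal_comp.mul_const Complex.I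
  simp only [Circle.coe_mul, Circle.coe_exp]
  exact (h.cexp.mul_const (z : ℂ)).congr_deriv (by simp; ring)

/-- The one-parameter group of torus rotations with angular velocities `v`. -/
def torusRotation (v : n → ℝ) (t : ℝ) : n → Circle := fun i => Circle.exp (t * v i)

theorem hasDerivAt_weylWeight (v : n → ℝ) (d : n → Circle) (t : ℝ) :
    HasDerivAt (fun s => weylWeight (torusRotation v s * d))
      (weylWeightDeriv (fun i => v i) (torusRotation v t * d)) t := by
  have hfactor (r : n × n) : HasDerivAt
      (fun s => 1 - (((torusRotation v s * d) r.1 / (torusRotation v s * d) r.2 : Circle) : ℂ))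
      (-(Complex.I * ((v r.1 - v r.2) *
        ((torusRotation v t * d) r.1 / (torusRotation v t * d) r.2 : Circle)))) t := by
    have hratio (s : ℝ) : (torusRotation v s * d) r.1 / (torusRotation v s * d) r.2 =
        Circle.exp (s * (v r.1 - v r.2)) * (d r.1 / d r.2) := by
      simp only [torusRotation, Pi.mul_apply, mul_sub, Circle.exp_sub, mul_div_mul_comm]
    simp only [hratio]
    exact ((hasDerivAt_exp_mul_circle (v r.1 - v r.2) _ t).const_sub 1).congr_deriv
      (by push_cast; ring)
  refine (HasDerivAt.fun_finsetProd fun r _ => hfactor r).congr_deriv ?_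
  simp only [weylWeightDeriv, weylCofactor, smul_eq_mul, Finset.mul_sum]
  exact Finset.sum_congr rfl fun r _ => by ring

end WeylDensity

/-! ### Spectral data -/

section SpectralData

open Matrix Set Topology
open scoped Matrix.Norms.L2Operator ComplexConjugate

variable {n : Type*} [Fintype n] [DecidableEq n]

/-- The diagonal unitary matrix with the points `d` of the circle on its diagonal. -/
def diagonalUnitary (d : n → Circle) : unitaryGroup n ℂ :=
  ⟨diagonal fun i => (d i : ℂ), by
    rw [mem_unitaryGroup_iff, star_eq_conjTranspose, diagonal_conjTranspose, diagonal_mul_diagonal,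
      ← diagonal_one]
    exact congrArg diagonal (funext fun i => by simp [Complex.mul_conj])⟩

@[simp]
theorem coe_diagonalUnitary (d : n → Circle) :
    (diagonalUnitary d : Matrix n n ℂ) = diagonal fun i => (d i : ℂ) := rfl

@[fun_prop]
theorem continuous_diagonalUnitary : Continuous (diagonalUnitary (n := n)) :=
  Continuous.subtype_mk (by fun_prop) _

/-- Pairs `(V, d)` of a unitary frame `V` and a point `d` of the diagonal torus, which parametrize
the unitary matrix `V* D V`, `D = diag d`. -/
abbrev SpectralData (n : Type*) [Fintype n] [DecidableEq n] :=
  unitaryGroup n ℂ × (n → Circle)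

/-- The unitary matrix `V* D V` with spectral data `(V, d)`. -/
def SpectralData.toUnitary (x : SpectralData n) : unitaryGroup n ℂ :=
  x.1⁻¹ * diagonalUnitary x.2 * x.1

@[fun_prop]
theorem SpectralData.continuous_toUnitary : Continuous (toUnitary (n := n)) := by
  unfold toUnitary
  fun_prop

/-- The map `X ↦ V* X V`: the matrix with entries `X` in the frame `V`. -/
def SpectralData.fromFrame (x : SpectralData n) : Matrix n n ℂ →L[ℂ] Matrix n n ℂ :=
  ContinuousLinearMap.mulLeftRight ℂ (Matrix n n ℂ) (star x.1 : unitaryGroup n ℂ) x.1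

/-- The matrix `V X V*` of `X` in the frame `V`. -/
def SpectralData.inFrame (x : SpectralData n) (X : Matrix n n ℂ) : Matrix n n ℂ :=
  x.1 * X * (star x.1 : unitaryGroup n ℂ)

@[fun_prop]
theorem SpectralData.continuous_fromFrame : Continuous (fromFrame (n := n)) := by
  unfold fromFrame
  fun_prop

@[fun_prop]
theorem SpectralData.continuous_inFrame (X : Matrix n n ℂ) :
    Continuous fun x : SpectralData n => x.inFrame X := by
  unfold inFrame
  fun_prop

theorem SpectralData.fromFrame_apply (x : SpectralData n) (X : Matrix n n ℂ) :
    x.fromFrame X = (star x.1 : unitaryGroup n ℂ) * X * x.1 := rfl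

theorem SpectralData.coe_toUnitary (x : SpectralData n) :
    (x.toUnitary : Matrix n n ℂ) = x.fromFrame (diagonalUnitary x.2) := rfl

theorem SpectralData.star_fromFrame (x : SpectralData n) (X : Matrix n n ℂ) :
    star (x.fromFrame X) = x.fromFrame (star X) := by
  simp [fromFrame_apply, mul_assoc]

theorem SpectralData.mul_coe_toUnitary (x : SpectralData n) (X : Matrix n n ℂ) :
    X * x.toUnitary = x.fromFrame (x.inFrame X * diagonalUnitary x.2) := by
  simp only [coe_toUnitary, fromFrame_apply, inFrame, Unitary.coe_star, ← mul_assoc,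
    Unitary.coe_star_mul_self, one_mul]

/-- The function `U ↦ F(U, U*)` on the unitary group. Keeping `U*` as a separate variable makes the
test functions on the unitary group restrictions of holomorphic ones. -/
def onUnitary (F : Matrix n n ℂ × Matrix n n ℂ → ℂ) (U : unitaryGroup n ℂ) : ℂ :=
  F (U, (star U : unitaryGroup n ℂ))

/-- The derivative of `F` at `(U, U*)`, where `U = V* D V`, in the direction `(V* A V, V* B V)`, as
a complex-linear function of `(A, B)`. -/
def frameDeriv (F : Matrix n n ℂ × Matrix n n ℂ → ℂ) (x : SpectralData n) :
    Matrix n n ℂ × Matrix n n ℂ →L[ℂ] ℂ :=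
  (fderiv ℂ F (x.toUnitary, (star x.toUnitary : unitaryGroup n ℂ))) ∘L
    x.fromFrame.prodMap x.fromFrame

theorem frameDeriv_apply (F : Matrix n n ℂ × Matrix n n ℂ → ℂ) (x : SpectralData n)
    (A B : Matrix n n ℂ) :
    frameDeriv F x (A, B) = fderiv ℂ F (x.toUnitary, (star x.toUnitary : unitaryGroup n ℂ))
      (x.fromFrame A, x.fromFrame B) := rfl

variable {F : Matrix n n ℂ × Matrix n n ℂ → ℂ}

@[fun_prop]
theorem continuous_onUnitary (hF : ContDiff ℂ 1 F) : Continuous (onUnitary F) := by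
  have := hF.continuous
  unfold onUnitary
  fun_prop

theorem continuous_frameDeriv_apply (hF : ContDiff ℂ 1 F) {A B : SpectralData n → Matrix n n ℂ}
    (hA : Continuous A) (hB : Continuous B) :
    Continuous fun x => frameDeriv F x (A x, B x) := by
  have hderiv : Continuous fun x : SpectralData n =>
      fderiv ℂ F (x.toUnitary, (star x.toUnitary : unitaryGroup n ℂ)) :=
    (hF.continuous_fderiv one_ne_zero).comp (by fun_prop)
  have hconj {C : SpectralData n → Matrix n n ℂ} (hC : Continuous C) :
      Continuous fun x : SpectralData n => x.fromFrame (C x) :=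
    SpectralData.continuous_fromFrame.clm_apply hC
  simp only [frameDeriv_apply]
  exact hderiv.clm_apply ((hconj hA).prodMk (hconj hB))

theorem hasDerivAt_onUnitary (hF : ContDiff ℂ 1 F) {W : ℝ → unitaryGroup n ℂ} {X : Matrix n n ℂ}
    {t : ℝ} (hW : HasDerivAt (fun s => (W s : Matrix n n ℂ)) X t) :
    HasDerivAt (fun s => onUnitary F (W s))
      (fderiv ℂ F (W t, (star (W t) : unitaryGroup n ℂ)) (X, star X)) t :=
  ((hF.differentiable one_ne_zero).differentiableAt.hasFDerivAt.restrictScalars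
    ℝ).comp_hasDerivAt t (hW.prodMk hW.star)

theorem hasDerivAt_onUnitary_toUnitary (hF : ContDiff ℂ 1 F) {γ : ℝ → SpectralData n} {t : ℝ}
    {X : Matrix n n ℂ}
    (hγ : HasDerivAt (fun s => ((γ s).toUnitary : Matrix n n ℂ)) ((γ t).fromFrame X) t) :
    HasDerivAt (fun s => onUnitary F (γ s).toUnitary) (frameDeriv F (γ t) (X, star X)) t := by
  rw [frameDeriv_apply, ← SpectralData.star_fromFrame]
  exact hasDerivAt_onUnitary hF hγ

section FrameMotion

variable {V : ℝ → unitaryGroup n ℂ} {Y : Matrix n n ℂ} {t : ℝ}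

theorem hasDerivAt_inFrame (hY : star Y = -Y)
    (hV : HasDerivAt (fun s => (V s : Matrix n n ℂ)) (Y * V t) t) (X : Matrix n n ℂ)
    (d : n → Circle) :
    HasDerivAt (fun s => SpectralData.inFrame (V s, d) X)
      ⁅Y, SpectralData.inFrame (V t, d) X⁆ t := by
  refine ((hV.mul_const X).mul hV.star).congr_deriv ?_
  simp only [SpectralData.inFrame, Ring.lie_def, star_mul, hY, Unitary.coe_star]
  noncomm_ring

theorem hasDerivAt_toUnitary_frame (hY : star Y = -Y)
    (hV : HasDerivAt (fun s => (V s : Matrix n n ℂ)) (Y * V t) t) (d : n → Circle) :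
    HasDerivAt (fun s => (SpectralData.toUnitary (V s, d) : Matrix n n ℂ))
      (SpectralData.fromFrame (V t, d) ⁅(diagonalUnitary d : Matrix n n ℂ), Y⁆) t := by
  refine ((hV.star.mul_const (diagonalUnitary d : Matrix n n ℂ)).mul hV).congr_deriv ?_
  simp only [SpectralData.fromFrame_apply, Ring.lie_def, star_mul, hY, Unitary.coe_star]
  noncomm_ring

end FrameMotion

theorem hasDerivAt_toUnitary_torusRotation (V : unitaryGroup n ℂ) (v : n → ℝ) (d : n → Circle)
    (t : ℝ) :
    HasDerivAt (fun s => (SpectralData.toUnitary (V, torusRotation v s * d) : Matrix n n ℂ))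
      (SpectralData.fromFrame (V, torusRotation v t * d)
        (diagonal fun i => Complex.I * v i * ((torusRotation v t * d) i : ℂ))) t := by
  have hdiag : HasDerivAt (fun s => diagonal fun i => ((torusRotation v s * d) i : ℂ))
      (diagonal fun i => Complex.I * v i * ((torusRotation v t * d) i : ℂ)) t :=
    hasDerivAt_diagonal fun i => hasDerivAt_exp_mul_circle (v i) (d i) t
  exact (hdiag.const_mul ((star V : unitaryGroup n ℂ) : Matrix n n ℂ)).mul_const (V : Matrix n n ℂ)

end SpectralData

/-! ### Translation invariance of the Weyl measure -/

section WeylFormula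

open Matrix Set Topology
open scoped Matrix.Norms.L2Operator ComplexConjugate

variable {n : Type*} [Fintype n] [DecidableEq n]

instance : MeasurableSpace Circle := borel _

instance : BorelSpace Circle := ⟨rfl⟩

/-- The variation of `R(d) (V X V*)_{pq} F(U, U*)`, where `U = V* D V`, when the frame `V` moves
along `Y V`. For skew-Hermitian `Y` this is a derivative; the expression is linear in `Y`. -/
def frameVariation (F : Matrix n n ℂ × Matrix n n ℂ → ℂ) (R : (n → Circle) → ℂ) (X : Matrix n n ℂ)
    (p q : n) (Y : Matrix n n ℂ) (x : SpectralData n) : ℂ :=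
  R x.2 * (⁅Y, x.inFrame X⁆ p q * onUnitary F x.toUnitary + x.inFrame X p q *
    frameDeriv F x (⁅(diagonalUnitary x.2 : Matrix n n ℂ), Y⁆,
      ⁅star (diagonalUnitary x.2 : Matrix n n ℂ), Y⁆))

section Algebra

variable (F : Matrix n n ℂ × Matrix n n ℂ → ℂ) (R : (n → Circle) → ℂ) (X : Matrix n n ℂ) (p q : n)

theorem frameVariation_add (Y Z : Matrix n n ℂ) (x : SpectralData n) :
    frameVariation F R X p q (Y + Z) x =
      frameVariation F R X p q Y x + frameVariation F R X p q Z x := by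
  have hlie (A : Matrix n n ℂ) : ⁅A, Y + Z⁆ = ⁅A, Y⁆ + ⁅A, Z⁆ := by
    simp only [Ring.lie_def, mul_add, add_mul, add_sub_add_comm]
  have hlie' (A : Matrix n n ℂ) : ⁅Y + Z, A⁆ = ⁅Y, A⁆ + ⁅Z, A⁆ := by
    simp only [Ring.lie_def, mul_add, add_mul, add_sub_add_comm]
  simp only [frameVariation, hlie, hlie', ← Prod.mk_add_mk, map_add, Matrix.add_apply]
  ring

theorem frameVariation_smul (c : ℂ) (Y : Matrix n n ℂ) (x : SpectralData n) :
    frameVariation F R X p q (c • Y) x = c * frameVariation F R X p q Y x := by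
  have hlie (A : Matrix n n ℂ) : ⁅A, c • Y⁆ = c • ⁅A, Y⁆ := by
    simp only [Ring.lie_def, smul_mul_assoc, mul_smul_comm, smul_sub]
  have hlie' (A : Matrix n n ℂ) : ⁅c • Y, A⁆ = c • ⁅Y, A⁆ := by
    simp only [Ring.lie_def, smul_mul_assoc, mul_smul_comm, smul_sub]
  simp only [frameVariation, hlie, hlie', ← Prod.smul_mk, map_smul, Matrix.smul_apply,
    smul_eq_mul]
  ring

end Algebra

section FrameVariation

variable {F : Matrix n n ℂ × Matrix n n ℂ → ℂ} (hF : ContDiff ℂ 1 F) {R : (n → Circle) → ℂ}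
  (hR : Continuous R) (X : Matrix n n ℂ) (p q : n)
include hF hR

theorem continuous_frameVariation (Y : Matrix n n ℂ) : Continuous (frameVariation F R X p q Y) := by
  unfold frameVariation
  simp only [Ring.lie_def]
  have hderiv := continuous_frameDeriv_apply (n := n) hF
    (A := fun x => diagonalUnitary x.2 * Y - Y * diagonalUnitary x.2)
    (B := fun x => star (diagonalUnitary x.2 : Matrix n n ℂ) * Y -
      Y * star (diagonalUnitary x.2 : Matrix n n ℂ)) (by fun_prop) (by fun_prop)
  have := continuous_onUnitary hF
  fun_prop

variable [MeasurableSpace (unitaryGroup n ℂ)] [BorelSpace (unitaryGroup n ℂ)]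
  (μ : Measure (SpectralData n)) [IsFiniteMeasure μ] [μ.IsMulLeftInvariant]

theorem integral_frameVariation_selfAdjoint (H : selfAdjoint (Matrix n n ℂ)) :
    ∫ x, frameVariation F R X p q (Complex.I • H) x ∂μ = 0 := by
  set Y : Matrix n n ℂ := Complex.I • H with hYdef
  have hY : star Y = -Y := by simp [hYdef, H.2.star_eq]
  have hg : Continuous fun s : ℝ => ((selfAdjoint.expUnitary (s • H), 1) : SpectralData n) := by
    fun_prop
  refine integral_eq_zero_of_hasDerivAt_mul_left μ hg
    (F := fun x => R x.2 * (x.inFrame X p q * onUnitary F x.toUnitary)) (by fun_prop)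
    (continuous_frameVariation hF hR X p q Y) fun t x => ?_
  have hmul (s : ℝ) : ((selfAdjoint.expUnitary (s • H), 1) : SpectralData n) * x =
      (selfAdjoint.expUnitary (s • H) * x.1, x.2) := Prod.ext rfl (one_mul _)
  have hV : HasDerivAt
      (fun s : ℝ => ((selfAdjoint.expUnitary (s • H) * x.1 : unitaryGroup n ℂ) : Matrix n n ℂ))
      (Y * (selfAdjoint.expUnitary (t • H) * x.1 : unitaryGroup n ℂ)) t :=
    ((hasDerivAt_expUnitary_smul H t).mul_const (x.1 : Matrix n n ℂ)).congr_deriv (mul_assoc _ _ _)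
  have hstar : star ⁅(diagonalUnitary x.2 : Matrix n n ℂ), Y⁆ =
      ⁅star (diagonalUnitary x.2 : Matrix n n ℂ), Y⁆ := by
    simp only [Ring.lie_def, star_sub, star_mul, hY]
    noncomm_ring
  have hK := hasDerivAt_entry p q (hasDerivAt_inFrame hY hV X x.2)
  have hf := hasDerivAt_onUnitary_toUnitary hF (hasDerivAt_toUnitary_frame hY hV x.2)
  rw [hstar] at hf
  simp only [hmul, frameVariation]
  exact (hK.mul hf).const_mul (R x.2)

theorem integral_frameVariation (Y : Matrix n n ℂ) :
    ∫ x, frameVariation F R X p q Y x ∂μ = 0 := by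
  have hint (Y : Matrix n n ℂ) : Integrable (frameVariation F R X p q Y) μ :=
    (continuous_frameVariation hF hR X p q Y).integrable_of_hasCompactSupport
      (.of_compactSpace _)
  let J : Matrix n n ℂ →ₗ[ℂ] ℂ :=
    { toFun := fun Y => ∫ x, frameVariation F R X p q Y x ∂μ
      map_add' := fun Y Z => by
        rw [← integral_add (hint Y) (hint Z)]
        simp only [frameVariation_add]
      map_smul' := fun c Y => by
        rw [RingHom.id_apply, smul_eq_mul, ← integral_const_mul]
        simp only [frameVariation_smul] }
  exact LinearMap.congr_fun (eq_zero_of_forall_selfAdjoint (J := J)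
    fun H => integral_frameVariation_selfAdjoint hF hR X p q μ H) Y

end FrameVariation

section TorusVariation

/-- The complex-linear extension from skew-Hermitian to all `Z` of the derivative of `F(U, U*)`,
where `U = V* D V`, in the direction `V* Z D V`. -/
def translationDeriv (F : Matrix n n ℂ × Matrix n n ℂ → ℂ) (x : SpectralData n) :
    Matrix n n ℂ →L[ℂ] ℂ :=
  frameDeriv F x ∘L
    ((ContinuousLinearMap.mul ℂ (Matrix n n ℂ)).flip (diagonalUnitary x.2)).prod
      (-ContinuousLinearMap.mul ℂ (Matrix n n ℂ) (star (diagonalUnitary x.2 : Matrix n n ℂ)))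

/-- The derivative of `w(d) F(U, U*) (V X V*)_{pp}`, where `U = V* D V` and `w` is the Weyl density,
when the coordinate `d_p` rotates at unit speed. -/
def torusVariation (F : Matrix n n ℂ × Matrix n n ℂ → ℂ) (X : Matrix n n ℂ) (p : n)
    (x : SpectralData n) : ℂ :=
  x.inFrame X p p * (weylWeightDeriv (Pi.single p 1) x.2 * onUnitary F x.toUnitary +
    weylWeight x.2 * (Complex.I * translationDeriv F x (Matrix.single p p 1)))

variable {F : Matrix n n ℂ × Matrix n n ℂ → ℂ}

theorem translationDeriv_apply (x : SpectralData n) (Z : Matrix n n ℂ) :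
    translationDeriv F x Z = frameDeriv F x
      (Z * diagonalUnitary x.2, -(star (diagonalUnitary x.2 : Matrix n n ℂ) * Z)) := rfl

theorem frameDeriv_mul_star_of_skew (x : SpectralData n) {Z : Matrix n n ℂ} (hZ : star Z = -Z) :
    frameDeriv F x (Z * diagonalUnitary x.2, star (Z * diagonalUnitary x.2)) =
      translationDeriv F x Z := by
  rw [translationDeriv_apply, star_mul, hZ, mul_neg]

theorem translationDeriv_eq_sum (x : SpectralData n) (Z : Matrix n n ℂ) :
    translationDeriv F x Z =
      (∑ p, Z p p * translationDeriv F x (Matrix.single p p 1)) +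
        ∑ r ∈ (Finset.univ : Finset n).offDiag,
          Z r.1 r.2 * translationDeriv F x (Matrix.single r.1 r.2 1) := by
  have hsingle (p q : n) : translationDeriv F x (Matrix.single p q (Z p q)) =
      Z p q * translationDeriv F x (Matrix.single p q 1) := by
    rw [← smul_eq_mul (Z p q), ← map_smul, Matrix.smul_single, smul_eq_mul, mul_one]
  conv_lhs => rw [matrix_eq_sum_single Z]
  simp only [map_sum, hsingle]
  rw [← Finset.sum_product' (f := fun p q => Z p q * translationDeriv F x (Matrix.single p q 1)),
    ← Finset.diag_union_offDiag, Finset.sum_union (Finset.disjoint_diag_offDiag _),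
    Finset.sum_diag]

theorem diagonal_mul_single (a : n → ℂ) (p q : n) :
    diagonal a * Matrix.single p q 1 = a p • Matrix.single p q 1 := by
  ext i j
  by_cases hi : p = i <;> simp [diagonal_mul, Matrix.single, hi]

theorem single_mul_diagonal (a : n → ℂ) (p q : n) :
    Matrix.single p q 1 * diagonal a = a q • Matrix.single p q 1 := by
  ext i j
  by_cases hj : q = j <;> simp [mul_diagonal, Matrix.single, hj]

theorem weylWeight_mul_translationDeriv_single (x : SpectralData n) {p q : n} (hpq : p ≠ q) :
    weylWeight x.2 * translationDeriv F x (Matrix.single p q 1) =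
      -(weylCofactor (p, q) x.2 * frameDeriv F x
        (⁅(diagonalUnitary x.2 : Matrix n n ℂ), Matrix.single p q 1⁆,
          ⁅star (diagonalUnitary x.2 : Matrix n n ℂ), Matrix.single p q 1⁆)) := by
  have hp : (x.2 p : ℂ) ≠ 0 := Circle.coe_ne_zero _
  have hq : (x.2 q : ℂ) ≠ 0 := Circle.coe_ne_zero _
  rw [← one_sub_mul_weylCofactor x.2 (r := (p, q)) hpq, mul_comm _ (weylCofactor _ _), mul_assoc,
    ← mul_neg, ← map_neg, translationDeriv_apply, ← smul_eq_mul (1 - _), ← map_smul]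
  simp only [Ring.lie_def, coe_diagonalUnitary, star_eq_conjTranspose, diagonal_conjTranspose,
    diagonal_mul_single, single_mul_diagonal, Prod.smul_mk, Prod.neg_mk, ← sub_smul, smul_smul,
    ← neg_smul, Pi.star_apply, RCLike.star_def, ← Circle.coe_inv_eq_conj, Circle.coe_inv,
    Circle.coe_div]
  congr 5
  · field_simp
    ring
  · field_simp

/-- The frame variation along `E_pq` and the torus rotations together reproduce left
translation. -/
theorem weylWeight_mul_translationDeriv (X : Matrix n n ℂ) (x : SpectralData n) :
    weylWeight x.2 * translationDeriv F x (x.inFrame X) =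
      -Complex.I * ∑ p, torusVariation F X p x -
        ∑ r ∈ (Finset.univ : Finset n).offDiag,
          frameVariation F (weylCofactor r) X r.1 r.2 (Matrix.single r.1 r.2 1) x := by
  set K := x.inFrame X with hK
  have hlie (p q : n) : ⁅Matrix.single p q (1 : ℂ), K⁆ p q = K q q - K p p := by
    simp [Ring.lie_def]
  have htorus : Complex.I * ∑ p, torusVariation F X p x =
      Complex.I * weylWeightDeriv (fun p => K p p) x.2 * onUnitary F x.toUnitary -
        ∑ p, weylWeight x.2 * (K p p * translationDeriv F x (Matrix.single p p 1)) := by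
    rw [weylWeightDeriv_eq_sum_single]
    simp only [torusVariation, ← hK, Finset.mul_sum, Finset.sum_mul, ← Finset.sum_sub_distrib]
    refine Finset.sum_congr rfl fun p _ => ?_
    linear_combination (K p p * weylWeight x.2 * translationDeriv F x (Matrix.single p p 1)) *
      Complex.I_mul_I
  have hframe : ∑ r ∈ (Finset.univ : Finset n).offDiag,
      frameVariation F (weylCofactor r) X r.1 r.2 (Matrix.single r.1 r.2 1) x =
      -(Complex.I * weylWeightDeriv (fun p => K p p) x.2 * onUnitary F x.toUnitary) -
        ∑ r ∈ (Finset.univ : Finset n).offDiag,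
          weylWeight x.2 * (K r.1 r.2 * translationDeriv F x (Matrix.single r.1 r.2 1)) := by
    rw [← sum_weylCofactor_mul_sub_eq, Finset.sum_mul, ← Finset.sum_neg_distrib,
      ← Finset.sum_sub_distrib]
    refine Finset.sum_congr rfl fun r hr => ?_
    have hr' : r.1 ≠ r.2 := by simpa using hr
    rw [frameVariation, ← hK, hlie, mul_left_comm (weylWeight _),
      weylWeight_mul_translationDeriv_single x hr']
    ring
  rw [translationDeriv_eq_sum, neg_mul, htorus, hframe, mul_add, Finset.mul_sum, Finset.mul_sum]
  ring

variable (hF : ContDiff ℂ 1 F) (X : Matrix n n ℂ)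
include hF

theorem continuous_translationDeriv_apply {Z : SpectralData n → Matrix n n ℂ} (hZ : Continuous Z) :
    Continuous fun x => translationDeriv F x (Z x) := by
  simp only [translationDeriv_apply]
  exact continuous_frameDeriv_apply hF (by fun_prop) (by fun_prop)

theorem continuous_torusVariation (p : n) : Continuous (torusVariation F X p) := by
  have hderiv := continuous_translationDeriv_apply (n := n) hF
    (continuous_const (y := Matrix.single p p 1))
  have := continuous_onUnitary hF
  unfold torusVariation
  fun_prop

variable [MeasurableSpace (unitaryGroup n ℂ)] [BorelSpace (unitaryGroup n ℂ)]
  (μ : Measure (SpectralData n)) [IsFiniteMeasure μ] [μ.IsMulLeftInvariant]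

theorem integral_torusVariation (p : n) : ∫ x, torusVariation F X p x ∂μ = 0 := by
  set v : n → ℝ := Pi.single p 1 with hv
  have hvc : (fun i => (v i : ℂ)) = Pi.single p 1 := by
    ext i
    simp [hv, Pi.single_apply, apply_ite]
  have hg : Continuous fun s : ℝ => ((1, torusRotation v s) : SpectralData n) := by
    unfold torusRotation
    fun_prop
  have := continuous_onUnitary hF
  refine integral_eq_zero_of_hasDerivAt_mul_left μ hg
    (F := fun x => x.inFrame X p p * (weylWeight x.2 * onUnitary F x.toUnitary)) (by fun_prop)
    (continuous_torusVariation hF X p) fun t x => ?_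
  have hmul (s : ℝ) : ((1, torusRotation v s) : SpectralData n) * x =
      (x.1, torusRotation v s * x.2) := Prod.ext (one_mul _) rfl
  set y : SpectralData n := (x.1, torusRotation v t * x.2)
  have htangent : (diagonal fun i => Complex.I * v i * ((torusRotation v t * x.2) i : ℂ)) =
      Complex.I • Matrix.single p p 1 * (diagonalUnitary y.2 : Matrix n n ℂ) := by
    rw [coe_diagonalUnitary, ← diagonal_single, ← diagonal_smul, diagonal_mul_diagonal, ← hvc]
    rfl
  have hskew : star (Complex.I • Matrix.single p p (1 : ℂ)) =
      -(Complex.I • Matrix.single p p 1) := by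
    simp [star_eq_conjTranspose, ← Matrix.single_neg]
  have hfderiv := hasDerivAt_onUnitary_toUnitary hF
    (hasDerivAt_toUnitary_torusRotation x.1 v x.2 t)
  rw [htangent, frameDeriv_mul_star_of_skew y hskew, map_smul] at hfderiv
  have hw := hasDerivAt_weylWeight v x.2 t
  rw [hvc] at hw
  simp only [hmul, torusVariation]
  exact (hw.mul hfderiv).const_mul (y.inFrame X p p)

theorem integral_weylWeight_mul_translationDeriv :
    ∫ x : SpectralData n, weylWeight x.2 * translationDeriv F x (x.inFrame X) ∂μ = 0 := by
  have integrable {f : SpectralData n → ℂ} (hf : Continuous f) : Integrable f μ :=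
    hf.integrable_of_hasCompactSupport (.of_compactSpace f)
  have htorus (p : n) := integrable (continuous_torusVariation hF X p)
  have hframe (r : n × n) := integrable (continuous_frameVariation hF
    (continuous_weylCofactor r) X r.1 r.2 (Matrix.single r.1 r.2 1))
  simp only [weylWeight_mul_translationDeriv]
  rw [integral_sub ((integrable_finsetSum _ fun p _ => htorus p).const_mul _)
    (integrable_finsetSum _ fun r _ => hframe r), integral_const_mul,
    integral_finsetSum _ fun p _ => htorus p, integral_finsetSum _ fun r _ => hframe r]
  simp only [integral_torusVariation hF X μ, integral_frameVariation hF
    (continuous_weylCofactor _) X _ _ μ, Finset.sum_const_zero, mul_zero, sub_zero]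

end TorusVariation

section TestFunctions

theorem exists_contDiff_onUnitary_eq_exp_dual (L : Matrix n n ℂ →L[ℝ] ℝ) :
    ∃ F : Matrix n n ℂ × Matrix n n ℂ → ℂ, ContDiff ℂ 1 F ∧
      ∀ U : unitaryGroup n ℂ, onUnitary F U = Complex.exp (L U * Complex.I) := by
  let ℓ : Matrix n n ℂ →L[ℂ] ℂ := StrongDual.extendRCLike (𝕜 := ℂ) L
  let ℓ' : Matrix n n ℂ →L[ℂ] ℂ := LinearMap.toContinuousLinearMap
    { toFun := fun B => conj (ℓ (star B))
      map_add' := by simp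
      map_smul' := by simp }
  refine ⟨fun x => Complex.exp ((ℓ x.1 + ℓ' x.2) / 2 * Complex.I), by fun_prop, fun U => ?_⟩
  have hre : (ℓ U).re = L U := by
    simp [ℓ, StrongDual.extendRCLike_apply]
  have hℓ' : ℓ' (star U : unitaryGroup n ℂ) = conj (ℓ U) := by
    simp [ℓ']
  simp only [onUnitary, hℓ', Complex.add_conj, hre]
  push_cast
  ring_nf

variable [MeasurableSpace (unitaryGroup n ℂ)] [BorelSpace (unitaryGroup n ℂ)]

theorem measure_ext_of_integral_onUnitary {μ ν : Measure (unitaryGroup n ℂ)} [IsFiniteMeasure μ]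
    [IsFiniteMeasure ν] (h : ∀ F : Matrix n n ℂ × Matrix n n ℂ → ℂ, ContDiff ℂ 1 F →
      ∫ U, onUnitary F U ∂μ = ∫ U, onUnitary F U ∂ν) : μ = ν := by
  let _ : MeasurableSpace (Matrix n n ℂ) := borel _
  have : BorelSpace (Matrix n n ℂ) := ⟨rfl⟩
  have hemb : MeasurableEmbedding (Subtype.val : unitaryGroup n ℂ → Matrix n n ℂ) :=
    (continuous_subtype_val.isClosedEmbedding Subtype.val_injective).measurableEmbedding
  have hmap : μ.map Subtype.val = ν.map Subtype.val := by
    refine Measure.ext_of_charFunDual (funext fun L => ?_)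
    obtain ⟨F, hF, hFL⟩ := exists_contDiff_onUnitary_eq_exp_dual L
    simp only [charFunDual_apply, hemb.integral_map, ← hFL]
    exact h F hF
  rw [← hemb.comap_map μ, hmap, hemb.comap_map]

end TestFunctions

section Translation

variable {F : Matrix n n ℂ × Matrix n n ℂ → ℂ}

theorem fderiv_apply_eq_translationDeriv (x : SpectralData n) {Y : Matrix n n ℂ}
    (hY : star Y = -Y) :
    fderiv ℂ F (x.toUnitary, (star x.toUnitary : unitaryGroup n ℂ))
      (Y * x.toUnitary, star (Y * x.toUnitary : Matrix n n ℂ)) =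
      translationDeriv F x (x.inFrame Y) := by
  have hskew : star (x.inFrame Y) = -x.inFrame Y := by
    simp [SpectralData.inFrame, hY, mul_assoc]
  rw [← frameDeriv_mul_star_of_skew x hskew, frameDeriv_apply, x.mul_coe_toUnitary,
    SpectralData.star_fromFrame]

variable (hF : ContDiff ℂ 1 F)
include hF

theorem exists_contDiff_onUnitary_mul_left (g : unitaryGroup n ℂ) :
    ∃ F' : Matrix n n ℂ × Matrix n n ℂ → ℂ, ContDiff ℂ 1 F' ∧
      ∀ U, onUnitary F' U = onUnitary F (g * U) := by
  refine ⟨fun x => F (g * x.1, x.2 * (star g : unitaryGroup n ℂ)),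
    hF.comp ((contDiff_const.mul contDiff_fst).prodMk (contDiff_snd.mul contDiff_const)),
    fun U => ?_⟩
  simp [onUnitary]

variable [MeasurableSpace (unitaryGroup n ℂ)] [BorelSpace (unitaryGroup n ℂ)]
  (μ : Measure (SpectralData n)) [IsFiniteMeasure μ] [μ.IsMulLeftInvariant]

theorem hasDerivAt_integral_expUnitary_mul_zero (H : selfAdjoint (Matrix n n ℂ)) :
    HasDerivAt (fun t : ℝ => ∫ x : SpectralData n, weylWeight x.2 *
      onUnitary F (selfAdjoint.expUnitary (t • H) * x.toUnitary) ∂μ) 0 0 := by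
  set Y : Matrix n n ℂ := Complex.I • H with hYdef
  have hY : star Y = -Y := by simp [hYdef, H.2.star_eq]
  set W : ℝ → SpectralData n → unitaryGroup n ℂ :=
    fun t x => selfAdjoint.expUnitary (t • H) * x.toUnitary with hW
  have hWcont : Continuous (Function.uncurry W) := by
    simp only [hW, Function.uncurry_def]
    fun_prop
  have := continuous_onUnitary hF
  have := hF.continuous_fderiv one_ne_zero
  have hcurve (t : ℝ) (x : SpectralData n) :
      HasDerivAt (fun s => (W s x : Matrix n n ℂ)) (Y * W t x) t :=
    ((hasDerivAt_expUnitary_smul H t).mul_const (x.toUnitary : Matrix n n ℂ)).congr_deriv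
      (mul_assoc _ _ _)
  refine (hasDerivAt_integral_of_continuous μ
    (F := fun t x => weylWeight x.2 * onUnitary F (W t x))
    (F' := fun t x => weylWeight x.2 * fderiv ℂ F (W t x, (star (W t x) : unitaryGroup n ℂ))
      (Y * W t x, star (Y * W t x : Matrix n n ℂ)))
    (fun t => by fun_prop) (by simp only [Function.uncurry_def] at hWcont ⊢; fun_prop)
    (fun t x => (hasDerivAt_onUnitary hF (hcurve t x)).const_mul _) 0).congr_deriv ?_
  rw [← integral_weylWeight_mul_translationDeriv hF Y μ]
  refine integral_congr_ae (.of_forall fun x => ?_)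
  have hW₀ : W 0 x = x.toUnitary := Subtype.ext (by simp [hW])
  simp only [hW₀, fderiv_apply_eq_translationDeriv x hY]

theorem integral_weylWeight_mul_onUnitary_mul_left (g : unitaryGroup n ℂ) :
    ∫ x : SpectralData n, weylWeight x.2 * onUnitary F (g * x.toUnitary) ∂μ =
      ∫ x : SpectralData n, weylWeight x.2 * onUnitary F x.toUnitary ∂μ := by
  obtain ⟨H, rfl⟩ := exists_expUnitary_eq g
  set φ : ℝ → ℂ := fun t => ∫ x : SpectralData n, weylWeight x.2 *
    onUnitary F (selfAdjoint.expUnitary (t • H) * x.toUnitary) ∂μ with hφ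
  have hadd (s t : ℝ) : selfAdjoint.expUnitary (s • H) =
      selfAdjoint.expUnitary (t • H) * selfAdjoint.expUnitary ((s - t) • H) := by
    have hcomm : Commute ((t • H : selfAdjoint (Matrix n n ℂ)) : Matrix n n ℂ)
        ((s - t) • H : selfAdjoint (Matrix n n ℂ)) :=
      ((Commute.refl (H : Matrix n n ℂ)).smul_left t).smul_right (s - t)
    rw [← hcomm.expUnitary_add, ← add_smul, add_sub_cancel]
  have hderiv (t : ℝ) : HasDerivAt φ 0 t := by
    obtain ⟨F', hF', hFF'⟩ := exists_contDiff_onUnitary_mul_left hF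
      (selfAdjoint.expUnitary (t • H))
    have h := hasDerivAt_integral_expUnitary_mul_zero hF' μ H
    simp only [hFF', ← mul_assoc] at h
    have hφ' : φ = fun s => ∫ x : SpectralData n, weylWeight x.2 *
        onUnitary F (selfAdjoint.expUnitary (t • H) * selfAdjoint.expUnitary ((s - t) • H) *
          x.toUnitary) ∂μ := by
      funext s
      rw [hφ, ← hadd]
    rw [hφ']
    exact HasDerivAt.comp_sub_const t t (by rwa [sub_self])
  have hconst := is_const_of_deriv_eq_zero (fun t => (hderiv t).differentiableAt)
    (fun t => (hderiv t).deriv) 1 0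
  simpa only [hφ, one_smul, zero_smul, selfAdjoint.expUnitary_zero, one_mul] using hconst

end Translation

end WeylFormula

/-! ### Determinantal ensembles -/

section Slater

open Matrix Set
open scoped ComplexConjugate ComplexOrder NNReal

section Density

variable {α n : Type*} [Fintype n] [DecidableEq n]

/-- The squared modulus of the Slater determinant `det (φ_j (x_i))`: the unnormalised joint density
of the points of the determinantal ensemble spanned by the functions `φ`. -/
def slaterDensity (φ : n → α → ℂ) (x : n → α) : ℝ≥0 :=
  ‖(Matrix.of fun i j => φ j (x i)).det‖₊ ^ 2

theorem coe_slaterDensity (φ : n → α → ℂ) (x : n → α) :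
    (slaterDensity φ x : ℂ) = (Matrix.of fun i j => φ j (x i)).det *
      (Matrix.of fun i j => conj (φ j (x i))).det := by
  have hconj : (Matrix.of fun i j => conj (φ j (x i))).det =
      conj (Matrix.of fun i j => φ j (x i)).det := (RingHom.map_det (starRingEnd ℂ) _).symm
  rw [hconj, Complex.mul_conj']
  simp [slaterDensity]

/-- The unnormalised joint law of the points of the determinantal ensemble spanned by `φ`. -/
def slaterMeasure [MeasurableSpace α] (φ : n → α → ℂ) (μ : Measure α) :
    Measure (n → α) :=
  (Measure.pi fun _ => μ).withDensity fun x => slaterDensity φ x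

end Density

variable {α n : Type*} [MeasurableSpace α] {μ : Measure α}

/-- The Gram matrix of the functions `φ` in `L²(μ)`. -/
def gramMatrix (φ : n → α → ℂ) (μ : Measure α) : Matrix n n ℂ :=
  Matrix.of fun i j => ∫ x, conj (φ i x) * φ j x ∂μ

theorem posSemidef_gramMatrix [Finite n] {φ : n → α → ℂ} (hφ : ∀ i, MemLp (φ i) 2 μ) :
    (gramMatrix φ μ).PosSemidef := by
  have hgram : gramMatrix φ μ = gram ℂ fun i => (hφ i).toLp := by
    ext i j
    rw [gram_apply, L2.inner_def]
    refine integral_congr_ae ?_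
    filter_upwards [(hφ i).coeFn_toLp, (hφ j).coeFn_toLp] with x hi hj
    rw [hi, hj, RCLike.inner_apply', starRingEnd_apply]
  exact hgram ▸ posSemidef_gram ℂ _

variable {ι : Type*}

section Label

variable [MeasurableSpace ι] [MeasurableSingletonClass ι] {φ : n → α → ℂ} {lab : α → ι}

theorem integrable_label_mul_conj_mul [Finite ι] (hφ : ∀ i, MemLp (φ i) 2 μ) (hlab : Measurable lab)
    (z : ι → ℂ) (i j : n) : Integrable (fun x => z (lab x) * conj (φ i x) * φ j x) μ := by
  simp only [mul_assoc]
  obtain ⟨C, hC⟩ := Finite.exists_le fun k => ‖z k‖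
  exact ((hφ i).star.integrable_mul (hφ j)).bdd_mul
    ((measurable_of_finite z).comp hlab).aestronglyMeasurable (ae_of_all _ fun x => hC (lab x))

theorem integral_label_mul_conj_mul [Fintype ι] (hφ : ∀ i, MemLp (φ i) 2 μ) (hlab : Measurable lab)
    (z : ι → ℂ) (i j : n) : ∫ x, z (lab x) * conj (φ i x) * φ j x ∂μ =
      (∑ k, z k • gramMatrix φ (μ.restrict (lab ⁻¹' {k}))) i j := by
  have hmeas (k : ι) : MeasurableSet (lab ⁻¹' {k}) := hlab (measurableSet_singleton k)
  rw [← setIntegral_univ, ← preimage_univ (f := lab), ← iUnion_of_singleton ι, preimage_iUnion,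
    integral_iUnion_fintype hmeas (fun k l hkl => (disjoint_singleton.2 hkl).preimage lab)
      fun k => (integrable_label_mul_conj_mul hφ hlab z i j).integrableOn, Matrix.sum_apply]
  refine Finset.sum_congr rfl fun k _ => ?_
  rw [Matrix.smul_apply, gramMatrix, of_apply, smul_eq_mul, ← integral_const_mul]
  refine setIntegral_congr_fun (hmeas k) fun x (hx : lab x = k) => ?_
  rw [mul_assoc, hx]

end Label

variable [Fintype ι] [Fintype n] [DecidableEq n]

theorem det_sum_smul_ne_zero {G : ι → Matrix n n ℂ}
    (hG : ∀ k, (G k).PosSemidef) (hdet : (∑ k, G k).det ≠ 0) {z : ι → ℂ}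
    (hz : ∀ k, 0 < (z k).im) : (∑ k, z k • G k).det ≠ 0 := by
  intro h0
  obtain ⟨v, hv, hker⟩ := exists_mulVec_eq_zero_iff.2 h0
  have hform : ∑ k, z k * (star v ⬝ᵥ G k *ᵥ v) = 0 := by
    simpa [sum_mulVec, smul_mulVec, dotProduct_sum] using congrArg (star v ⬝ᵥ ·) hker
  have hnonneg (k : ι) := Complex.nonneg_iff.1 ((hG k).dotProduct_mulVec_nonneg v)
  have him : ∑ k, (z k).im * (star v ⬝ᵥ G k *ᵥ v).re = 0 := by
    simpa [Complex.mul_im, ← (hnonneg _).2] using congrArg Complex.im hform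
  have hzero (k : ι) : G k *ᵥ v = 0 := by
    have hk := (Finset.sum_eq_zero_iff_of_nonneg fun k _ =>
      mul_nonneg (hz k).le (hnonneg k).1).1 him k (Finset.mem_univ k)
    exact ((hG k).dotProduct_mulVec_zero_iff v).1
      (Complex.ext ((mul_eq_zero_iff_left (hz k).ne').1 hk) (hnonneg k).2.symm)
  refine hdet (exists_mulVec_eq_zero_iff.1 ⟨v, hv, ?_⟩)
  simp [sum_mulVec, hzero]

/-- Andréief's identity. -/
theorem integral_det_mul_det [SigmaFinite μ] {φ ψ : n → α → ℂ}
    (h : ∀ i j, Integrable (fun x => φ i x * ψ j x) μ) :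
    ∫ x, (Matrix.of fun i j => φ j (x i)).det * (Matrix.of fun i j => ψ j (x i)).det
      ∂(Measure.pi fun _ : n => μ) =
    (Fintype.card n).factorial * (Matrix.of fun i j => ∫ x, φ i x * ψ j x ∂μ).det := by
  set G : Matrix n n ℂ := Matrix.of fun i j => ∫ x, φ i x * ψ j x ∂μ
  have hexpand (x : n → α) :
      (Matrix.of fun i j => φ j (x i)).det * (Matrix.of fun i j => ψ j (x i)).det =
        ∑ σ : Equiv.Perm n, ∑ τ : Equiv.Perm n, (σ.sign : ℂ) * τ.sign *
          ∏ i, φ (σ i) (x i) * ψ (τ i) (x i) := by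
    rw [← det_transpose, ← det_transpose (Matrix.of fun i j => ψ j (x i)), det_apply', det_apply',
      Finset.sum_mul_sum]
    simp only [transpose_apply, of_apply, Finset.prod_mul_distrib, mul_mul_mul_comm]
  have hint (σ τ : Equiv.Perm n) : Integrable (fun x : n → α => (σ.sign : ℂ) * τ.sign *
      ∏ i, φ (σ i) (x i) * ψ (τ i) (x i)) (Measure.pi fun _ => μ) :=
    (Integrable.fintype_prod fun i => h (σ i) (τ i)).const_mul _
  have hterm (σ τ : Equiv.Perm n) : ∫ x : n → α, (σ.sign : ℂ) * τ.sign *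
      ∏ i, φ (σ i) (x i) * ψ (τ i) (x i) ∂(Measure.pi fun _ => μ) =
        σ.sign * (τ.sign * ∏ i, (G.submatrix σ id)ᵀ (τ i) i) := by
    rw [integral_const_mul, mul_assoc,
      integral_fintype_prod_eq_prod fun i y => φ (σ i) y * ψ (τ i) y]
    rfl
  have hsum (σ : Equiv.Perm n) :
      ∑ τ : Equiv.Perm n, (σ.sign : ℂ) * (τ.sign * ∏ i, (G.submatrix σ id)ᵀ (τ i) i) = G.det := by
    rw [← Finset.mul_sum, ← det_apply', det_transpose, det_permute, ← mul_assoc, ← Int.cast_mul,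
      ← Units.val_mul, Int.units_mul_self]
    simp
  simp only [hexpand]
  rw [integral_finsetSum _ fun σ _ => integrable_finsetSum _ fun τ _ => hint σ τ]
  simp only [integral_finsetSum _ fun τ _ => hint _ τ, hterm, hsum]
  simp [Fintype.card_perm]

theorem measurable_slaterDensity {φ : n → α → ℂ} (hφ : ∀ i, Measurable (φ i)) :
    Measurable (slaterDensity φ) := by
  unfold slaterDensity
  simp only [det_apply, of_apply]
  fun_prop

/-- The homogeneous polynomial `∑ m(κ) ∏ z_{κ(i)}` whose coefficients are the weights `m` of the
labellings `κ` of `n`. -/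
def labelPolynomial (m : (n → ι) → ℝ) (z : ι → ℂ) : ℂ :=
  ∑ κ, (m κ : ℂ) * ∏ i, z (κ i)

/-- The weights `m` are stable if their label polynomial has no zeros with all variables in the
open upper half-plane. -/
def IsStable (m : (n → ι) → ℝ) : Prop :=
  ∀ ⦃z : ι → ℂ⦄, (∀ k, 0 < (z k).im) → labelPolynomial m z ≠ 0

theorem IsStable.ne_zero {m : (n → ι) → ℝ} (hm : IsStable m) : m ≠ 0 := by
  rintro rfl
  exact hm (z := fun _ => Complex.I) (by simp) (by simp [labelPolynomial])

variable [MeasurableSpace ι] [MeasurableSingletonClass ι] {φ : n → α → ℂ} {lab : α → ι}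

theorem labelPolynomial_map (ν : Measure (n → α)) [IsFiniteMeasure ν] (hlab : Measurable lab)
    (z : ι → ℂ) :
    labelPolynomial (fun κ => (ν.map (lab ∘ ·)).real {κ}) z = ∫ x, ∏ i, z (lab (x i)) ∂ν := by
  have hmap : Measurable fun x : n → α => lab ∘ x := by fun_prop
  refine Eq.trans ?_ (integral_map hmap.aemeasurable
    (measurable_of_finite fun κ : n → ι => ∏ i, z (κ i)).aestronglyMeasurable)
  simp [labelPolynomial, integral_fintype Integrable.of_finite]

theorem integral_prod_slaterMeasure [SigmaFinite μ] (hmeas : ∀ i, Measurable (φ i))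
    (hφ : ∀ i, MemLp (φ i) 2 μ) (hlab : Measurable lab) (z : ι → ℂ) :
    ∫ x, ∏ i, z (lab (x i)) ∂(slaterMeasure φ μ) = (Fintype.card n).factorial *
      (∑ k, z k • gramMatrix φ (μ.restrict (lab ⁻¹' {k}))).det := by
  have hdensity (x : n → α) : slaterDensity φ x • ∏ i, z (lab (x i)) =
      (Matrix.of fun i j => z (lab (x i)) * conj (φ j (x i))).det *
        (Matrix.of fun i j => φ j (x i)).det := by
    have hcol := det_mul_column (fun i => z (lab (x i))) (Matrix.of fun i j => conj (φ j (x i)))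
    simp only [of_apply] at hcol
    rw [NNReal.smul_def, Complex.real_smul, coe_slaterDensity, hcol]
    ring
  rw [slaterMeasure, integral_withDensity_eq_integral_smul (measurable_slaterDensity hmeas)]
  simp only [hdensity]
  rw [integral_det_mul_det (φ := fun i x => z (lab x) * conj (φ i x))
    (integrable_label_mul_conj_mul hφ hlab z)]
  congr 2
  ext i j
  exact integral_label_mul_conj_mul hφ hlab z i j

theorem isStable_slaterMeasure_map [SigmaFinite μ] (hmeas : ∀ i, Measurable (φ i))
    (hφ : ∀ i, MemLp (φ i) 2 μ) (hlab : Measurable lab) [IsFiniteMeasure (slaterMeasure φ μ)]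
    (hne : slaterMeasure φ μ ≠ 0) :
    IsStable fun κ => ((slaterMeasure φ μ).map (lab ∘ ·)).real {κ} := by
  intro z hz
  rw [labelPolynomial_map _ hlab, integral_prod_slaterMeasure hmeas hφ hlab]
  refine mul_ne_zero (by positivity) (det_sum_smul_ne_zero (fun k => posSemidef_gramMatrix fun i =>
    (hφ i).restrict _) ?_ hz)
  have hone := integral_prod_slaterMeasure hmeas hφ hlab 1
  intro h0
  have : (slaterMeasure φ μ).real univ = 0 := by simpa [h0] using hone
  exact hne (Measure.measure_univ_eq_zero.1 ((measureReal_eq_zero_iff (measure_ne_top _ _)).1 this))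

end Slater

/-! ### The Weyl integration formula -/

section WeylMeasure

open Matrix Set Topology
open scoped Matrix.Norms.L2Operator ComplexConjugate NNReal

/-- The functions `1, z, …, z ^ (N - 1)` on the circle. -/
def circlePow (N : ℕ) (k : Fin N) (z : Circle) : ℂ := (z : ℂ) ^ (k : ℕ)

variable {N : ℕ}

@[fun_prop]
theorem continuous_circlePow (k : Fin N) : Continuous (circlePow N k) := by
  unfold circlePow
  fun_prop

theorem continuous_slaterDensity_circlePow : Continuous (slaterDensity (circlePow N)) := by
  unfold slaterDensity
  have : Continuous fun d : Fin N → Circle => (Matrix.of fun i j => circlePow N j (d i)).det :=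
    Continuous.matrix_det (continuous_matrix fun i j => by simp only [of_apply]; fun_prop)
  fun_prop

theorem normSq_sub_eq (z w : Circle) :
    ((‖(w - z : ℂ)‖₊ ^ 2 : ℝ≥0) : ℂ) = (1 - (z / w : Circle)) * (1 - (w / z : Circle)) := by
  have hz : (z : ℂ) ≠ 0 := Circle.coe_ne_zero _
  have hw : (w : ℂ) ≠ 0 := Circle.coe_ne_zero _
  have h := Complex.mul_conj' (w - z : ℂ)
  have hnorm : ((‖(w - z : ℂ)‖₊ ^ 2 : ℝ≥0) : ℂ) = (w - z) * (w⁻¹ - z⁻¹) := by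
    push_cast
    exact h.symm.trans (by simp only [map_sub, ← Circle.coe_inv_eq_conj, Circle.coe_inv])
  rw [hnorm]
  push_cast
  field_simp

theorem weylWeight_eq_slaterDensity (d : Fin N → Circle) :
    weylWeight d = (slaterDensity (circlePow N) d : ℂ) := by
  have hlt (r : Fin N × Fin N) :
      r ∈ Finset.univ.offDiag.filter (fun r => r.1 < r.2) ↔ r.1 < r.2 := by
    simpa using fun h : r.1 < r.2 => h.ne
  have hgt (r : Fin N × Fin N) :
      r ∈ Finset.univ.offDiag.filter (fun r => ¬ r.1 < r.2) ↔ r.2 < r.1 := by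
    have := lt_iff_le_and_ne (a := r.2) (b := r.1)
    simp only [Finset.mem_filter, Finset.mem_offDiag, Finset.mem_univ, true_and, not_lt, this]
    tauto
  have hdet : (Matrix.of fun i j => circlePow N j (d i)).det =
      ∏ i, ∏ j ∈ Finset.Ioi i, ((d j : ℂ) - d i) := det_vandermonde fun i => (d i : ℂ)
  have hprod : slaterDensity (circlePow N) d = ∏ r ∈ Finset.univ.offDiag.filter
      (fun r : Fin N × Fin N => r.1 < r.2), ‖(d r.2 - d r.1 : ℂ)‖₊ ^ 2 := by
    rw [slaterDensity, hdet, nnnorm_prod, ← Finset.prod_pow, Finset.prod_finset_product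
      (r := Finset.univ.offDiag.filter fun r : Fin N × Fin N => r.1 < r.2) Finset.univ Finset.Ioi
      (by simpa using hlt)]
    simp only [nnnorm_prod, Finset.prod_pow]
  rw [hprod, weylWeight, ← Finset.prod_filter_mul_prod_filter_not _ (fun r => r.1 < r.2),
    NNReal.coe_prod, Complex.ofReal_prod]
  simp only [normSq_sub_eq, Finset.prod_mul_distrib]
  congr 1
  exact Finset.prod_nbij' Prod.swap Prod.swap (by simp only [hlt, hgt]; simp)
    (by simp only [hlt, hgt]; simp) (by simp) (by simp) (by simp)

/-- Normalised Haar measure on the circle. -/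
def circleMeasure : Measure Circle := Measure.haarMeasure ⊤

instance : circleMeasure.IsHaarMeasure := by unfold circleMeasure; infer_instance

instance : IsProbabilityMeasure circleMeasure :=
  ⟨by simpa [circleMeasure] using! Measure.haarMeasure_self (G := Circle) (K₀ := ⊤)⟩

/-- The unnormalised joint law of the eigenvalues in the Weyl integration formula. -/
def weylMeasure (N : ℕ) : Measure (Fin N → Circle) :=
  slaterMeasure (circlePow N) circleMeasure

instance : IsFiniteMeasure (weylMeasure N) := by
  obtain ⟨C, hC⟩ := (isCompact_range (continuous_slaterDensity_circlePow (N := N))).bddAbove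
  let μ : Measure (Fin N → Circle) := Measure.pi fun _ => circleMeasure
  have hle : ∫⁻ d, slaterDensity (circlePow N) d ∂μ ≤ ∫⁻ _, C ∂μ :=
    lintegral_mono fun d => ENNReal.coe_le_coe.2 (hC ⟨d, rfl⟩)
  have htop : ∫⁻ _, (C : ENNReal) ∂μ ≠ ⊤ := by simp [μ]
  exact isFiniteMeasure_withDensity (ne_top_of_le_ne_top htop hle)

instance : NeZero (weylMeasure N) := by
  refine ⟨?_⟩
  have : Infinite Circle := Circle.argEquiv.infinite_iff.2
    (Set.infinite_coe_iff.2 (Set.Ioc_infinite (by linarith [pi_pos])))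
  let d : Fin N ↪ Circle := Fin.valEmbedding.trans (Infinite.natEmbedding Circle)
  have hd : (Matrix.of fun i j => circlePow N j (d i)).det ≠ 0 :=
    det_vandermonde_ne_zero_iff.2 (Circle.coe_injective.comp d.injective)
  rw [weylMeasure, slaterMeasure, Ne, withDensity_eq_zero_iff
    continuous_slaterDensity_circlePow.measurable.coe_nnreal_ennreal.aemeasurable]
  intro h
  have hcont : Continuous fun d => (slaterDensity (circlePow N) d : ENNReal) :=
    ENNReal.continuous_coe.comp continuous_slaterDensity_circlePow
  have := congrFun ((hcont.ae_eq_iff_eq _ continuous_zero).1 h) d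
  simp [slaterDensity, hd] at this

theorem integral_prod_weylMeasure (P : Measure (unitaryGroup (Fin N) ℂ)) [SFinite P]
    (f : SpectralData (Fin N) → ℂ) :
    ∫ x, f x ∂(P.prod (weylMeasure N)) =
      ∫ x, weylWeight x.2 * f x ∂(P.prod (Measure.pi fun _ => circleMeasure)) := by
  have hmeas : Measurable (slaterDensity (circlePow N)) :=
    continuous_slaterDensity_circlePow.measurable
  rw [weylMeasure, slaterMeasure, prod_withDensity_right hmeas.coe_nnreal_ennreal,
    integral_withDensity_eq_integral_smul
      (f := fun z : SpectralData (Fin N) => slaterDensity (circlePow N) z.2)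
      (hmeas.comp measurable_snd) f]
  simp only [weylWeight_eq_slaterDensity, NNReal.smul_def, Complex.real_smul]

/-- The Weyl integration formula, up to a normalising constant. -/
theorem exists_map_toUnitary_eq_smul (P : Measure (unitaryGroup (Fin N) ℂ)) [P.IsHaarMeasure] :
    ∃ c : ℝ≥0, (P.prod (weylMeasure N)).map SpectralData.toUnitary = c • P := by
  set Q := (P.prod (weylMeasure N)).map SpectralData.toUnitary with hQ
  have hmeas : Measurable (SpectralData.toUnitary (n := Fin N)) :=
    SpectralData.continuous_toUnitary.measurable
  have integral_Q (F : Matrix (Fin N) (Fin N) ℂ × Matrix (Fin N) (Fin N) ℂ → ℂ)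
      (hF : ContDiff ℂ 1 F) (g : unitaryGroup (Fin N) ℂ) : ∫ U, onUnitary F (g * U) ∂Q =
        ∫ x : SpectralData (Fin N), weylWeight x.2 * onUnitary F (g * x.toUnitary)
          ∂(P.prod (Measure.pi fun _ => circleMeasure)) := by
    have := continuous_onUnitary hF
    have hfg : Continuous fun U => onUnitary F (g * U) := by fun_prop
    rw [hQ, integral_map hmeas.aemeasurable hfg.aestronglyMeasurable, integral_prod_weylMeasure]
  have hinv : Q.IsMulLeftInvariant := by
    refine ⟨fun g => measure_ext_of_integral_onUnitary fun F hF => ?_⟩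
    have h₁ := integral_Q F hF 1
    simp only [one_mul] at h₁
    rw [integral_map (by fun_prop) (continuous_onUnitary hF).aestronglyMeasurable,
      integral_Q F hF g, h₁, integral_weylWeight_mul_onUnitary_mul_left hF]
  exact ⟨_, Measure.isMulInvariant_eq_smul_of_compactSpace Q P⟩

end WeylMeasure

/-! ### Coefficients of stable polynomials -/

section StablePolynomials

open Set Topology Polynomial Polynomial.Bivariate
open scoped ComplexConjugate

section ComplexPolynomial

variable {f : ℂ[X]}

theorem im_root_derivative_nonpos (hdeg : 0 < f.degree) (hf : ∀ r, f.IsRoot r → r.im ≤ 0) {r : ℂ}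
    (hr : (derivative f).IsRoot r) : r.im ≤ 0 := by
  have hd : derivative f ≠ 0 := fun h =>
    (natDegree_pos_iff_degree_pos.2 hdeg).ne' (derivative_eq_zero.1 h)
  have hmem : r ∈ (derivative f).rootSet ℂ := by simpa [mem_rootSet, hd] using hr
  have hsub : f.rootSet ℂ ⊆ {z | z.im ≤ 0} := fun z hz => hf z (by simpa using (mem_rootSet.1 hz).2)
  exact convexHull_min hsub (convex_halfSpace_im_le 0)
    (rootSet_derivative_subset_convexHull_rootSet hdeg hmem)

/- At the origin the logarithmic derivative of `f` is `-∑ 1 / r`, and every term of this sum has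
nonpositive imaginary part. -/
theorem im_coeff_one_mul_conj_coeff_zero_nonpos (hf : ∀ r, f.IsRoot r → r.im ≤ 0) :
    (f.coeff 1 * conj (f.coeff 0)).im ≤ 0 := by
  induction hn : f.natDegree generalizing f with
  | zero =>
    rw [coeff_eq_zero_of_natDegree_lt (by lia)]
    simp
  | succ k ih =>
    obtain ⟨r, hr⟩ := IsAlgClosed.exists_root f fun h => by
      simp [natDegree_eq_of_degree_eq_some h] at hn
    obtain ⟨g, rfl⟩ := dvd_iff_isRoot.2 hr
    have hg := ih (f := g) (fun s hs => hf s (by simp [hs.eq_zero])) (by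
      rw [natDegree_mul (X_sub_C_ne_zero r) (by rintro rfl; simp at hn), natDegree_X_sub_C] at hn
      lia)
    have hr := hf r hr
    have h0 : ((X - C r) * g).coeff 0 = -r * g.coeff 0 := by simp [mul_coeff_zero]
    have h1 : ((X - C r) * g).coeff 1 = g.coeff 0 - r * g.coeff 1 := by
      rw [sub_mul, coeff_sub, coeff_C_mul, ← zero_add 1, coeff_X_mul]
    rw [h0, h1]
    have hsplit : ((g.coeff 0 - r * g.coeff 1) * conj (-r * g.coeff 0)).im =
        r.im * Complex.normSq (g.coeff 0) +
          Complex.normSq r * (g.coeff 1 * conj (g.coeff 0)).im := by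
      simp only [neg_mul, map_neg, map_mul, mul_neg, Complex.neg_im, Complex.mul_im,
        Complex.sub_re, Complex.mul_re, Complex.conj_re, Complex.conj_im, Complex.sub_im, neg_neg,
        neg_add_rev, Complex.normSq_apply]
      ring
    rw [hsplit]
    nlinarith [Complex.normSq_nonneg r, Complex.normSq_nonneg (g.coeff 0)]

end ComplexPolynomial

/-- Partial evaluation of a real bivariate polynomial at a complex value of the inner variable. -/
def slice (p : ℝ[X][Y]) (x : ℂ) : ℂ[X] := p.map (aeval x : ℝ[X] →ₐ[ℝ] ℂ).toRingHom

theorem eval_slice (p : ℝ[X][Y]) (x y : ℂ) : (slice p x).eval y = aevalAeval x y p := by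
  induction p using Polynomial.induction_on' with
  | add p q hp hq => simp_all [slice]
  | monomial n q => simp [slice]

/-- The real polynomial `∑ c(a, b) xᵃ yᵇ` has degree `m` and positive coefficients: `c(a, b) > 0`
for `a + b ≤ m`, and all other coefficients vanish. The coefficient `c(a, b)` is
`(p.coeff b).coeff a`. -/
structure HasPositiveCoeffs (m : ℕ) (p : ℝ[X][Y]) : Prop where
  coeff_pos {a b : ℕ} : a + b ≤ m → 0 < (p.coeff b).coeff a
  coeff_eq_zero {a b : ℕ} : m < a + b → (p.coeff b).coeff a = 0

/-- A real bivariate polynomial with positive coefficients is positive stable if it has no zeros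
with both variables in the open upper half-plane. -/
structure PositiveStable (m : ℕ) (p : ℝ[X][Y]) : Prop extends HasPositiveCoeffs m p where
  aevalAeval_ne_zero {x y : ℂ} : 0 < x.im → 0 < y.im → aevalAeval x y p ≠ 0

theorem coeff_coeff_swap (p : ℝ[X][Y]) (a b : ℕ) :
    ((swap p).coeff b).coeff a = (p.coeff a).coeff b := by
  induction p using Polynomial.induction_on' with
  | add p q hp hq => simp_all
  | monomial k q =>
    induction q using Polynomial.induction_on' with
    | add q r hq hr => simp_all
    | monomial l c =>
      rw [swap_monomial_monomial]
      simp only [coeff_monomial]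
      split_ifs <;> simp_all [coeff_monomial]

theorem coeff_coeff_derivative (p : ℝ[X][Y]) (a b : ℕ) :
    ((derivative p).coeff b).coeff a = (b + 1) * (p.coeff (b + 1)).coeff a := by
  rw [coeff_derivative, mul_comm]
  exact_mod_cast coeff_natCast_mul ..

theorem HasPositiveCoeffs.coeff_nonneg {m : ℕ} {p : ℝ[X][Y]} (hp : HasPositiveCoeffs m p)
    (a b : ℕ) : 0 ≤ (p.coeff b).coeff a := by
  by_cases h : a + b ≤ m
  · exact (hp.coeff_pos h).le
  · exact (hp.coeff_eq_zero (not_le.1 h)).ge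

theorem mul_le_mul_of_forall_succ {u v : ℕ → ℝ} {k l : ℕ} (hkl : k ≤ l)
    (hu : ∀ i ∈ Icc k l, 0 < u i) (hv : ∀ i ∈ Icc k l, 0 < v i)
    (h : ∀ i ∈ Ico k l, u i * v (i + 1) ≤ u (i + 1) * v i) : u k * v l ≤ u l * v k := by
  induction l, hkl using Nat.le_induction with
  | base => rfl
  | succ l hkl ih =>
    have hul := hu l ⟨hkl, l.le_succ⟩
    have hvl := hv l ⟨hkl, l.le_succ⟩
    have hih := ih (fun i hi => hu i ⟨hi.1, hi.2.trans l.le_succ⟩)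
      (fun i hi => hv i ⟨hi.1, hi.2.trans l.le_succ⟩)
      fun i hi => h i ⟨hi.1, hi.2.trans l.lt_succ_self⟩
    have hstep := h l ⟨hkl, l.lt_succ_self⟩
    refine le_of_mul_le_mul_right ?_ (mul_pos hul hvl)
    calc u k * v (l + 1) * (u l * v l) = (u k * v l) * (u l * v (l + 1)) := by ring
      _ ≤ (u l * v k) * (u (l + 1) * v l) := by
        gcongr
        · exact mul_nonneg hul.le (hv _ ⟨hkl.trans l.le_succ, le_rfl⟩).le
        · exact mul_nonneg hul.le (hv _ ⟨le_rfl, hkl.trans l.le_succ⟩).le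
      _ = u (l + 1) * v k * (u l * v l) := by ring

namespace PositiveStable

variable {m : ℕ} {p : ℝ[X][Y]}

protected theorem swap (hp : PositiveStable m p) : PositiveStable m (swap p) where
  coeff_pos h := by
    rw [coeff_coeff_swap]
    exact hp.coeff_pos (by lia)
  coeff_eq_zero h := by
    rw [coeff_coeff_swap]
    exact hp.coeff_eq_zero (by lia)
  aevalAeval_ne_zero hx hy := by
    rw [aevalAeval_swap]
    exact hp.aevalAeval_ne_zero hy hx

theorem im_root_slice_nonpos (hp : PositiveStable m p) {x r : ℂ} (hx : 0 < x.im)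
    (hr : (slice p x).IsRoot r) : r.im ≤ 0 := by
  by_contra! h
  exact hp.aevalAeval_ne_zero hx h (by rw [← eval_slice, hr.eq_zero])

theorem degree_slice_pos (hp : PositiveStable (m + 1) p) (x : ℂ) : 0 < (slice p x).degree := by
  refine natDegree_pos_iff_degree_pos.1 (lt_of_lt_of_le m.succ_pos (le_natDegree_of_ne_zero ?_))
  have hconst : p.coeff (m + 1) = C ((p.coeff (m + 1)).coeff 0) := by
    refine eq_C_of_natDegree_eq_zero (natDegree_eq_zero_iff_degree_le_zero.2 ?_)
    exact (degree_le_iff_coeff_zero _ _).2 fun a ha => hp.coeff_eq_zero (by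
      have := Nat.cast_pos.1 ha
      lia)
  rw [slice, coeff_map, hconst]
  simpa using (hp.coeff_pos (a := 0) (by lia)).ne'

protected theorem derivative (hp : PositiveStable (m + 1) p) : PositiveStable m (derivative p) where
  coeff_pos h := by
    rw [coeff_coeff_derivative]
    exact mul_pos (by positivity) (hp.coeff_pos (by lia))
  coeff_eq_zero h := by
    rw [coeff_coeff_derivative, hp.coeff_eq_zero (by lia), mul_zero]
  aevalAeval_ne_zero {x y} hx hy h := by
    have hslice : slice (derivative p) x = derivative (slice p x) := (derivative_map _ _).symm
    rw [← eval_slice, hslice] at h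
    exact hy.not_ge (im_root_derivative_nonpos (hp.degree_slice_pos x)
      (fun r => hp.im_root_slice_nonpos hx) h)

theorem coeff_zero_mul_coeff_one_le (hp : PositiveStable m p) :
    (p.coeff 0).coeff 0 * (p.coeff 1).coeff 1 ≤ (p.coeff 0).coeff 1 * (p.coeff 1).coeff 0 := by
  set q₀ := p.coeff 0
  set q₁ := p.coeff 1
  let w (q : ℝ[X]) (ε : ℝ) : ℂ := aeval (ε * Complex.I) q.divX
  let g (ε : ℝ) : ℝ := q₀.coeff 0 * (w q₁ ε).re - (w q₀ ε).re * q₁.coeff 0 +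
    ε * (w q₁ ε * conj (w q₀ ε)).im
  have haeval (q : ℝ[X]) (ε : ℝ) : aeval (ε * Complex.I) q = q.coeff 0 + ε * Complex.I * w q ε := by
    conv_lhs => rw [← divX_mul_X_add q]
    simp only [map_add, map_mul, aeval_X, aeval_C, Complex.coe_algebraMap, w]
    ring
  have hle (ε : ℝ) (hε : 0 < ε) : g ε ≤ 0 := by
    have h := im_coeff_one_mul_conj_coeff_zero_nonpos fun r =>
      hp.im_root_slice_nonpos (x := ε * Complex.I) (r := r) (by simpa using hε)
    have hcoeff (k : ℕ) : (slice p (ε * Complex.I)).coeff k = aeval (ε * Complex.I) (p.coeff k) :=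
      coeff_map _ _
    have him : (aeval (ε * Complex.I) q₁ * conj (aeval (ε * Complex.I) q₀)).im = ε * g ε := by
      rw [haeval, haeval]
      simp only [map_add, Complex.conj_ofReal, map_mul, Complex.conj_I, mul_neg, neg_mul,
        Complex.mul_im, Complex.add_re, Complex.ofReal_re, Complex.mul_re, Complex.I_re, mul_zero,
        Complex.ofReal_im, Complex.I_im, mul_one, sub_self, zero_mul, add_zero, zero_sub,
        Complex.add_im, Complex.neg_im, Complex.conj_im, neg_zero, Complex.conj_re, zero_add,
        Complex.neg_re, sub_neg_eq_add, g]
      ring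
    rw [hcoeff, hcoeff, him] at h
    exact nonpos_of_mul_nonpos_right h hε
  have hcont : Continuous g := by
    fun_prop
  have hlim : g 0 ≤ 0 := le_of_tendsto (hcont.continuousWithinAt (s := Ioi 0))
    (eventually_nhdsWithin_of_forall hle)
  simpa [g, w, aeval_def, coeff_divX] using hlim

theorem coeff_mul_coeff_succ_succ_le_of_left_zero (hp : PositiveStable m p) (b : ℕ) :
    (p.coeff b).coeff 0 * (p.coeff (b + 1)).coeff 1 ≤
      (p.coeff b).coeff 1 * (p.coeff (b + 1)).coeff 0 := by
  induction b generalizing m p with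
  | zero => exact hp.coeff_zero_mul_coeff_one_le
  | succ b ih =>
    cases m with
    | zero => simp [hp.coeff_eq_zero]
    | succ m =>
      have h := ih hp.derivative
      simp only [coeff_coeff_derivative] at h
      refine le_of_mul_le_mul_left ?_
        (show 0 < ((b : ℝ) + 1) * ((b + 1 : ℕ) + 1) by positivity)
      linarith

theorem coeff_mul_coeff_succ_succ_le (hp : PositiveStable m p) (a b : ℕ) :
    (p.coeff b).coeff a * (p.coeff (b + 1)).coeff (a + 1) ≤
      (p.coeff b).coeff (a + 1) * (p.coeff (b + 1)).coeff a := by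
  induction a generalizing m p with
  | zero => exact hp.coeff_mul_coeff_succ_succ_le_of_left_zero b
  | succ a ih =>
    cases m with
    | zero => simp [hp.coeff_eq_zero]
    | succ m =>
      have h := ih hp.swap.derivative.swap
      simp only [coeff_coeff_swap, coeff_coeff_derivative] at h
      refine le_of_mul_le_mul_left ?_
        (show 0 < ((a : ℝ) + 1) * ((a + 1 : ℕ) + 1) by positivity)
      linarith

theorem coeff_mul_coeff_le (hp : PositiveStable m p) {a a' b b' : ℕ} (ha : a ≤ a') (hb : b ≤ b') :
    (p.coeff b).coeff a * (p.coeff b').coeff a' ≤ (p.coeff b).coeff a' * (p.coeff b').coeff a := by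
  by_cases hm : m < a' + b'
  · rw [hp.coeff_eq_zero hm, mul_zero]
    exact mul_nonneg (hp.coeff_nonneg ..) (hp.coeff_nonneg ..)
  refine (mul_le_mul_of_forall_succ (u := fun k => (p.coeff k).coeff a)
    (v := fun k => (p.coeff k).coeff a') hb (fun k ⟨_, hk⟩ => hp.coeff_pos (by lia))
    (fun k ⟨_, hk⟩ => hp.coeff_pos (by lia)) fun k ⟨_, hk⟩ => ?_).trans_eq (mul_comm _ _)
  exact (mul_le_mul_of_forall_succ (u := (p.coeff k).coeff) (v := (p.coeff (k + 1)).coeff) ha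
    (fun l ⟨_, hl⟩ => hp.coeff_pos (by lia)) (fun l ⟨_, hl⟩ => hp.coeff_pos (by lia)) fun l _ =>
      hp.coeff_mul_coeff_succ_succ_le l k).trans_eq (mul_comm _ _)

end PositiveStable

end StablePolynomials

/-! ### Label counts -/

section LabelCounts

open Set Topology Polynomial Polynomial.Bivariate

/-- The linear form `w₀ x + w₁ y + w₂`. -/
def linearForm (w : Fin 3 → ℝ) : ℝ[X][Y] := C (C (w 0) * X + C (w 2)) + C (C (w 1)) * X

theorem aevalAeval_linearForm (w : Fin 3 → ℝ) (x y : ℂ) :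
    aevalAeval x y (linearForm w) = w 0 * x + w 1 * y + w 2 := by
  simp only [linearForm, map_add, map_mul, aevalAevalEquiv_apply_apply, aeval_C, algebraMap_def,
    coe_mapRingHom, map_C, Complex.coe_algebraMap, map_X, aeval_X, eval_C, eval_X]
  ring

theorem coeff_coeff_linearForm_mul (w : Fin 3 → ℝ) (p : ℝ[X][Y]) (a b : ℕ) :
    ((linearForm w * p).coeff b).coeff a =
      w 0 * (X * p.coeff b).coeff a + w 1 * ((X * p).coeff b).coeff a +
        w 2 * (p.coeff b).coeff a := by
  simp only [linearForm, add_mul, mul_assoc, coeff_add, coeff_C_mul]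
  ring

theorem HasPositiveCoeffs.linearForm_mul {m : ℕ} {p : ℝ[X][Y]} (hp : HasPositiveCoeffs m p)
    {w : Fin 3 → ℝ} (hw : ∀ k, 0 < w k) : HasPositiveCoeffs (m + 1) (linearForm w * p) where
  coeff_pos {a b} h := by
    rw [coeff_coeff_linearForm_mul]
    have h0 := mul_nonneg (hw 2).le (hp.coeff_nonneg a b)
    rcases a with _ | a <;> rcases b with _ | b
    · simpa using mul_pos (hw 2) (hp.coeff_pos m.zero_le)
    · have := mul_pos (hw 1) (hp.coeff_pos (a := 0) (b := b) (by lia))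
      simpa using by linarith
    · have := mul_pos (hw 0) (hp.coeff_pos (a := a) (b := 0) (by lia))
      simpa using by linarith
    · have h1 := mul_pos (hw 1) (hp.coeff_pos (a := a + 1) (b := b) (by lia))
      have h2 := mul_pos (hw 0) (hp.coeff_pos (a := a) (b := b + 1) (by lia))
      simp only [coeff_X_mul]
      linarith
  coeff_eq_zero {a b} h := by
    have hx : (X * p.coeff b).coeff a = 0 := by
      cases a with
      | zero => simp
      | succ a => exact (coeff_X_mul ..).trans (hp.coeff_eq_zero (by lia))
    have hy : ((X * p).coeff b).coeff a = 0 := by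
      cases b with
      | zero => simp
      | succ b => exact (coeff_X_mul p b).symm ▸ hp.coeff_eq_zero (by lia)
    rw [coeff_coeff_linearForm_mul, hx, hy, hp.coeff_eq_zero (by lia)]
    ring

theorem HasPositiveCoeffs.one : HasPositiveCoeffs 0 (1 : ℝ[X][Y]) where
  coeff_pos h := by
    obtain ⟨rfl, rfl⟩ := Nat.add_eq_zero_iff.1 (Nat.le_zero.1 h)
    simp
  coeff_eq_zero {a b} h := by
    rcases b with _ | b <;> rcases a with _ | a <;> simp_all [coeff_one]

theorem hasPositiveCoeffs_prod_linearForm {ι : Type*} (s : Finset ι) {w : ι → Fin 3 → ℝ}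
    (hw : ∀ i k, 0 < w i k) : HasPositiveCoeffs s.card (∏ i ∈ s, linearForm (w i)) := by
  induction s using Finset.cons_induction with
  | empty => simpa using HasPositiveCoeffs.one
  | cons i s hi ih =>
    rw [Finset.prod_cons, Finset.card_cons]
    exact ih.linearForm_mul (hw i)

theorem continuous_coeff_coeff_prod {T ι : Type*} [TopologicalSpace T] (s : Finset ι)
    {p : ι → T → ℝ[X][Y]} (hp : ∀ i a b, Continuous fun ε => ((p i ε).coeff b).coeff a) (a b : ℕ) :
    Continuous fun ε => ((∏ i ∈ s, p i ε).coeff b).coeff a := by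
  induction s using Finset.cons_induction generalizing a b with
  | empty => simpa using continuous_const
  | cons i s hi ih =>
    simp only [Finset.prod_cons, coeff_mul, finsetSum_coeff]
    fun_prop

variable {n : Type*} [Fintype n]

/-- The number of elements carrying the label `k`. -/
def labelCount {ι : Type*} [DecidableEq ι] (k : ι) (κ : n → ι) : ℕ := Finset.card {i | κ i = k}

theorem coeff_coeff_prod_linearForm_single (κ : n → Fin 3) (a b : ℕ) :
    ((∏ i, linearForm (Pi.single (κ i) 1)).coeff b).coeff a =
      if labelCount 0 κ = a ∧ labelCount 1 κ = b then 1 else 0 := by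
  have hprod : ∏ i, linearForm (Pi.single (κ i) 1) =
      C (X ^ labelCount 0 κ) * X ^ labelCount 1 κ := by
    have h0 : linearForm (Pi.single 0 1) = C X := by simp [linearForm]
    have h1 : linearForm (Pi.single 1 1) = X := by simp [linearForm]
    have h2 : linearForm (Pi.single 2 1) = 1 := by simp [linearForm]
    rw [← Finset.prod_fiberwise' Finset.univ κ fun k => linearForm (Pi.single k 1),
      Fin.prod_univ_three, h0, h1, h2]
    simp [labelCount]
  rw [hprod, coeff_C_mul, coeff_X_pow]
  by_cases ha : labelCount 0 κ = a <;> by_cases hb : labelCount 1 κ = b <;>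
    simp [coeff_X_pow, ha, hb, eq_comm (a := a), eq_comm (a := b)]

theorem labelCount_le_card {ι : Type*} [DecidableEq ι] (k : ι) (κ : n → ι) :
    labelCount k κ ≤ Fintype.card n := Finset.card_le_univ _

variable [DecidableEq n]

/-- The total weight of the labellings in which `a` elements carry the label `0` and `b` elements
carry the label `1`. -/
def countWeight (m : (n → Fin 3) → ℝ) (a b : ℕ) : ℝ :=
  ∑ κ with labelCount 0 κ = a ∧ labelCount 1 κ = b, m κ

/-- The label polynomial of `m` with a linear form substituted for each of its variables. -/
def bivariateLabelPolynomial (m : (n → Fin 3) → ℝ) (w : Fin 3 → Fin 3 → ℝ) : ℝ[X][Y] :=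
  ∑ κ, C (C (m κ)) * ∏ i, linearForm (w (κ i))

theorem aevalAeval_bivariateLabelPolynomial (m : (n → Fin 3) → ℝ) (w : Fin 3 → Fin 3 → ℝ)
    (x y : ℂ) : aevalAeval x y (bivariateLabelPolynomial m w) =
      labelPolynomial m fun k => w k 0 * x + w k 1 * y + w k 2 := by
  simp only [bivariateLabelPolynomial, labelPolynomial, map_sum, map_mul, map_prod,
    aevalAeval_linearForm]
  simp

theorem coeff_coeff_bivariateLabelPolynomial (m : (n → Fin 3) → ℝ) (w : Fin 3 → Fin 3 → ℝ)
    (a b : ℕ) : ((bivariateLabelPolynomial m w).coeff b).coeff a =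
      ∑ κ, m κ * ((∏ i, linearForm (w (κ i))).coeff b).coeff a := by
  simp [bivariateLabelPolynomial]

theorem coeff_coeff_bivariateLabelPolynomial_single (m : (n → Fin 3) → ℝ) (a b : ℕ) :
    ((bivariateLabelPolynomial m fun k => Pi.single k 1).coeff b).coeff a = countWeight m a b := by
  simp only [coeff_coeff_bivariateLabelPolynomial, coeff_coeff_prod_linearForm_single]
  rw [countWeight, Finset.sum_filter]
  simp

theorem hasPositiveCoeffs_bivariateLabelPolynomial {m : (n → Fin 3) → ℝ} (hm : 0 < m)
    {w : Fin 3 → Fin 3 → ℝ} (hw : ∀ k j, 0 < w k j) :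
    HasPositiveCoeffs (Fintype.card n) (bivariateLabelPolynomial m w) where
  coeff_pos h := by
    rw [coeff_coeff_bivariateLabelPolynomial]
    have hpos (κ : n → Fin 3) := (hasPositiveCoeffs_prod_linearForm Finset.univ
      (w := fun i => w (κ i)) fun i k => hw (κ i) k).coeff_pos h
    obtain ⟨hm, κ, hκ⟩ := Pi.lt_def.1 hm
    exact Finset.sum_pos' (fun κ _ => mul_nonneg (hm κ) (hpos κ).le)
      ⟨κ, Finset.mem_univ κ, mul_pos hκ (hpos κ)⟩
  coeff_eq_zero h := by
    rw [coeff_coeff_bivariateLabelPolynomial]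
    refine Finset.sum_eq_zero fun κ _ => ?_
    rw [(hasPositiveCoeffs_prod_linearForm Finset.univ (w := fun i => w (κ i))
      fun i k => hw (κ i) k).coeff_eq_zero h, mul_zero]

theorem continuous_coeff_coeff_bivariateLabelPolynomial (m : (n → Fin 3) → ℝ) (a b : ℕ) :
    Continuous fun w => ((bivariateLabelPolynomial m w).coeff b).coeff a := by
  simp only [coeff_coeff_bivariateLabelPolynomial]
  refine continuous_finsetSum _ fun κ _ => continuous_const.mul
    (continuous_coeff_coeff_prod _ (fun i a b => ?_) a b)
  have hcoeff (w : Fin 3 → ℝ) := mul_one (linearForm w) ▸ coeff_coeff_linearForm_mul w 1 a b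
  simp only [hcoeff]
  fun_prop

theorem IsStable.positiveStable {m : (n → Fin 3) → ℝ} (hm : 0 ≤ m) (hstab : IsStable m)
    {w : Fin 3 → Fin 3 → ℝ} (hw : ∀ k j, 0 < w k j) :
    PositiveStable (Fintype.card n) (bivariateLabelPolynomial m w) where
  toHasPositiveCoeffs := hasPositiveCoeffs_bivariateLabelPolynomial
    (hm.lt_of_ne hstab.ne_zero.symm) hw
  aevalAeval_ne_zero {x y} hx hy := by
    rw [aevalAeval_bivariateLabelPolynomial]
    refine hstab fun k => ?_
    have hkx := mul_pos (hw k 0) hx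
    have hky := mul_pos (hw k 1) hy
    simpa using add_pos hkx hky

theorem IsStable.countWeight_mul_countWeight_le {m : (n → Fin 3) → ℝ} (hm : 0 ≤ m)
    (hstab : IsStable m) {a a' b b' : ℕ} (ha : a ≤ a') (hb : b ≤ b') :
    countWeight m a b * countWeight m a' b' ≤ countWeight m a' b * countWeight m a b' := by
  let w (ε : ℝ) (k : Fin 3) : Fin 3 → ℝ := Pi.single k 1 + fun _ => ε
  have hw : Continuous w := by fun_prop
  have hcont (a b : ℕ) := ((continuous_coeff_coeff_bivariateLabelPolynomial m a b).comp
    hw).continuousWithinAt (s := Ioi 0) (x := 0)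
  have hlim := le_of_tendsto_of_tendsto ((hcont a b).mul (hcont a' b'))
    ((hcont a' b).mul (hcont a b')) <| eventually_nhdsWithin_of_forall fun ε hε =>
      (hstab.positiveStable hm fun k j => ?_).coeff_mul_coeff_le ha hb
  · have h0 : w 0 = fun k => Pi.single k 1 := by
      ext; simp [w]
    simpa only [Pi.mul_apply, Function.comp_apply, h0,
      coeff_coeff_bivariateLabelPolynomial_single] using hlim
  · have hsingle : (0 : Fin 3 → ℝ) ≤ Pi.single k 1 := Pi.single_nonneg.2 zero_le_one
    exact add_pos_of_nonneg_of_pos (hsingle j) hε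

theorem sum_mul_sum_le_sum_mul_sum {c : ℕ → ℕ → ℝ}
    (hc : ∀ ⦃a a' b b'⦄, a ≤ a' → b ≤ b' → c a b * c a' b' ≤ c a' b * c a b')
    {I I' J J' : Finset ℕ} (hI : ∀ a ∈ I, ∀ a' ∈ I', a ≤ a') (hJ : ∀ b ∈ J, ∀ b' ∈ J', b ≤ b') :
    (∑ a ∈ I, ∑ b ∈ J, c a b) * ∑ a ∈ I', ∑ b ∈ J', c a b ≤
      (∑ a ∈ I', ∑ b ∈ J, c a b) * ∑ a ∈ I, ∑ b ∈ J', c a b := by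
  rw [mul_comm (∑ a ∈ I', _)]
  simp only [Finset.sum_mul_sum]
  refine Finset.sum_le_sum fun a ha => Finset.sum_le_sum fun a' ha' => ?_
  rw [Finset.sum_comm]
  refine Finset.sum_le_sum fun b' hb' => Finset.sum_le_sum fun b hb => ?_
  rw [mul_comm (c a b')]
  exact hc (hI a ha a' ha') (hJ b hb b' hb')

section Measure

variable {Ω : Type*} [MeasurableSpace Ω] (μ : Measure Ω) [IsFiniteMeasure μ] {E F : Set Ω}

theorem measureReal_univ_mul_inter_le (hE : MeasurableSet E) (hF : MeasurableSet F)
    (h : μ.real (Eᶜ ∩ Fᶜ) * μ.real (E ∩ F) ≤ μ.real (E ∩ Fᶜ) * μ.real (Eᶜ ∩ F)) :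
    μ.real univ * μ.real (E ∩ F) ≤ μ.real E * μ.real F := by
  have huniv := measureReal_add_measureReal_compl (μ := μ) hE
  have h1 := measureReal_inter_add_sdiff (μ := μ) (s := E) hF
  have h2 := measureReal_inter_add_sdiff (μ := μ) (s := Eᶜ) hF
  have h3 := measureReal_inter_add_sdiff (μ := μ) (s := F) hE
  rw [sdiff_eq] at h1 h2 h3
  rw [inter_comm F E, inter_comm F] at h3
  rw [← huniv, ← h1, ← h2, ← h3]
  linarith

end Measure

open Classical in
theorem sum_countWeight (m : (n → Fin 3) → ℝ) (S T : Set ℕ) :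
    ∑ a ∈ Finset.range (Fintype.card n + 1) with a ∈ S,
      ∑ b ∈ Finset.range (Fintype.card n + 1) with b ∈ T, countWeight m a b =
        ∑ κ with labelCount 0 κ ∈ S ∧ labelCount 1 κ ∈ T, m κ := by
  rw [← Finset.sum_product']
  simp only [countWeight, ← Prod.mk.injEq]
  rw [Finset.sum_fiberwise_eq_sum_filter]
  simp [labelCount_le_card]

variable (ν : Measure (n → Fin 3)) [IsFiniteMeasure ν]

open Classical in
theorem measureReal_preimage_labelCount (S T : Set ℕ) :
    ν.real (labelCount 0 ⁻¹' S ∩ labelCount 1 ⁻¹' T) =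
      ∑ a ∈ Finset.range (Fintype.card n + 1) with a ∈ S,
        ∑ b ∈ Finset.range (Fintype.card n + 1) with b ∈ T,
          countWeight (fun κ => ν.real {κ}) a b := by
  rw [sum_countWeight, sum_measureReal_singleton]
  congr
  ext
  simp

variable {ν}

theorem IsStable.measureReal_univ_mul_le (hν : IsStable fun κ => ν.real {κ}) {S T : Set ℕ}
    (hS : IsUpperSet S) (hT : IsUpperSet T) :
    ν.real univ * ν.real (labelCount 0 ⁻¹' S ∩ labelCount 1 ⁻¹' T) ≤
      ν.real (labelCount 0 ⁻¹' S) * ν.real (labelCount 1 ⁻¹' T) := by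
  refine measureReal_univ_mul_inter_le ν (toFinite _).measurableSet (toFinite _).measurableSet ?_
  simp only [← preimage_compl, measureReal_preimage_labelCount]
  have hle {S : Set ℕ} (hS : IsUpperSet S) {a a' : ℕ} (ha : a ∈ Sᶜ) (ha' : a' ∈ S) : a ≤ a' :=
    (lt_of_not_ge fun h => ha (hS h ha')).le
  have hc ⦃a a' b b' : ℕ⦄ (ha : a ≤ a') (hb : b ≤ b') :=
    hν.countWeight_mul_countWeight_le (fun _ => measureReal_nonneg) ha hb
  refine sum_mul_sum_le_sum_mul_sum hc ?_ ?_
  · simp only [Finset.mem_filter]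
    exact fun a ha a' ha' => hle hS ha.2 ha'.2
  · simp only [Finset.mem_filter]
    exact fun a ha a' ha' => hle hT ha.2 ha'.2

end LabelCounts

/-! ### Eigenvalue angles -/

section EigenvalueAngles

open Matrix
open scoped Matrix.Norms.L2Operator NNReal

section SpectralTheorem

variable {n : Type*} [Fintype n] [DecidableEq n]

theorem SpectralData.charpoly_toUnitary (x : SpectralData n) :
    (x.toUnitary : Matrix n n ℂ).charpoly =
      ∏ i, (Polynomial.X - Polynomial.C (x.2 i : ℂ)) := by
  rw [coe_toUnitary, fromFrame_apply, charpoly_mul_comm, ← mul_assoc, Unitary.coe_star,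
    mem_unitaryGroup_iff.1 x.1.2, one_mul, coe_diagonalUnitary, charpoly_diagonal]

theorem exp_I_smul_eq {H : Matrix n n ℂ} (hH : H.IsHermitian) :
    NormedSpace.exp (Complex.I • H) = (hH.eigenvectorUnitary : Matrix n n ℂ) *
      diagonalUnitary (fun i => Circle.exp (hH.eigenvalues i)) *
        (star hH.eigenvectorUnitary : unitaryGroup n ℂ) := by
  have hdiag : NormedSpace.exp (diagonal (Complex.I • (RCLike.ofReal ∘ hH.eigenvalues))) =
      (diagonalUnitary fun i => Circle.exp (hH.eigenvalues i) : Matrix n n ℂ) := by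
    rw [exp_diagonal, coe_diagonalUnitary]
    congr 1
    ext i
    simp [Pi.coe_exp, ← Complex.exp_eq_exp_ℂ, mul_comm]
  conv_lhs => rw [hH.spectral_theorem, ← map_smul, Unitary.conjStarAlgAut_apply, ← diagonal_smul]
  rw [← hdiag]
  exact exp_units_conj (Unitary.toUnits hH.eigenvectorUnitary) _

theorem SpectralData.surjective_toUnitary : Function.Surjective (toUnitary (n := n)) := by
  intro U
  obtain ⟨H, rfl⟩ := exists_expUnitary_eq U
  have hH : (H : Matrix n n ℂ).IsHermitian := H.2
  refine ⟨(hH.eigenvectorUnitary⁻¹, fun i => Circle.exp (hH.eigenvalues i)), Subtype.ext ?_⟩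
  rw [selfAdjoint.expUnitary_coe, exp_I_smul_eq hH, toUnitary, inv_inv]
  rfl

end SpectralTheorem

section Angles

/-- The representative in `[0, 2π)` of the argument of a complex number, as in `eigenAngles`. -/
def angle (z : ℂ) : ℝ :=
  if 0 ≤ z.arg then z.arg else z.arg + 2 * π

theorem measurable_angle : Measurable angle :=
  Measurable.ite (measurableSet_le measurable_const Complex.measurable_arg) Complex.measurable_arg
    (Complex.measurable_arg.add_const _)

open Classical in
/-- Labels the points of the circle by `0` if their angle is in `A`, by `1` if it is in `B` (and
not in `A`) and by `2` otherwise. -/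
def angleLabel (A B : Set ℝ) (z : Circle) : Fin 3 :=
  if angle z ∈ A then 0 else if angle z ∈ B then 1 else 2

variable {A B : Set ℝ}

@[fun_prop]
theorem measurable_angleLabel (hA : MeasurableSet A) (hB : MeasurableSet B) :
    Measurable (angleLabel A B) := by
  have h : Measurable fun z : Circle => angle z := measurable_angle.comp (by fun_prop)
  exact Measurable.ite (h hA) measurable_const
    (Measurable.ite (h hB) measurable_const measurable_const)

theorem angleLabel_eq_zero {z : Circle} : angleLabel A B z = 0 ↔ angle z ∈ A := by
  unfold angleLabel
  split_ifs <;> simp_all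

theorem angleLabel_eq_one (hAB : Disjoint A B) {z : Circle} :
    angleLabel A B z = 1 ↔ angle z ∈ B := by
  have := @hAB.notMem_of_mem_left 
  unfold angleLabel
  split_ifs <;> simp_all

variable {N : ℕ} (x : SpectralData (Fin N))

theorem eigenAngles_toUnitary :
    eigenAngles N x.toUnitary = Finset.univ.val.map fun i => angle (x.2 i) := by
  have hroots : (x.toUnitary : Matrix (Fin N) (Fin N) ℂ).charpoly.roots =
      Finset.univ.val.map fun i => (x.2 i : ℂ) := by
    rw [x.charpoly_toUnitary, ← Polynomial.roots_multiset_prod_X_sub_C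
      (Finset.univ.val.map fun i => (x.2 i : ℂ)), Multiset.map_map]
    rfl
  rw [eigenAngles, hroots, Multiset.map_map]
  rfl

theorem countAngles_toUnitary_eq_labelCount {k : Fin 3} {C : Set ℝ}
    (hC : ∀ z, angleLabel A B z = k ↔ angle z ∈ C) :
    countAngles N x.toUnitary C = labelCount k (angleLabel A B ∘ x.2) := by
  classical
  rw [countAngles, eigenAngles_toUnitary, Multiset.filter_map, Multiset.card_map]
  simp only [labelCount, Function.comp_apply, hC]
  rfl

end Angles

section HaarMeasure

variable {N : ℕ} (P : Measure (unitaryGroup (Fin N) ℂ)) [P.IsHaarMeasure] [IsProbabilityMeasure P]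

theorem weylMeasure_real_univ_mul_measureReal {S : Set (unitaryGroup (Fin N) ℂ)}
    {T : Set (Fin N → Circle)} (hT : MeasurableSet T)
    (hST : SpectralData.toUnitary ⁻¹' S = Prod.snd ⁻¹' T) :
    (weylMeasure N).real Set.univ * P.real S = (weylMeasure N).real T := by
  have hmeas : Measurable (SpectralData.toUnitary (n := Fin N)) :=
    SpectralData.continuous_toUnitary.measurable
  have hS : MeasurableSet S := by
    rw [← hmeas.measurableSet_preimage_iff_of_surjective SpectralData.surjective_toUnitary, hST]
    exact measurable_snd hT
  obtain ⟨c, hc⟩ := exists_map_toUnitary_eq_smul P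
  have map_real {S : Set (unitaryGroup (Fin N) ℂ)} {T : Set (Fin N → Circle)}
      (hS : MeasurableSet S) (hST : SpectralData.toUnitary ⁻¹' S = Prod.snd ⁻¹' T) :
      c * P.real S = (weylMeasure N).real T := by
    have h := congrArg (fun Q => Q.real S) hc
    simpa [map_measureReal_apply hmeas hS, hST, ← Set.univ_prod, measureReal_prod_prod] using h.symm
  have hc' : (c : ℝ) = (weylMeasure N).real Set.univ := by
    simpa using map_real MeasurableSet.univ (T := Set.univ) (by simp)
  rw [← hc', map_real hS hST]

theorem weylMeasure_real_univ_mul_measureReal_countAngles {A B : Set ℝ} (hA : MeasurableSet A)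
    (hB : MeasurableSet B) (hAB : Disjoint A B) (R : ℕ → ℕ → Prop) :
    (weylMeasure N).real Set.univ * P.real {U | R (countAngles N U A) (countAngles N U B)} =
      (weylMeasure N).real {d | R (labelCount 0 (angleLabel A B ∘ d))
        (labelCount 1 (angleLabel A B ∘ d))} := by
  have := measurable_angleLabel hA hB
  have hmap : Measurable fun d : Fin N → Circle => angleLabel A B ∘ d := by fun_prop
  refine weylMeasure_real_univ_mul_measureReal P
    (hmap (Set.toFinite {κ | R (labelCount 0 κ) (labelCount 1 κ)}).measurableSet)
    (Set.ext fun x => ?_)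
  rw [Set.mem_preimage, Set.mem_ofPred_eq,
    countAngles_toUnitary_eq_labelCount x fun _ => angleLabel_eq_zero (A := A) (B := B),
    countAngles_toUnitary_eq_labelCount x fun _ => angleLabel_eq_one hAB]
  rfl

end HaarMeasure

theorem isStable_weylMeasure_map {N : ℕ} {ι : Type*} [Fintype ι] [MeasurableSpace ι]
    [MeasurableSingletonClass ι] {lab : Circle → ι} (hlab : Measurable lab) :
    IsStable fun κ => ((weylMeasure N).map (lab ∘ ·)).real {κ} :=
  have : IsFiniteMeasure (slaterMeasure (circlePow N) circleMeasure) :=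
    inferInstanceAs (IsFiniteMeasure (weylMeasure N))
  isStable_slaterMeasure_map (fun k => (continuous_circlePow k).measurable)
    (fun k => (continuous_circlePow k).memLp_of_hasCompactSupport (.of_compactSpace _))
    hlab (NeZero.ne (weylMeasure N))

theorem weylMeasure_real_univ_mul_le {N : ℕ} {lab : Circle → Fin 3} (hlab : Measurable lab)
    {S T : Set ℕ} (hS : IsUpperSet S) (hT : IsUpperSet T) :
    (weylMeasure N).real Set.univ * (weylMeasure N).real
        {d | labelCount 0 (lab ∘ d) ∈ S ∧ labelCount 1 (lab ∘ d) ∈ T} ≤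
      (weylMeasure N).real {d | labelCount 0 (lab ∘ d) ∈ S} *
        (weylMeasure N).real {d | labelCount 1 (lab ∘ d) ∈ T} := by
  have h := (isStable_weylMeasure_map hlab (N := N)).measureReal_univ_mul_le hS hT
  have hmap : Measurable fun d : Fin N → Circle => lab ∘ d := by fun_prop
  simpa only [map_measureReal_apply hmap (Set.toFinite _).measurableSet, Set.preimage_univ] using! h

end EigenvalueAngles

end

end UnitaryEigenangles

open UnitaryEigenangles in
/-- Negative association of the eigenvalue angle process: for disjoint Borel sets
`A, B ⊆ [0, 2π]`, `P[𝒩_A ≥ s and 𝒩_B ≥ t] ≤ P[𝒩_A ≥ s] · P[𝒩_B ≥ t]`. -/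
theorem eigenvalue_process_negatively_associated
    (N : ℕ) (ℙ : Measure (Matrix.unitaryGroup (Fin N) ℂ))
    (hprob : IsProbabilityMeasure ℙ) (hhaar : ℙ.IsHaarMeasure)
    (A B : Set ℝ) (hA : MeasurableSet A) (hB : MeasurableSet B)
    (hA' : A ⊆ Set.Icc 0 (2 * π)) (hB' : B ⊆ Set.Icc 0 (2 * π))
    (hAB : Disjoint A B) (s t : ℝ) :
    ℙ {U | s ≤ (countAngles N U A : ℝ) ∧ t ≤ (countAngles N U B : ℝ)} ≤
      ℙ {U | s ≤ (countAngles N U A : ℝ)} * ℙ {U | t ≤ (countAngles N U B : ℝ)} := by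
  have hupper (r : ℝ) : IsUpperSet {k : ℕ | r ≤ k} := fun k l hkl (hk : r ≤ k) =>
    hk.trans (Nat.cast_le.2 hkl)
  have hneg := weylMeasure_real_univ_mul_le (N := N) (measurable_angleLabel hA hB)
    (hupper s) (hupper t)
  have htransfer := weylMeasure_real_univ_mul_measureReal_countAngles ℙ hA hB hAB
  have hinter := htransfer fun a b => s ≤ (a : ℝ) ∧ t ≤ (b : ℝ)
  have hleft := htransfer fun a _ => s ≤ (a : ℝ)
  have hright := htransfer fun _ b => t ≤ (b : ℝ)
  simp only [Set.mem_ofPred_eq, ← hinter, ← hleft, ← hright] at hneg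
  have hpos : 0 < (weylMeasure N).real Set.univ := measureReal_univ_pos
  rw [mul_mul_mul_comm, ← mul_assoc] at hneg
  have hreal := le_of_mul_le_mul_left hneg (mul_pos hpos hpos)
  rw [← ENNReal.toReal_le_toReal (by finiteness) (by finiteness), ENNReal.toReal_mul]
  exact hreal
end
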